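/- Assume GRH. There is a constant C > 0 such that for all integers N ≥ 2, q ≥ 1, a with gcd(a,q) = 1 and q ≤ N, and all real R ≥ 2, one has |Σ_{n ≤ N, n ≡ a (mod q)} Λ(n)·λ_R(n) − (N·log R)/φ(q) − c·N/φ(q)| ≤ C·(N/(φ(q)·√R) + N^{1/2}·(log N)³ + R·log N). -/

import Mathlib

open Finset ArithmeticFunction

/-- The Generalized Riemann Hypothesis for Dirichlet L-functions: every zero of a
Dirichlet L-function in the critical strip lies on the critical line. -/
def GRH : Prop :=
  ∀ (N : ℕ) [NeZero N] (χ : DirichletCharacter ℂ N) (s : ℂ),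
    DirichletCharacter.LFunction χ s = 0 → 0 < s.re → s.re < 1 → s.re = 1 / 2

/-- `ψ(x; q, a) = ∑_{n ≤ x, n ≡ a (mod q)} Λ(n)`. -/
noncomputable def psi (x : ℝ) (q a : ℕ) : ℝ :=
  ∑ n ∈ (Finset.Icc 1 ⌊x⌋₊).filter (fun n : ℕ => (n : ZMod q) = (a : ZMod q)),
    ArithmeticFunction.vonMangoldt n

/-- `I(x,h,q,a) = ∫_x^{2x} (ψ(y+h;q,a) − ψ(y;q,a) − h/φ(q))² dy`. -/
noncomputable def momentI (x h : ℝ) (q a : ℕ) : ℝ :=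
  ∫ y in x..(2 * x), (psi (y + h) q a - psi y q a - h / (q.totient : ℝ)) ^ 2

/-- `λ_R(n) = ∑_{r ≤ R} (μ²(r)/φ(r)) ∑_{d ∣ (r,n)} d·μ(d)`. -/
noncomputable def lamR (R : ℝ) (n : ℕ) : ℝ :=
  ∑ r ∈ Finset.Icc 1 ⌊R⌋₊,
    ((ArithmeticFunction.moebius r : ℝ) ^ 2 / (r.totient : ℝ)) *
      ∑ d ∈ (Nat.gcd r n).divisors, (d : ℝ) * (ArithmeticFunction.moebius d : ℝ)

/-- `c = γ + ∑_p (log p)/(p(p−1))`. -/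
noncomputable def cGY : ℝ :=
  Real.eulerMascheroniConstant +
    ∑' p : Nat.Primes, Real.log (p : ℕ) / (((p : ℕ) : ℝ) * (((p : ℕ) : ℝ) - 1))

/-- `v(k) = ∑_{p ∣ k} (log p)/p`. -/
noncomputable def vGY (k : ℕ) : ℝ := ∑ p ∈ k.primeFactors, Real.log p / (p : ℝ)

/-- `w(k) = ∏_{p ∣ k} (1 + 1/√p)`. -/
noncomputable def wGY (k : ℕ) : ℝ := ∏ p ∈ k.primeFactors, (1 + 1 / Real.sqrt p)

/-- `g(k) = ∏_{p ∣ k} (1 + p/(p−1))`. -/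
noncomputable def gGY (k : ℕ) : ℝ := ∏ p ∈ k.primeFactors, (1 + (p : ℝ) / ((p : ℝ) - 1))

/-- The twin prime constant `C = ∏_{p > 2} (1 − 1/(p−1)²)`. -/
noncomputable def twinC : ℝ :=
  ∏' p : Nat.Primes, (if 2 < (p : ℕ) then 1 - 1 / (((p : ℕ) : ℝ) - 1) ^ 2 else 1)

/-- The singular series `𝔖(k)`. -/
noncomputable def singSeries (k : ℕ) : ℝ :=
  if 2 ∣ k ∧ k ≠ 0 then
    2 * twinC * ∏ p ∈ k.primeFactors.filter (fun p => 2 < p), ((p : ℝ) - 1) / ((p : ℝ) - 2)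
  else 0

/-- `f(n,x,h)`, the length of the interval `[x,2x] ∩ [n−h,n)`. -/
noncomputable def flen (n : ℕ) (x h : ℝ) : ℝ :=
  if x ≤ n ∧ (n : ℝ) < x + h then (n : ℝ) - x
  else if x + h ≤ n ∧ (n : ℝ) ≤ 2 * x then h
  else if 2 * x < n ∧ (n : ℝ) ≤ 2 * x + h then 2 * x - n + h
  else 0

/-!
On a prime power, `λ_R(p ^ k) = L(R) - p ∑_{r ≤ R, p ∣ r} μ²(r) / φ(r)` with
`L(R) = ∑_{r ≤ R} μ²(r) / φ(r)`. The subtracted terms vanish for `p > R` and contribute `O(R log N)`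
in total, so the sum in question is `L(R) ψ(N; q, a) + O(R log N)`.

Write `μ² / φ = g * (1 / n)`. The series `∑ g(n) n^(-s)` has an Euler product whose expansion at
`s = 0` gives `∑ g(n) = 1` and `∑ g(n) log n = -∑_p log p / (p (p - 1))`; summing the asymptotics of
the harmonic numbers against `g` yields `L(R) = log R + c + O(R^(-1/2))`. As `|g(n)|` is about
`1 / n` on squares, `∑ |g(n)| √n` diverges; the error `R^(-1/2)` comes from
`∑_b |E(B² / b²)| / b² ≪ 1 / B`, where `E` is the error in the asymptotics of the harmonic numbers.

For `ψ(x; q, a) = x / φ(q) + O(√x log² x)`, the sum over primes is smoothed at scale `√x` and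
written as an integral of the logarithmic derivative of `L(s, χ)`. Instead of summing over zeros,
one moves the contour to `Re s = 1/2 + 1 / log (4 * x)` and adds the reflected integral, so that
only the real part of the logarithmic derivative occurs there. Under GRH each zero contributes a
Poisson kernel to this real part, so its mean over a unit interval is `O(log (q (|t| + 2)))`, and no
logarithm is lost to the proximity of the zeros.
-/

/-! ### Logarithmic derivatives of Dirichlet L-functions -/

section LocalFactorization

open Metric Complex
open scoped ComplexConjugate

lemma exists_eq_mul_exp_of_ne_zero {G : ℂ → ℂ} {c : ℂ} {R : ℝ}
    (hG : DifferentiableOn ℂ G (ball c R)) (hne : ∀ z ∈ ball c R, G z ≠ 0) :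
    ∃ H : ℂ → ℂ, DifferentiableOn ℂ H (ball c R) ∧ H c = 0 ∧
      ∀ z ∈ ball c R, G z = G c * exp (H z) := by
  obtain hR | hR := le_or_gt R 0
  · exact ⟨0, by simp [ball_eq_empty.mpr hR]⟩
  have hc : c ∈ ball c R := mem_ball_self hR
  obtain ⟨H, hH⟩ := ((hG.deriv isOpen_ball).div hG hne).isExactOn_ball
  have hHd : DifferentiableOn ℂ (fun z ↦ H z - H c) (ball c R) := fun z hz ↦
    ((hH z hz).sub_const (H c)).differentiableAt.differentiableWithinAt
  have hlog : Set.EqOn (logDeriv G) (logDeriv fun z ↦ exp (H z - H c)) (ball c R) := by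
    intro z hz
    have hexp := ((hH z hz).sub_const (H c)).cexp
    rw [logDeriv_apply (fun z ↦ exp (H z - H c)), hexp.deriv,
      mul_div_cancel_left₀ _ (exp_ne_zero _), logDeriv_apply, Pi.div_apply]
  obtain ⟨k, -, hk⟩ := (logDeriv_eqOn_iff hG hHd.cexp isOpen_ball
    (convex_ball c R).isPreconnected (fun z _ ↦ exp_ne_zero _)
    (fun z hz ↦ hne z hz)).mp hlog
  have hkc : G c = k := by simpa using hk hc
  exact ⟨_, hHd, sub_self _, fun z hz ↦ by simpa [hkc] using hk hz⟩

lemma norm_logDeriv_le_of_norm_le_exp_mul {G : ℂ → ℂ} {r R B : ℝ} (hrR : r < R) (hB : 0 < B)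
    (hG : DifferentiableOn ℂ G (ball 0 R)) (hne : ∀ z ∈ ball 0 R, G z ≠ 0)
    (hle : ∀ z ∈ ball 0 R, ‖G z‖ ≤ Real.exp B * ‖G 0‖) {z : ℂ} (hz : ‖z‖ ≤ r) :
    ‖logDeriv G z‖ ≤ 8 * R * B / (R - r) ^ 2 := by
  have hR : 0 < R := (norm_nonneg z).trans_lt (hz.trans_lt hrR)
  obtain ⟨H, hHd, hH0, hGH⟩ := exists_eq_mul_exp_of_ne_zero hG hne
  have hre : Set.MapsTo H (ball 0 R) {z | z.re ≤ B} := by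
    intro y hy
    have hG0 : 0 < ‖G 0‖ := norm_pos_iff.mpr (hne 0 (mem_ball_self hR))
    have hy' := hle y hy
    rw [hGH y hy, norm_mul, norm_exp, mul_comm] at hy'
    exact Real.exp_le_exp.mp (le_of_mul_le_mul_right hy' hG0)
  have hz_ball : z ∈ ball 0 R := mem_ball_zero_iff.mpr (hz.trans_lt hrR)
  have hlog : logDeriv G z = deriv H z := by
    have hev : G =ᶠ[nhds z] fun y ↦ G 0 * exp (H y) :=
      Filter.eventually_of_mem (isOpen_ball.mem_nhds hz_ball) hGH
    have hd := (hHd.differentiableAt (isOpen_ball.mem_nhds hz_ball)).hasDerivAt.cexp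
    rw [(logDeriv_congr_nhds hev).eq_of_nhds, logDeriv_const_mul _ _ (hne 0 (mem_ball_self hR)),
      logDeriv_apply, hd.deriv, mul_div_cancel_left₀ _ (exp_ne_zero _)]
  set δ := (R - r) / 2 with hδ_def
  have hδ : 0 < δ := by linarith
  have hnorm : ∀ y ∈ closedBall z δ, ‖y‖ ≤ r + δ := fun y hy ↦
    norm_le_of_mem_closedBall hy |>.trans (by gcongr)
  have hBC : ∀ y ∈ closedBall z δ, ‖H y‖ ≤ 2 * B * R / δ := by
    intro y hy
    have hyδ : δ ≤ R - ‖y‖ := by linarith [hnorm y hy]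
    refine (borelCaratheodory_zero hB hHd hre hR
      (mem_ball_zero_iff.mpr (by linarith)) hH0).trans ?_
    gcongr
    linarith
  rw [hlog]
  calc ‖deriv H z‖ ≤ 2 * B * R / δ / δ := by
        refine norm_deriv_le_of_forall_mem_sphere_norm_le hδ ?_
          fun y hy ↦ hBC y (sphere_subset_closedBall hy)
        refine (hHd.mono fun y hy ↦ ?_).diffContOnCl_ball subset_rfl
        exact mem_ball_zero_iff.mpr (by linarith [hnorm y hy])
    _ = 8 * R * B / (R - r) ^ 2 := by
        rw [hδ_def]; field [(sub_pos.mpr hrR).ne']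

lemma norm_sq_sub_conj_mul {w z : ℂ} {R : ℝ} (hz : ‖z‖ = R) :
    ‖(R : ℂ) ^ 2 - conj w * z‖ = R * ‖z - w‖ := by
  have h : (R : ℂ) ^ 2 - conj w * z = z * conj (z - w) := by
    rw [← hz, ← mul_conj']; simp; ring
  rw [h, norm_mul, norm_conj, hz]

lemma norm_prod_zero_sub_le {ι : Type*} [Fintype ι] {w : ι → ℂ} {r : ℝ} (hw : ∀ i, ‖w i‖ ≤ r) :
    ‖∏ i, (0 - w i)‖ ≤ r ^ Fintype.card ι := by
  rw [norm_prod]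
  exact (prod_le_prod (fun _ _ ↦ norm_nonneg _) fun i _ ↦ by simpa using hw i).trans_eq (by simp)

-- Jensen's inequality: replacing each factor `z - w` by `R ^ 2 - conj w * z` scales the modulus by
-- the constant `R` on the sphere, and moves the zeros outside the ball.
lemma card_mul_log_le_of_norm_le_exp_mul {ι : Type*} [Fintype ι] {w : ι → ℂ} {f g : ℂ → ℂ}
    {r R B : ℝ} (hr : 0 < r) (hrR : r < R) (hw : ∀ i, ‖w i‖ ≤ r) (hg : Differentiable ℂ g)
    (hfg : ∀ z, f z = (∏ i, (z - w i)) * g z) (h0 : f 0 ≠ 0)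
    (hM : ∀ z ∈ closedBall 0 R, ‖f z‖ ≤ Real.exp B * ‖f 0‖) :
    Fintype.card ι * Real.log (R / r) ≤ B := by
  have hR : 0 < R := hr.trans hrR
  set n := Fintype.card ι
  have hg0 : 0 < ‖g 0‖ := norm_pos_iff.mpr fun h ↦ h0 (by rw [hfg, h, mul_zero])
  have hsphere : ∀ z ∈ frontier (ball (0 : ℂ) R),
      ‖(∏ i, ((R : ℂ) ^ 2 - conj (w i) * z)) * g z‖ ≤ R ^ n * (Real.exp B * ‖f 0‖) := by
    intro z hz
    rw [frontier_ball 0 hR.ne'] at hz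
    have hz' : ‖z‖ = R := mem_sphere_zero_iff_norm.mp hz
    have hfz := hM z (sphere_subset_closedBall hz)
    simp_rw [norm_mul, norm_prod, norm_sq_sub_conj_mul hz', prod_mul_distrib, prod_const, card_univ,
      mul_assoc, ← norm_prod, ← norm_mul, ← hfg]
    gcongr
  have hcenter := norm_le_of_forall_mem_frontier_norm_le isBounded_ball
    (Differentiable.diffContOnCl (by fun_prop)) hsphere (subset_closure (mem_ball_self hR))
  have hf0 : ‖f 0‖ ≤ r ^ n * ‖g 0‖ := by
    rw [hfg, norm_mul]
    gcongr
    exact norm_prod_zero_sub_le hw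
  have hpow : (R / r) ^ n ≤ Real.exp B := by
    rw [div_pow, div_le_iff₀ (by positivity)]
    refine le_of_mul_le_mul_right ?_ (by positivity : 0 < R ^ n * ‖g 0‖)
    calc R ^ n * (R ^ n * ‖g 0‖) = ‖(∏ i, ((R : ℂ) ^ 2 - conj (w i) * 0)) * g 0‖ := by
          simp [n, abs_of_pos hR]; ring
      _ ≤ R ^ n * (Real.exp B * ‖f 0‖) := hcenter
      _ ≤ R ^ n * (Real.exp B * (r ^ n * ‖g 0‖)) := by gcongr
      _ = Real.exp B * r ^ n * (R ^ n * ‖g 0‖) := by ring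
  rw [← Real.log_pow]
  exact (Real.log_le_iff_le_exp (by positivity)).mpr hpow

lemma exists_eq_prod_sub_mul_of_norm_le_exp_mul {f : ℂ → ℂ} {r R B : ℝ} (hr : 0 < r) (hrR : r < R)
    (hf : Differentiable ℂ f) (h0 : f 0 ≠ 0)
    (hM : ∀ z ∈ closedBall 0 R, ‖f z‖ ≤ Real.exp B * ‖f 0‖) :
    ∃ (n : ℕ) (w : Fin n → ℂ) (g : ℂ → ℂ), (∀ i, ‖w i‖ ≤ r) ∧ Differentiable ℂ g ∧
      (∀ z, f z = (∏ i, (z - w i)) * g z) ∧ ∀ z ∈ closedBall 0 r, g z ≠ 0 := by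
  classical
  let P (n : ℕ) : Prop := ∃ (w : Fin n → ℂ) (g : ℂ → ℂ), (∀ i, ‖w i‖ ≤ r) ∧
    Differentiable ℂ g ∧ ∀ z, f z = (∏ i, (z - w i)) * g z
  have hP0 : P 0 := ⟨Fin.elim0, f, fun i ↦ i.elim0, hf, by simp⟩
  have hlog : 0 < Real.log (R / r) := Real.log_pos ((one_lt_div hr).mpr hrR)
  have hbound : ∀ n, P n → n ≤ ⌈B / Real.log (R / r)⌉₊ := by
    rintro n ⟨w, g, hw, hg, hfg⟩
    have hcard := card_mul_log_le_of_norm_le_exp_mul hr hrR hw hg hfg h0 hM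
    rw [Fintype.card_fin, ← le_div_iff₀ hlog] at hcard
    exact_mod_cast hcard.trans (Nat.le_ceil _)
  obtain ⟨w, g, hw, hg, hfg⟩ := Nat.findGreatest_spec (Nat.zero_le ⌈B / Real.log (R / r)⌉₊) hP0
  refine ⟨_, w, g, hw, hg, hfg, fun a ha hga ↦ ?_⟩
  have hsucc : P (Nat.findGreatest P ⌈B / Real.log (R / r)⌉₊ + 1) := by
    refine ⟨Fin.cons a w, dslope g a, Fin.cases (by simpa using ha) hw, ?_, fun z ↦ ?_⟩
    · rw [← differentiableOn_univ, differentiableOn_dslope Filter.univ_mem]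
      exact hg.differentiableOn
    · have hdslope := sub_smul_dslope g a z
      rw [hga, sub_zero, smul_eq_mul] at hdslope
      simp only [hfg z, Fin.prod_univ_succ, Fin.cons_zero, Fin.cons_succ, ← hdslope]
      ring
  exact (Nat.le_findGreatest (hbound _ hsucc) hsucc).not_gt (Nat.lt_succ_self _)

lemma norm_le_of_eq_prod_sub_mul {ι : Type*} [Fintype ι] {w : ι → ℂ} {f g : ℂ → ℂ}
    {r R B : ℝ} (hr : 0 < r) (hrR : r < R) (hw : ∀ i, ‖w i‖ ≤ r) (hg : Differentiable ℂ g)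
    (hfg : ∀ z, f z = (∏ i, (z - w i)) * g z)
    (hM : ∀ z ∈ closedBall 0 R, ‖f z‖ ≤ Real.exp B * ‖f 0‖) {z : ℂ} (hz : z ∈ closedBall 0 R) :
    ‖g z‖ ≤ Real.exp (B + Fintype.card ι * (r / (R - r))) * ‖g 0‖ := by
  have hR : 0 < R := hr.trans hrR
  have hRr : 0 < R - r := sub_pos.mpr hrR
  set n := Fintype.card ι
  have hf0 : ‖f 0‖ ≤ r ^ n * ‖g 0‖ := by
    rw [hfg, norm_mul]
    gcongr
    exact norm_prod_zero_sub_le hw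
  have hpow : r ^ n ≤ Real.exp (n * (r / (R - r))) * (R - r) ^ n := by
    rw [Real.exp_nat_mul, ← mul_pow]
    gcongr
    rw [← div_le_iff₀ hRr]
    linarith [Real.add_one_le_exp (r / (R - r))]
  refine norm_le_of_forall_mem_frontier_norm_le isBounded_ball hg.diffContOnCl (fun y hy ↦ ?_)
    (by rwa [closure_ball 0 hR.ne'])
  rw [frontier_ball 0 hR.ne'] at hy
  have hprod : (R - r) ^ n ≤ ‖∏ i, (y - w i)‖ := by
    rw [norm_prod, show (R - r) ^ n = ∏ _i : ι, (R - r) by simp [n]]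
    refine prod_le_prod (fun _ _ ↦ hRr.le) fun i _ ↦ ?_
    linarith [norm_sub_norm_le y (w i), hw i, mem_sphere_zero_iff_norm.mp hy]
  refine le_of_mul_le_mul_left ?_ (pow_pos hRr n)
  calc (R - r) ^ n * ‖g y‖ ≤ ‖∏ i, (y - w i)‖ * ‖g y‖ := by gcongr
    _ = ‖f y‖ := by rw [hfg, norm_mul]
    _ ≤ Real.exp B * ‖f 0‖ := hM y (sphere_subset_closedBall hy)
    _ ≤ Real.exp B * (Real.exp (n * (r / (R - r))) * (R - r) ^ n * ‖g 0‖) := by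
        gcongr
        exact hf0.trans (by gcongr)
    _ = (R - r) ^ n * (Real.exp (B + n * (r / (R - r))) * ‖g 0‖) := by rw [Real.exp_add]; ring

lemma logDeriv_prod_sub_mul {ι : Type*} [Fintype ι] {w : ι → ℂ} {g : ℂ → ℂ} {z : ℂ}
    (hz : ∀ i, z ≠ w i) (hg : DifferentiableAt ℂ g z) (hgz : g z ≠ 0) :
    logDeriv (fun z ↦ (∏ i, (z - w i)) * g z) z = ∑ i, 1 / (z - w i) + logDeriv g z := by
  have hne : ∀ i, z - w i ≠ 0 := fun i ↦ sub_ne_zero.mpr (hz i)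
  rw [logDeriv_mul (f := fun z ↦ ∏ i, (z - w i)) z (prod_ne_zero_iff.mpr fun i _ ↦ hne i) hgz
    (by fun_prop) hg, logDeriv_prod (fun i _ ↦ hne i) (fun i _ ↦ by fun_prop)]
  simp [logDeriv_apply]

theorem exists_norm_logDeriv_sub_sum_le {r₀ r₁ r₂ : ℝ} (h₁ : 0 < r₁) (h₀₁ : r₀ < r₁)
    (h₁₂ : r₁ < r₂) :
    ∃ A : ℝ, 0 < A ∧ ∀ (f : ℂ → ℂ) (B : ℝ), Differentiable ℂ f → 0 < B → f 0 ≠ 0 →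
      (∀ z ∈ closedBall 0 r₂, ‖f z‖ ≤ Real.exp B * ‖f 0‖) →
      ∃ (n : ℕ) (w : Fin n → ℂ), (∀ i, ‖w i‖ ≤ r₁ ∧ f (w i) = 0) ∧ n ≤ A * B ∧
        ∀ z ∈ closedBall 0 r₀, f z ≠ 0 → ‖logDeriv f z - ∑ i, 1 / (z - w i)‖ ≤ A * B := by
  have hlog : 0 < Real.log (r₂ / r₁) := Real.log_pos ((one_lt_div h₁).mpr h₁₂)
  set ℓ := Real.log (r₂ / r₁)
  set K := r₁ / (r₂ - r₁)
  have : 0 < K := div_pos h₁ (sub_pos.mpr h₁₂)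
  have : 0 < r₁ - r₀ := sub_pos.mpr h₀₁
  refine ⟨1 / ℓ + 8 * r₁ * (1 + K / ℓ) / (r₁ - r₀) ^ 2, by positivity,
    fun f B hf hB h0 hM ↦ ?_⟩
  obtain ⟨n, w, g, hw, hg, hfg, hgne⟩ := exists_eq_prod_sub_mul_of_norm_le_exp_mul h₁ h₁₂ hf h0 hM
  have hwf : ∀ i, f (w i) = 0 := fun i ↦ by
    rw [hfg, prod_eq_zero (mem_univ i) (sub_self _), zero_mul]
  have hn : n ≤ B / ℓ := by
    simpa [le_div_iff₀ hlog] using card_mul_log_le_of_norm_le_exp_mul h₁ h₁₂ hw hg hfg h0 hM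
  refine ⟨n, w, fun i ↦ ⟨hw i, hwf i⟩, ?_, fun z hz hfz ↦ ?_⟩
  · calc (n : ℝ) ≤ 1 / ℓ * B := hn.trans_eq (by ring)
      _ ≤ _ := by gcongr; linarith [show 0 < 8 * r₁ * (1 + K / ℓ) / (r₁ - r₀) ^ 2 by positivity]
  have hz' : ‖z‖ ≤ r₀ := mem_closedBall_zero_iff.mp hz
  have hg_log : ‖logDeriv g z‖ ≤ 8 * r₁ * (B + n * K) / (r₁ - r₀) ^ 2 := by
    refine norm_logDeriv_le_of_norm_le_exp_mul h₀₁ (by positivity) hg.differentiableOn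
      (fun y hy ↦ hgne y (ball_subset_closedBall hy)) (fun y hy ↦ ?_) hz'
    simpa using norm_le_of_eq_prod_sub_mul h₁ h₁₂ hw hg hfg hM
      (closedBall_subset_closedBall h₁₂.le (ball_subset_closedBall hy))
  rw [funext hfg, logDeriv_prod_sub_mul (fun i h ↦ hfz (by rw [h, hwf])) (hg z)
    (hgne z (closedBall_subset_closedBall h₀₁.le hz)), add_sub_cancel_left]
  calc ‖logDeriv g z‖ ≤ 8 * r₁ * (B + B / ℓ * K) / (r₁ - r₀) ^ 2 := hg_log.trans (by gcongr)
    _ = 8 * r₁ * (1 + K / ℓ) / (r₁ - r₀) ^ 2 * B := by ring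
    _ ≤ _ := by gcongr; linarith [one_div_pos.mpr hlog]

end LocalFactorization

section LFunction

open MeasureTheory Complex DirichletCharacter

lemma sum_range_add_mul_of_periodic {f : ℕ → ℂ} {q : ℕ} (hf : Function.Periodic f q) (r m : ℕ) :
    ∑ k ∈ range (r + m * q), f k = ∑ k ∈ range r, f k + m * ∑ k ∈ range q, f k := by
  have hshift (n : ℕ) : ∑ k ∈ range (n + q), f k = ∑ k ∈ range n, f k + ∑ k ∈ range q, f k := by
    rw [add_comm n, sum_range_add, add_comm]
    congr 1
    exact sum_congr rfl fun k _ ↦ by rw [add_comm, hf]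
  induction m with
  | zero => simp
  | succ m ih =>
    rw [add_one_mul, ← add_assoc, hshift, ih]
    push_cast
    ring

lemma norm_sum_range_le_of_norm_le_one {f : ℕ → ℂ} (hf : ∀ n, ‖f n‖ ≤ 1) (n : ℕ) :
    ‖∑ k ∈ range n, f k‖ ≤ n := by
  simpa using norm_sum_le_of_le (range n) fun k _ ↦ hf k

lemma norm_sum_range_div_le_one {f : ℕ → ℂ} (hf : ∀ n, ‖f n‖ ≤ 1) (q : ℕ) :
    ‖(∑ k ∈ range q, f k) / q‖ ≤ 1 := by
  rw [norm_div, norm_natCast]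
  exact div_le_one_of_le₀ (norm_sum_range_le_of_norm_le_one hf q) (Nat.cast_nonneg q)

lemma norm_sum_range_sub_mean_mul_le {f : ℕ → ℂ} {q : ℕ} (hq : q ≠ 0)
    (hf : Function.Periodic f q) (hf1 : ∀ n, ‖f n‖ ≤ 1) (n : ℕ) :
    ‖∑ k ∈ range n, f k - (∑ k ∈ range q, f k) / q * n‖ ≤ 2 * q := by
  have hn : n % q + n / q * q = n := Nat.mod_add_div' n q
  have hr : n % q ≤ q := (Nat.mod_lt n (Nat.pos_of_ne_zero hq)).le
  rw [← hn, sum_range_add_mul_of_periodic hf]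
  generalize n % q = r at *
  generalize n / q = m at *
  have hsplit : ∑ k ∈ range r, f k + m * ∑ k ∈ range q, f k
      - (∑ k ∈ range q, f k) / q * ((r + m * q : ℕ) : ℂ)
      = ∑ k ∈ range r, f k - (∑ k ∈ range q, f k) / q * r := by
    push_cast
    field
  rw [hsplit]
  calc _ ≤ ‖∑ k ∈ range r, f k‖ + ‖(∑ k ∈ range q, f k) / q‖ * ‖(r : ℂ)‖ :=
        (norm_sub_le _ _).trans_eq (by rw [norm_mul])
    _ ≤ q + 1 * q := by
        rw [norm_natCast]
        gcongr
        exacts [(norm_sum_range_le_of_norm_le_one hf1 r).trans (by gcongr),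
          norm_sum_range_div_le_one hf1 q]
    _ = 2 * q := by ring

lemma norm_integral_Ioi_mul_cpow_le {E : ℝ → ℂ} {C : ℝ} (hEC : ∀ t, 1 < t → ‖E t‖ ≤ C) {s : ℂ}
    (hs : 0 < s.re) : ‖∫ t in Set.Ioi (1 : ℝ), E t * (t : ℂ) ^ (-(s + 1))‖ ≤ C / s.re := by
  calc ‖∫ t in Set.Ioi (1 : ℝ), E t * (t : ℂ) ^ (-(s + 1))‖
      ≤ ∫ t in Set.Ioi (1 : ℝ), C * t ^ (-(s.re + 1)) := by
        refine norm_integral_le_of_norm_le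
          ((integrableOn_Ioi_rpow_of_lt (by linarith) one_pos).const_mul _)
          ((ae_restrict_iff' measurableSet_Ioi).mpr (.of_forall fun t (ht : 1 < t) ↦ ?_))
        rw [norm_mul, norm_cpow_eq_rpow_re_of_pos (by linarith), neg_re, add_re, one_re]
        gcongr
        exact hEC t ht
    _ = C / s.re := by
        rw [integral_const_mul, integral_Ioi_rpow_of_lt (by linarith) one_pos, Real.one_rpow,
          show -(s.re + 1) + 1 = -s.re by ring, neg_div_neg_eq, mul_one_div]

lemma differentiableOn_integral_Ioi_mul_cpow {E : ℝ → ℂ} {C : ℝ} (hE : Measurable E)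
    (hEC : ∀ t, 1 < t → ‖E t‖ ≤ C) :
    DifferentiableOn ℂ (fun s : ℂ ↦ ∫ t in Set.Ioi (1 : ℝ), E t * (t : ℂ) ^ (-(s + 1)))
      {s | 0 < s.re} := by
  set e : ℝ → ℂ := (Set.Ioi 1).indicator E
  have he : ∀ t, ‖e t‖ ≤ |C| := fun t ↦ by
    obtain ht | ht := em (t ∈ Set.Ioi (1 : ℝ))
    · simpa [e, ht] using (hEC t ht).trans (le_abs_self C)
    · simp [e, ht]
  have hmellin : (fun s : ℂ ↦ ∫ t in Set.Ioi (1 : ℝ), E t * (t : ℂ) ^ (-(s + 1)))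
      = fun s ↦ mellin e (-s) := by
    ext s
    have hmul (t : ℝ) : (t : ℂ) ^ (-s - 1) * e t
        = (Set.Ioi 1).indicator (fun t : ℝ ↦ (t : ℂ) ^ (-s - 1) * E t) t :=
      (Set.indicator_mul_right _ (fun t : ℝ ↦ (t : ℂ) ^ (-s - 1)) E).symm
    simp only [mellin, smul_eq_mul, hmul]
    rw [setIntegral_indicator measurableSet_Ioi,
      Set.inter_eq_right.mpr (Set.Ioi_subset_Ioi zero_le_one)]
    exact integral_congr_ae (.of_forall fun t ↦ by simp only [mul_comm, neg_add'])
  rw [hmellin]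
  intro s hs
  refine (DifferentiableAt.comp s (mellin_differentiableAt_of_isBigO_rpow (a := 0)
    (b := -s.re - 1) ?_ ?_ (by simpa using hs) ?_ (by simp))
    differentiableAt_id.neg).differentiableWithinAt
  · exact ((locallyIntegrable_const |C|).mono
      (hE.indicator measurableSet_Ioi).aestronglyMeasurable
      (.of_forall fun t ↦ by simpa using he t)).locallyIntegrableOn _
  · simp only [neg_zero, Real.rpow_zero]
    exact Asymptotics.isBigO_of_le' (c := |C|) _ fun t ↦ by simpa using he t
  · refine (Asymptotics.isBigO_zero _ _).congr' ?_ .rfl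
    filter_upwards [mem_nhdsWithin_of_mem_nhds (Iio_mem_nhds one_pos)] with t ht
    simp [e, (Set.mem_Iio.mp ht).le]

/-- The integral `∫₁^∞ (S(t) - A t) t^{-s-1} dt`, where `S` is the summatory function of `f`. When
`f` has mean value `A` it continues the Dirichlet series of `f` to the left of `Re s = 1`, see
`LSeries_eq_add_mul_tailIntegral`. -/
noncomputable def tailIntegral (f : ℕ → ℂ) (A s : ℂ) : ℂ :=
  ∫ t in Set.Ioi (1 : ℝ), (∑ k ∈ Icc 1 ⌊t⌋₊, f k - A * t) * (t : ℂ) ^ (-(s + 1))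

section TailIntegral

variable {f : ℕ → ℂ} {A s : ℂ} {C : ℝ}

lemma measurable_sum_floor_sub (f : ℕ → ℂ) (A : ℂ) :
    Measurable fun t : ℝ ↦ ∑ k ∈ Icc 1 ⌊t⌋₊, f k - A * t :=
  ((measurable_from_nat (f := fun n ↦ ∑ k ∈ Icc 1 n, f k)).comp Nat.measurable_floor).sub
    (by fun_prop)

lemma norm_sum_floor_sub_le (hf : ∀ n : ℕ, ‖∑ k ∈ Icc 1 n, f k - A * n‖ ≤ C) {t : ℝ}
    (ht : 1 < t) : ‖∑ k ∈ Icc 1 ⌊t⌋₊, f k - A * t‖ ≤ C + ‖A‖ := by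
  have hfrac : ‖A * ((t - ⌊t⌋₊ : ℝ) : ℂ)‖ ≤ ‖A‖ := by
    have hfloor := Nat.floor_le (zero_le_one.trans ht.le)
    rw [norm_mul, norm_real, Real.norm_of_nonneg (by linarith)]
    exact mul_le_of_le_one_right (norm_nonneg A) (by linarith [Nat.lt_floor_add_one t])
  calc ‖∑ k ∈ Icc 1 ⌊t⌋₊, f k - A * t‖
      = ‖∑ k ∈ Icc 1 ⌊t⌋₊, f k - A * (⌊t⌋₊ : ℕ) - A * ((t - ⌊t⌋₊ : ℝ) : ℂ)‖ := by
        push_cast; ring_nf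
    _ ≤ C + ‖A‖ := (norm_sub_le _ _).trans (add_le_add (hf _) hfrac)

lemma differentiableOn_tailIntegral (hf : ∀ n : ℕ, ‖∑ k ∈ Icc 1 n, f k - A * n‖ ≤ C) :
    DifferentiableOn ℂ (tailIntegral f A) {s | 0 < s.re} :=
  differentiableOn_integral_Ioi_mul_cpow (measurable_sum_floor_sub f A)
    fun _ ↦ norm_sum_floor_sub_le hf

lemma norm_tailIntegral_le (hf : ∀ n : ℕ, ‖∑ k ∈ Icc 1 n, f k - A * n‖ ≤ C) (hs : 0 < s.re) :
    ‖tailIntegral f A s‖ ≤ (C + ‖A‖) / s.re :=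
  norm_integral_Ioi_mul_cpow_le (fun _ ↦ norm_sum_floor_sub_le hf) hs

lemma LSeries_eq_add_mul_tailIntegral (hf : ∀ n : ℕ, ‖∑ k ∈ Icc 1 n, f k - A * n‖ ≤ C)
    (hf1 : ∀ n, ‖f n‖ ≤ 1) (hs : 1 < s.re) :
    LSeries f s = A * s / (s - 1) + s * tailIntegral f A s := by
  have hs1 : s - 1 ≠ 0 := sub_ne_zero.mpr fun h ↦ by simp [h] at hs
  have hsneg : -s + 1 ≠ 0 := fun h ↦ hs1 (by linear_combination -h)
  have hsum : (fun n : ℕ ↦ ∑ k ∈ Icc 1 n, ‖f k‖) =O[Filter.atTop] fun n ↦ (n : ℝ) ^ (1 : ℝ) := by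
    refine Asymptotics.isBigO_of_le _ fun n ↦ ?_
    rw [Real.norm_of_nonneg (sum_nonneg fun _ _ ↦ norm_nonneg _), Real.rpow_one,
      Real.norm_natCast]
    simpa using sum_le_card_nsmul (Icc 1 n) (fun k ↦ ‖f k‖) 1 fun k _ ↦ hf1 k
  have hE : IntegrableOn (fun t : ℝ ↦ (∑ k ∈ Icc 1 ⌊t⌋₊, f k - A * t) * (t : ℂ) ^ (-(s + 1)))
      (Set.Ioi 1) := by
    refine (integrableOn_Ioi_cpow_of_lt (by simp; linarith) one_pos).bdd_mul (c := C + ‖A‖)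
      (measurable_sum_floor_sub f A).aestronglyMeasurable ?_
    exact (ae_restrict_iff' measurableSet_Ioi).mpr
      (.of_forall fun t ht ↦ norm_sum_floor_sub_le hf ht)
  have hmain : IntegrableOn (fun t : ℝ ↦ A * (t : ℂ) ^ (-s)) (Set.Ioi 1) :=
    (integrableOn_Ioi_cpow_of_lt (by simpa using hs) one_pos).const_mul A
  have hsplit : Set.EqOn (fun t : ℝ ↦ (∑ k ∈ Icc 1 ⌊t⌋₊, f k) * (t : ℂ) ^ (-(s + 1)))
      (fun t ↦ (∑ k ∈ Icc 1 ⌊t⌋₊, f k - A * t) * (t : ℂ) ^ (-(s + 1)) + A * (t : ℂ) ^ (-s))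
      (Set.Ioi 1) := by
    intro t (ht : 1 < t)
    have ht0 : (t : ℂ) ≠ 0 := by exact_mod_cast (one_pos.trans ht).ne'
    simp only [show -s = 1 + -(s + 1) by ring, cpow_add _ _ ht0, cpow_one]
    ring
  rw [LSeries_eq_mul_integral' f zero_le_one (by simpa using hs) hsum,
    setIntegral_congr_fun measurableSet_Ioi hsplit, integral_add hE hmain, integral_const_mul,
    integral_Ioi_cpow_of_lt (by simpa using hs) one_pos, tailIntegral, ofReal_one, one_cpow]
  field_simp
  ring

end TailIntegral

/-- The Dirichlet `L`-function of `χ` made entire: `(s - 1) L(s, χ)` if `χ` is trivial and `L(s, χ)`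
otherwise. -/
noncomputable def entireLFunction {q : ℕ} [NeZero q] (χ : DirichletCharacter ℂ q) : ℂ → ℂ :=
  open Classical in if χ = 1 then LFunctionTrivChar₁ q else LFunction χ

section EntireLFunction

variable {q : ℕ} [NeZero q] {χ : DirichletCharacter ℂ q} {s : ℂ}

lemma entireLFunction_one_apply (hs : s ≠ 1) :
    entireLFunction (1 : DirichletCharacter ℂ q) s
      = (s - 1) * LFunction (1 : DirichletCharacter ℂ q) s := by
  simp [entireLFunction, LFunctionTrivChar₁, hs]

lemma entireLFunction_of_ne_one (hχ : χ ≠ 1) : entireLFunction χ = LFunction χ := if_neg hχ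

lemma differentiable_entireLFunction (χ : DirichletCharacter ℂ q) :
    Differentiable ℂ (entireLFunction χ) := by
  unfold entireLFunction
  split_ifs with hχ
  · exact differentiable_LFunctionTrivChar₁ q
  · exact differentiable_LFunction hχ

lemma norm_sum_Icc_sub_mean_mul_le (χ : DirichletCharacter ℂ q) (n : ℕ) :
    ‖∑ k ∈ Icc 1 n, χ k - (∑ k ∈ range q, χ k) / q * n‖ ≤ 4 * q := by
  set A := (∑ k ∈ range q, χ k) / q
  have hA : ‖A‖ ≤ 1 := norm_sum_range_div_le_one (fun k ↦ χ.norm_le_one k) q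
  have hq : (1 : ℝ) ≤ q := by exact_mod_cast NeZero.one_le
  have hsum : ∑ k ∈ Icc 1 n, χ k = ∑ k ∈ range (n + 1), χ k - χ 0 := by
    rw [range_eq_Ico, sum_eq_sum_Ico_succ_bot n.succ_pos, Nat.cast_zero, add_sub_cancel_left]
    rfl
  calc ‖∑ k ∈ Icc 1 n, χ k - A * n‖
      = ‖∑ k ∈ range (n + 1), χ k - A * (n + 1 : ℕ) + A - χ 0‖ := by
        rw [hsum]; push_cast; ring_nf
    _ ≤ ‖∑ k ∈ range (n + 1), χ k - A * (n + 1 : ℕ)‖ + ‖A‖ + ‖χ 0‖ :=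
        (norm_sub_le _ _).trans (by gcongr; exact norm_add_le _ _)
    _ ≤ 2 * q + 1 + 1 := by
        gcongr
        · exact norm_sum_range_sub_mean_mul_le (NeZero.ne q) (fun k ↦ by simp)
            (fun k ↦ χ.norm_le_one k) _
        · exact χ.norm_le_one 0
    _ ≤ 4 * q := by linarith

lemma sum_range_eq_zero_of_ne_one (hχ : χ ≠ 1) : ∑ k ∈ range q, χ k = 0 := by
  rw [← MulChar.sum_eq_zero_of_ne_one hχ]
  exact sum_nbij' (fun k : ℕ ↦ (k : ZMod q)) ZMod.val (by simp)
    (by simp [ZMod.val_lt]) (fun k hk ↦ ZMod.val_cast_of_lt (mem_range.mp hk)) (by simp) (by simp)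

lemma eqOn_entireLFunction_of_eqOn_one_lt_re {g : ℂ → ℂ} (hg : DifferentiableOn ℂ g {s | 0 < s.re})
    (h : ∀ s : ℂ, 1 < s.re → entireLFunction χ s = g s) :
    Set.EqOn (entireLFunction χ) g {s | 0 < s.re} := by
  have hU : IsOpen {s : ℂ | 0 < s.re} := isOpen_lt continuous_const continuous_re
  refine ((differentiable_entireLFunction χ).differentiableOn.analyticOnNhd
    hU).eqOn_of_preconnected_of_eventuallyEq (hg.analyticOnNhd hU)
    (convex_halfSpace_re_gt 0).isPreconnected (z₀ := 2) (by simp) ?_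
  filter_upwards [(isOpen_lt continuous_const continuous_re).mem_nhds
    (show (2 : ℂ) ∈ {s | 1 < s.re} by simp)] with z hz using h z hz

lemma entireLFunction_one_eq_tailIntegral (hs : 0 < s.re) :
    entireLFunction (1 : DirichletCharacter ℂ q) s
      = (∑ k ∈ range q, (1 : DirichletCharacter ℂ q) k) / q * s + s * (s - 1)
        * tailIntegral (fun n ↦ (1 : DirichletCharacter ℂ q) n)
          ((∑ k ∈ range q, (1 : DirichletCharacter ℂ q) k) / q) s := by
  have hf := norm_sum_Icc_sub_mean_mul_le (1 : DirichletCharacter ℂ q)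
  set A := (∑ k ∈ range q, (1 : DirichletCharacter ℂ q) k) / q
  have hJ := differentiableOn_tailIntegral hf
  refine eqOn_entireLFunction_of_eqOn_one_lt_re
    (g := fun z ↦ A * z + z * (z - 1) * tailIntegral _ A z) (by fun_prop) (fun z hz ↦ ?_) hs
  have hz1 : z ≠ 1 := by rintro rfl; simp at hz
  have hz1' : z - 1 ≠ 0 := sub_ne_zero.mpr hz1
  rw [entireLFunction_one_apply hz1, LFunction_eq_LSeries _ hz,
    LSeries_eq_add_mul_tailIntegral hf (fun n ↦ norm_le_one _ _) hz]
  field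

lemma entireLFunction_eq_tailIntegral_of_ne_one (hχ : χ ≠ 1) (hs : 0 < s.re) :
    entireLFunction χ s = s * tailIntegral (fun n ↦ χ n) 0 s := by
  have hf : ∀ n : ℕ, ‖∑ k ∈ Icc 1 n, χ k - 0 * n‖ ≤ 4 * q := fun n ↦ by
    simpa [sum_range_eq_zero_of_ne_one hχ] using norm_sum_Icc_sub_mean_mul_le χ n
  have hJ := differentiableOn_tailIntegral hf
  refine eqOn_entireLFunction_of_eqOn_one_lt_re (g := fun z ↦ z * tailIntegral _ 0 z)
    (by fun_prop) (fun z hz ↦ ?_) hs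
  rw [entireLFunction_of_ne_one hχ, LFunction_eq_LSeries _ hz,
    LSeries_eq_add_mul_tailIntegral hf (fun n ↦ χ.norm_le_one _) hz]
  simp

lemma norm_entireLFunction_le (χ : DirichletCharacter ℂ q) (hs : 0 < s.re) :
    ‖entireLFunction χ s‖ ≤ q * (1 + 5 / s.re) * (‖s‖ + 1) ^ 2 := by
  have hq : (1 : ℝ) ≤ q := by exact_mod_cast NeZero.one_le
  set A := (∑ k ∈ range q, χ k) / q with hA_def
  have hA : ‖A‖ ≤ 1 := norm_sum_range_div_le_one (fun k ↦ χ.norm_le_one k) q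
  have htail : ‖tailIntegral (fun n ↦ χ n) A s‖ ≤ q * (5 / s.re) :=
    (norm_tailIntegral_le (norm_sum_Icc_sub_mean_mul_le χ) hs).trans
      (by rw [mul_div_assoc']; gcongr; linarith)
  have hs0 := norm_nonneg s
  obtain rfl | hχ := eq_or_ne χ 1
  · rw [entireLFunction_one_eq_tailIntegral hs, ← hA_def]
    refine (norm_add_le _ _).trans ?_
    simp_rw [norm_mul]
    calc _ ≤ 1 * (‖s‖ + 1) ^ 2 + (‖s‖ + 1) * (‖s‖ + 1) * (q * (5 / s.re)) := by
          gcongr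
          · nlinarith
          · linarith
          · simpa using norm_sub_le s 1
      _ ≤ q * (‖s‖ + 1) ^ 2 + (‖s‖ + 1) * (‖s‖ + 1) * (q * (5 / s.re)) := by gcongr
      _ = q * (1 + 5 / s.re) * (‖s‖ + 1) ^ 2 := by ring
  · have hA0 : A = 0 := by rw [hA_def, sum_range_eq_zero_of_ne_one hχ, zero_div]
    rw [entireLFunction_eq_tailIntegral_of_ne_one hχ hs, norm_mul]
    rw [hA0] at htail
    calc _ ≤ (‖s‖ + 1) ^ 2 * (q * (1 + 5 / s.re)) := by
          gcongr
          · nlinarith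
          · exact htail.trans (by gcongr; linarith)
      _ = q * (1 + 5 / s.re) * (‖s‖ + 1) ^ 2 := by ring

lemma LFunction_eq_zero_of_entireLFunction_eq_zero (h : entireLFunction χ s = 0) :
    (χ ≠ 1 ∨ s ≠ 1) ∧ LFunction χ s = 0 := by
  obtain rfl | hχ := eq_or_ne χ 1
  · have hs : s ≠ 1 := by
      rintro rfl
      exact LFunctionTrivChar₁_apply_one_ne_zero q (by simpa [entireLFunction] using h)
    rw [entireLFunction_one_apply hs] at h
    exact ⟨.inr hs, (mul_eq_zero.mp h).resolve_left (sub_ne_zero.mpr hs)⟩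
  · exact ⟨.inl hχ, entireLFunction_of_ne_one hχ ▸ h⟩

lemma re_eq_half_of_entireLFunction_eq_zero (hGRH : GRH) (h : entireLFunction χ s = 0)
    (hs : 0 < s.re) : s.re = 1 / 2 := by
  obtain ⟨hχs, hL⟩ := LFunction_eq_zero_of_entireLFunction_eq_zero h
  obtain hs1 | hs1 := lt_or_ge s.re 1
  · exact hGRH q χ s hL hs hs1
  · exact absurd hL (LFunction_ne_zero_of_one_le_re χ hχs hs1)

lemma entireLFunction_ne_zero_of_half_lt_re (hGRH : GRH) (χ : DirichletCharacter ℂ q)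
    (hs : 1 / 2 < s.re) : entireLFunction χ s ≠ 0 := fun h ↦
  hs.ne' (re_eq_half_of_entireLFunction_eq_zero hGRH h (by linarith))

lemma one_fourth_le_norm_LSeries {f : ℕ → ℂ} (hf1 : f 1 = 1) (hf : ∀ n, ‖f n‖ ≤ 1)
    (hs : s.re = 2) : 1 / 4 ≤ ‖LSeries f s‖ := by
  have hsum : LSeriesSummable f s :=
    LSeriesSummable_of_bounded_of_one_lt_re (m := 1) (fun n _ ↦ hf n) (by linarith)
  have hsplit : LSeries f s = 1 + ∑' n, LSeries.term f s (n + 2) := by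
    rw [LSeries, ← hsum.sum_add_tsum_nat_add 2]
    simp [sum_range_succ, LSeries.term, hf1]
  have hzeta : HasSum (fun n : ℕ ↦ 1 / ((n + 2 : ℕ) : ℝ) ^ 2) (Real.pi ^ 2 / 6 - 1) := by
    simpa [sum_range_succ] using (hasSum_nat_add_iff' 2).mpr hasSum_zeta_two
  have htail : ‖∑' n, LSeries.term f s (n + 2)‖ ≤ Real.pi ^ 2 / 6 - 1 := by
    refine tsum_of_norm_bounded hzeta fun n ↦ ?_
    rw [LSeries.norm_term_eq, if_neg (by lia), hs, Real.rpow_two]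
    gcongr
    exact hf _
  have htriangle := norm_sub_norm_le (1 : ℂ) (-∑' n, LSeries.term f s (n + 2))
  rw [sub_neg_eq_add, norm_neg, norm_one, ← hsplit] at htriangle
  nlinarith [Real.pi_lt_d2, Real.pi_pos]

lemma one_fourth_le_norm_entireLFunction (χ : DirichletCharacter ℂ q) (hs : s.re = 2) :
    1 / 4 ≤ ‖entireLFunction χ s‖ := by
  have hL : 1 / 4 ≤ ‖LFunction χ s‖ := by
    rw [LFunction_eq_LSeries χ (by linarith)]
    exact one_fourth_le_norm_LSeries (by simp) (fun n ↦ χ.norm_le_one n) hs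
  obtain rfl | hχ := eq_or_ne χ 1
  · have hs1 : 1 ≤ ‖s - 1‖ := by
      have hre := re_le_norm (s - 1)
      rw [sub_re, hs, one_re] at hre
      linarith
    rw [entireLFunction_one_apply (by rintro rfl; norm_num at hs), norm_mul]
    nlinarith
  · rwa [entireLFunction_of_ne_one hχ]

end EntireLFunction

end LFunction

section LogDerivBounds

open Complex DirichletCharacter

/-- The logarithm of the analytic conductor of a Dirichlet character modulo `q` at height `t`, which
is the scale for the number of zeros near height `t`. -/
noncomputable def logConductor (q : ℕ) (t : ℝ) : ℝ := Real.log q + Real.log (|t| + 2)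

lemma logConductor_pos (q : ℕ) [NeZero q] (t : ℝ) : 0 < logConductor q t := by
  have hq : (1 : ℝ) ≤ q := by exact_mod_cast NeZero.one_le
  exact add_pos_of_nonneg_of_pos (Real.log_nonneg hq) (Real.log_pos (by linarith [abs_nonneg t]))

lemma norm_entireLFunction_le_exp_mul {q : ℕ} [NeZero q] (χ : DirichletCharacter ℂ q) (t : ℝ)
    {z : ℂ} (hz : ‖z‖ ≤ 9 / 5) :
    ‖entireLFunction χ (2 + t * I + z)‖
      ≤ Real.exp (14 * logConductor q t) * ‖entireLFunction χ (2 + t * I)‖ := by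
  have hq : (1 : ℝ) ≤ q := by exact_mod_cast NeZero.one_le
  have ht := abs_nonneg t
  have hre : 1 / 5 ≤ (2 + t * I + z).re := by
    have hzre := (abs_le.mp (abs_re_le_norm z)).1
    norm_num
    linarith
  have hnorm : ‖2 + t * I + z‖ + 1 ≤ 5 * (|t| + 2) := by
    have hc : ‖(2 : ℂ) + t * I‖ ≤ 2 + |t| := (norm_add_le _ _).trans_eq (by simp)
    linarith [norm_add_le (2 + t * I) z]
  have hexp : q * (2600 * (|t| + 2) ^ 2) ≤ Real.exp (14 * logConductor q t) := by
    have hlog : Real.exp (14 * logConductor q t)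
        = (q : ℝ) ^ 14 * ((|t| + 2) ^ 12 * (|t| + 2) ^ 2) := by
      rw [logConductor, ← Real.log_mul (by positivity) (by positivity), mul_comm (14 : ℝ),
        Real.exp_mul, Real.exp_log (by positivity)]
      norm_cast
      push_cast
      ring
    rw [hlog]
    gcongr
    · exact le_self_pow₀ hq (by norm_num)
    · calc (2600 : ℝ) ≤ 2 ^ 12 := by norm_num
        _ ≤ (|t| + 2) ^ 12 := by gcongr; linarith
  calc ‖entireLFunction χ (2 + t * I + z)‖
      ≤ q * (1 + 5 / (1 / 5)) * (5 * (|t| + 2)) ^ 2 := by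
        refine (norm_entireLFunction_le χ (by linarith)).trans ?_
        gcongr
    _ = q * (2600 * (|t| + 2) ^ 2) * (1 / 4) := by ring
    _ ≤ _ := by
        gcongr
        exact one_fourth_le_norm_entireLFunction χ (by simp)

theorem exists_norm_logDeriv_sub_sum_zeros_le (hGRH : GRH) : ∃ A : ℝ, 0 < A ∧
    ∀ (q : ℕ) [NeZero q] (χ : DirichletCharacter ℂ q) (t : ℝ),
      ∃ (n : ℕ) (γ : Fin n → ℝ), n ≤ A * logConductor q t ∧
        ∀ s : ℂ, ‖s - (2 + t * I)‖ ≤ 8 / 5 → 1 / 2 < s.re →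
          ‖logDeriv (entireLFunction χ) s - ∑ i, 1 / (s - (1 / 2 + γ i * I))‖
            ≤ A * logConductor q t := by
  obtain ⟨A, hA, hlocal⟩ := exists_norm_logDeriv_sub_sum_le (r₀ := 8 / 5) (r₁ := 17 / 10)
    (r₂ := 9 / 5) (by norm_num) (by norm_num) (by norm_num)
  refine ⟨A * 14, by positivity, fun q _ χ t ↦ ?_⟩
  set c : ℂ := 2 + t * I with hc
  have hcre : c.re = 2 := by simp [hc]
  have hFc : entireLFunction χ c ≠ 0 :=
    norm_pos_iff.mp (by linarith [one_fourth_le_norm_entireLFunction χ hcre])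
  obtain ⟨n, w, hw, hn, hformula⟩ := hlocal (fun z ↦ entireLFunction χ (c + z))
    (14 * logConductor q t) ((differentiable_entireLFunction χ).comp (by fun_prop))
    (mul_pos (by norm_num) (logConductor_pos q t)) (by simpa using hFc) (fun z hz ↦ by
      simpa using norm_entireLFunction_le_exp_mul χ t (mem_closedBall_zero_iff.mp hz))
  have hzero (i : Fin n) : 1 / 2 + (c + w i).im * I = c + w i := by
    have hre : (c + w i).re = 1 / 2 := by
      refine re_eq_half_of_entireLFunction_eq_zero hGRH (hw i).2 ?_
      rw [add_re, hcre]
      linarith [(abs_le.mp (abs_re_le_norm (w i))).1, (hw i).1]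
    conv_rhs => rw [← re_add_im (c + w i), hre]
    push_cast
    rfl
  refine ⟨n, fun i ↦ (c + w i).im, by linarith, fun s hs hsre ↦ ?_⟩
  have hsc := hformula (s - c) (mem_closedBall_zero_iff.mpr hs)
    (by simpa using entireLFunction_ne_zero_of_half_lt_re hGRH χ hsre)
  have htranslate : logDeriv (fun z ↦ entireLFunction χ (c + z)) (s - c)
      = logDeriv (entireLFunction χ) s := by
    simp [logDeriv_apply, deriv_comp_const_add]
  simpa only [hzero, htranslate, sub_sub, mul_assoc] using hsc

lemma exists_norm_logDeriv_le_div (hGRH : GRH) : ∃ A : ℝ, 0 < A ∧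
    ∀ (q : ℕ) [NeZero q] (χ : DirichletCharacter ℂ q) (s : ℂ), 1 / 2 < s.re → s.re ≤ 2 →
      ‖logDeriv (entireLFunction χ) s‖ ≤ A * logConductor q s.im / (s.re - 1 / 2) := by
  obtain ⟨A, hA, hzeros⟩ := exists_norm_logDeriv_sub_sum_zeros_le hGRH
  refine ⟨3 * A, by positivity, fun q _ χ s hs hs2 ↦ ?_⟩
  obtain ⟨n, γ, hn, hformula⟩ := hzeros q χ s.im
  have hℓ := logConductor_pos q s.im
  have hd : 0 < s.re - 1 / 2 := by linarith
  have hcentre : s - (2 + s.im * I) = ((s.re - 2 : ℝ) : ℂ) := by apply Complex.ext <;> simp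
  have hdiff := hformula s
    (by rw [hcentre, norm_real, Real.norm_of_nonpos (by linarith)]; linarith) hs
  have hsum : ‖∑ i, 1 / (s - (1 / 2 + γ i * I))‖ ≤ n * (1 / (s.re - 1 / 2)) := by
    have hterm (i : Fin n) : ‖1 / (s - (1 / 2 + γ i * I))‖ ≤ 1 / (s.re - 1 / 2) := by
      have hre := re_le_norm (s - (1 / 2 + γ i * I))
      rw [norm_div, norm_one]
      gcongr
      simpa using hre
    simpa using norm_sum_le_of_le univ fun i _ ↦ hterm i
  have htriangle := norm_le_norm_sub_add (logDeriv (entireLFunction χ) s)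
    (∑ i, 1 / (s - (1 / 2 + γ i * I)))
  rw [le_div_iff₀ hd]
  calc _ ≤ (A * logConductor q s.im + n * (1 / (s.re - 1 / 2))) * (s.re - 1 / 2) := by
        gcongr
        linarith
    _ = A * logConductor q s.im * (s.re - 1 / 2) + n := by
        rw [add_mul, mul_assoc (n : ℝ), one_div_mul_cancel hd.ne', mul_one]
    _ ≤ A * logConductor q s.im * 2 + A * logConductor q s.im := by gcongr; linarith
    _ = 3 * A * logConductor q s.im := by ring

lemma continuous_div_sq_add_sub_sq {a : ℝ} (ha : 0 < a) (γ : ℝ) :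
    Continuous fun t : ℝ ↦ a / (a ^ 2 + (t - γ) ^ 2) := by
  have hne (t : ℝ) : a ^ 2 + (t - γ) ^ 2 ≠ 0 := by positivity
  fun_prop (disch := assumption)

lemma integral_div_sq_add_sub_sq_le_pi {a : ℝ} (ha : 0 < a) (γ u v : ℝ) :
    ∫ t in u..v, a / (a ^ 2 + (t - γ) ^ 2) ≤ Real.pi := by
  have hscale : ∫ t in u..v, a / (a ^ 2 + (t - γ) ^ 2)
      = a⁻¹ * ∫ t in u..v, (1 + (t / a - γ / a) ^ 2)⁻¹ := by
    rw [← intervalIntegral.integral_const_mul]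
    congr 1 with t
    have hne : a ^ 2 + (t - γ) ^ 2 ≠ 0 := by positivity
    field
  rw [hscale, ← smul_eq_mul,
    intervalIntegral.inv_smul_integral_comp_div_sub (fun t ↦ (1 + t ^ 2)⁻¹),
    integral_inv_one_add_sq]
  linarith [Real.arctan_lt_pi_div_two (v / a - γ / a),
    Real.neg_pi_div_two_lt_arctan (u / a - γ / a)]

lemma differentiableOn_logDeriv_entireLFunction (hGRH : GRH) {q : ℕ} [NeZero q]
    (χ : DirichletCharacter ℂ q) :
    DifferentiableOn ℂ (logDeriv (entireLFunction χ)) {s | 1 / 2 < s.re} := fun s hs ↦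
  (((differentiable_entireLFunction χ).contDiff (n := 2)).differentiable_deriv_two s |>.div
    (differentiable_entireLFunction χ s)
    (entireLFunction_ne_zero_of_half_lt_re hGRH χ hs)).differentiableWithinAt

lemma continuous_logDeriv_entireLFunction_vertical (hGRH : GRH) {q : ℕ} [NeZero q]
    (χ : DirichletCharacter ℂ q) {σ : ℝ} (hσ : 1 / 2 < σ) :
    Continuous fun t : ℝ ↦ logDeriv (entireLFunction χ) (σ + t * I) :=
  (differentiableOn_logDeriv_entireLFunction hGRH χ).continuousOn.comp_continuous (by fun_prop)
    fun t ↦ by simpa using hσ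

lemma re_one_div_sub_half_add_mul_I (σ t γ : ℝ) :
    (1 / ((σ : ℂ) + t * I - (1 / 2 + γ * I))).re
      = (σ - 1 / 2) / ((σ - 1 / 2) ^ 2 + (t - γ) ^ 2) := by
  have hsub : (σ : ℂ) + t * I - (1 / 2 + γ * I)
      = ((σ - 1 / 2 : ℝ) : ℂ) + ((t - γ : ℝ) : ℂ) * I := by push_cast; ring
  rw [hsub, one_div, inv_re, normSq_add_mul_I]
  simp

lemma norm_add_mul_I_sub_two_add_mul_I_le {σ t m : ℝ} (hσ : 1 / 2 < σ) (hσ2 : σ ≤ 2)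
    (ht : t ∈ Set.Icc m (m + 1)) :
    ‖(σ : ℂ) + t * I - (2 + ((m + 1 / 2 : ℝ) : ℂ) * I)‖ ≤ 8 / 5 := by
  have hsub : (σ : ℂ) + t * I - (2 + ((m + 1 / 2 : ℝ) : ℂ) * I)
      = ((σ - 2 : ℝ) : ℂ) + ((t - (m + 1 / 2) : ℝ) : ℂ) * I := by push_cast; ring
  rw [hsub, norm_add_mul_I, Real.sqrt_le_left (by norm_num)]
  nlinarith [ht.1, ht.2]

-- Only the real part has a bounded mean as `σ → 1/2`: the zeros contribute Poisson kernels to it,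
-- whose integrals are at most `π` uniformly in `σ`.
theorem exists_integral_abs_re_logDeriv_le (hGRH : GRH) : ∃ A : ℝ, 0 < A ∧
    ∀ (q : ℕ) [NeZero q] (χ : DirichletCharacter ℂ q) (σ m : ℝ), 1 / 2 < σ → σ ≤ 2 →
      ∫ t in m..(m + 1), |(logDeriv (entireLFunction χ) (σ + t * I)).re|
        ≤ A * logConductor q (m + 1 / 2) := by
  obtain ⟨A, hA, hzeros⟩ := exists_norm_logDeriv_sub_sum_zeros_le hGRH
  refine ⟨A * (1 + Real.pi), by positivity, fun q _ χ σ m hσ hσ2 ↦ ?_⟩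
  obtain ⟨n, γ, hn, hformula⟩ := hzeros q χ (m + 1 / 2)
  set ℓ := logConductor q (m + 1 / 2)
  have ha : 0 < σ - 1 / 2 := by linarith
  set P : Fin n → ℝ → ℝ := fun i t ↦ (σ - 1 / 2) / ((σ - 1 / 2) ^ 2 + (t - γ i) ^ 2)
  have hPcont (i : Fin n) : Continuous (P i) := continuous_div_sq_add_sub_sq ha (γ i)
  have hsumcont : Continuous fun t ↦ ∑ i, P i t := by fun_prop
  have hpointwise : ∀ t ∈ Set.Icc m (m + 1),
      |(logDeriv (entireLFunction χ) (σ + t * I)).re| ≤ A * ℓ + ∑ i, P i t := by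
    intro t ht
    have hre := (abs_re_le_norm _).trans (hformula (σ + t * I)
      (norm_add_mul_I_sub_two_add_mul_I_le hσ hσ2 ht) (by simpa using hσ))
    simp_rw [sub_re, re_sum, re_one_div_sub_half_add_mul_I] at hre
    have hP : 0 ≤ ∑ i, P i t := sum_nonneg fun i _ ↦ by positivity
    have htriangle := abs_sub_abs_le_abs_sub
      (logDeriv (entireLFunction χ) (σ + t * I)).re (∑ i, P i t)
    rw [abs_of_nonneg hP] at htriangle
    linarith
  calc ∫ t in m..(m + 1), |(logDeriv (entireLFunction χ) (σ + t * I)).re|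
      ≤ ∫ t in m..(m + 1), (A * ℓ + ∑ i, P i t) :=
        intervalIntegral.integral_mono_on (by linarith)
          ((continuous_re.comp
            (continuous_logDeriv_entireLFunction_vertical hGRH χ hσ)).abs.intervalIntegrable _ _)
          ((continuous_const.add hsumcont).intervalIntegrable _ _) hpointwise
    _ = A * ℓ + ∑ i, ∫ t in m..(m + 1), P i t := by
        rw [intervalIntegral.integral_add (by simp) (hsumcont.intervalIntegrable _ _),
          intervalIntegral.integral_finsetSum fun i _ ↦ (hPcont i).intervalIntegrable _ _]
        simp
    _ ≤ A * ℓ + n * Real.pi := by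
        gcongr
        exact (sum_le_card_nsmul univ _ Real.pi fun i _ ↦
          integral_div_sq_add_sub_sq_le_pi ha (γ i) m (m + 1)).trans_eq (by simp)
    _ ≤ A * ℓ + A * ℓ * Real.pi := by gcongr
    _ = A * (1 + Real.pi) * ℓ := by ring

end LogDerivBounds

/-! ### The smoothed explicit formula -/

section VerticalContours

open Complex Filter MeasureTheory Topology
open scoped ComplexConjugate

lemma integrable_one_add_abs_rpow_neg {r : ℝ} (hr : 1 < r) :
    Integrable fun t : ℝ ↦ (1 + |t|) ^ (-r) := by
  simpa using integrable_one_add_norm (E := ℝ) (μ := volume) (r := r) (by simpa)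

lemma integrable_vertical_of_norm_le {f : ℂ → ℂ} {c C r : ℝ} (hr : 1 < r)
    (hf : Continuous fun t : ℝ ↦ f (c + t * I))
    (hbound : ∀ t : ℝ, ‖f (c + t * I)‖ ≤ C * (1 + |t|) ^ (-r)) :
    Integrable fun t : ℝ ↦ f (c + t * I) :=
  ((integrable_one_add_abs_rpow_neg hr).const_mul C).mono' hf.aestronglyMeasurable
    (.of_forall hbound)

lemma integral_vertical_eq_of_norm_le {f : ℂ → ℂ} {a b C r : ℝ} (hr : 1 < r) (hab : a ≤ b)
    (hf : DifferentiableOn ℂ f {s | a ≤ s.re ∧ s.re ≤ b})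
    (hbound : ∀ s : ℂ, a ≤ s.re → s.re ≤ b → ‖f s‖ ≤ C * (1 + |s.im|) ^ (-r)) :
    ∫ t : ℝ, f (a + t * I) = ∫ t : ℝ, f (b + t * I) := by
  have hvertical {c : ℝ} (hac : a ≤ c) (hcb : c ≤ b) :
      Tendsto (fun T : ℝ ↦ ∫ y in (-T)..T, f (c + y * I)) atTop (𝓝 (∫ y : ℝ, f (c + y * I))) :=
    intervalIntegral_tendsto_integral (integrable_vertical_of_norm_le hr
      (hf.continuousOn.comp_continuous (by fun_prop) fun t ↦ by simpa using ⟨hac, hcb⟩)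
      fun t ↦ by simpa using hbound (c + t * I) (by simpa) (by simpa))
      tendsto_neg_atTop_atBot tendsto_id
  have hedge (T : ℝ) : ‖∫ x in a..b, f (x + T * I)‖ ≤ C * (1 + |T|) ^ (-r) * |b - a| := by
    refine intervalIntegral.norm_integral_le_of_norm_le_const fun x hx ↦ ?_
    rw [Set.uIoc_of_le hab] at hx
    simpa using hbound (x + T * I) (by simpa using hx.1.le) (by simpa using hx.2)
  have hdecay : Tendsto (fun T : ℝ ↦ C * (1 + |T|) ^ (-r) * |b - a|) atTop (𝓝 0) := by
    have hrpow := (tendsto_rpow_neg_atTop (by linarith : 0 < r)).comp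
      (tendsto_atTop_add_const_left _ 1 tendsto_abs_atTop_atTop)
    simpa using (hrpow.const_mul C).mul_const |b - a|
  have htop := squeeze_zero_norm hedge hdecay
  have hbottom : Tendsto (fun T : ℝ ↦ ∫ x in a..b, f (x + (-T : ℝ) * I)) atTop (𝓝 0) :=
    squeeze_zero_norm (fun T ↦ by simpa using hedge (-T)) hdecay
  have hrect (T : ℝ) : (∫ x in a..b, f (x + (-T : ℝ) * I)) - (∫ x in a..b, f (x + T * I))
      + I • (∫ y in (-T)..T, f (b + y * I)) - I • (∫ y in (-T)..T, f (a + y * I)) = 0 := by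
    refine integral_boundary_rect_eq_zero_of_differentiableOn f ⟨a, -T⟩ ⟨b, T⟩ (hf.mono ?_)
    intro s hs
    simpa [Set.uIcc_of_le hab] using hs.1
  have hlimit := ((hbottom.sub htop).add ((hvertical hab le_rfl).const_smul I)).sub
    ((hvertical le_rfl hab).const_smul I)
  simp only [hrect, sub_zero, zero_add, ← smul_sub] at hlimit
  have hzero := tendsto_nhds_unique tendsto_const_nhds hlimit
  exact (sub_eq_zero.mp ((smul_eq_zero.mp hzero.symm).resolve_left I_ne_zero)).symm

-- Adding to `g` its reflection `s ↦ conj (g (conj (2σ - s)))` in the line `Re s = σ` leaves twice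
-- its real part there, while the reflected integral can be shifted further to the left.
theorem integral_vertical_mul_eq_sub {g K : ℂ → ℂ} {a σ b C r : ℝ} (hr : 1 < r) (haσ : a ≤ σ)
    (hσb : σ ≤ b) (hrefl : 2 * σ - a ≤ b)
    (hg : ∀ s : ℂ, σ ≤ s.re → s.re ≤ b → DifferentiableAt ℂ g s)
    (hK : ∀ s : ℂ, a ≤ s.re → s.re ≤ b → DifferentiableAt ℂ K s)
    (hbound : ∀ z s : ℂ, σ ≤ z.re → z.re ≤ b → a ≤ s.re → s.re ≤ b → z.im = s.im →
      ‖g z‖ * ‖K s‖ ≤ C * (1 + |s.im|) ^ (-r)) :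
    Integrable (fun t : ℝ ↦ (2 * (g (σ + t * I)).re : ℝ) * K (σ + t * I)) ∧
    ∫ t : ℝ, g (b + t * I) * K (b + t * I)
      = (∫ t : ℝ, (2 * (g (σ + t * I)).re : ℝ) * K (σ + t * I))
        - ∫ t : ℝ, conj (g ((2 * σ - a : ℝ) + t * I)) * K (a + t * I) := by
  set g' : ℂ → ℂ := fun s ↦ conj (g (conj (2 * σ - s)))
  have hg' (c t : ℝ) : g' (c + t * I) = conj (g ((2 * σ - c : ℝ) + t * I)) := by
    simp only [g']
    congr 2
    apply Complex.ext <;> simp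
  have hgK : DifferentiableOn ℂ (fun s ↦ g s * K s) {s | σ ≤ s.re ∧ s.re ≤ b} := fun s hs ↦
    ((hg s hs.1 hs.2).mul (hK s (haσ.trans hs.1) hs.2)).differentiableWithinAt
  have hg'K : DifferentiableOn ℂ (fun s ↦ g' s * K s) {s | a ≤ s.re ∧ s.re ≤ σ} := by
    rintro s ⟨has, hsσ⟩
    have hconj := (hg (conj (2 * σ - s)) (by simp; linarith) (by simp; linarith)).star_star
    rw [starRingEnd_apply, star_star] at hconj
    exact ((hconj.comp s (f := fun s : ℂ ↦ 2 * (σ : ℂ) - s) (by fun_prop)).mul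
      (hK s has (hsσ.trans hσb))).differentiableWithinAt
  have hgKbound (s : ℂ) (hs : σ ≤ s.re) (hsb : s.re ≤ b) :
      ‖g s * K s‖ ≤ C * (1 + |s.im|) ^ (-r) :=
    (norm_mul_le _ _).trans (hbound s s hs hsb (haσ.trans hs) hsb rfl)
  have hg'Kbound (s : ℂ) (hs : a ≤ s.re) (hsσ : s.re ≤ σ) :
      ‖g' s * K s‖ ≤ C * (1 + |s.im|) ^ (-r) := by
    rw [norm_mul, RCLike.norm_conj]
    exact hbound _ s (by simp; linarith) (by simp; linarith) hs (hsσ.trans hσb) (by simp)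
  have hint : Integrable fun t : ℝ ↦ g (σ + t * I) * K (σ + t * I) :=
    integrable_vertical_of_norm_le (f := fun s ↦ g s * K s) hr
      (hgK.continuousOn.comp_continuous (by fun_prop) fun t ↦ by simpa)
      fun t ↦ by simpa using hgKbound (σ + t * I) (by simp) (by simpa)
  have hint' : Integrable fun t : ℝ ↦ g' (σ + t * I) * K (σ + t * I) :=
    integrable_vertical_of_norm_le (f := fun s ↦ g' s * K s) hr
      (hg'K.continuousOn.comp_continuous (by fun_prop) fun t ↦ by simpa)
      fun t ↦ by simpa using hg'Kbound (σ + t * I) (by simpa) (by simp)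
  have hsum (t : ℝ) : g (σ + t * I) * K (σ + t * I) + g' (σ + t * I) * K (σ + t * I)
      = (2 * (g (σ + t * I)).re : ℝ) * K (σ + t * I) := by
    rw [hg', show 2 * σ - σ = σ by ring, ← add_mul, add_conj]
  simp_rw [← hsum, ← hg' a]
  refine ⟨hint.add hint', ?_⟩
  rw [integral_add hint hint', integral_vertical_eq_of_norm_le hr hσb hgK hgKbound,
    integral_vertical_eq_of_norm_le hr haσ hg'K hg'Kbound, add_sub_cancel_right]

theorem integral_le_of_unit_interval_means {φ u w a : ℝ → ℝ} {B : ℝ} (hφ : Integrable φ)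
    (hu : Continuous u) (hu₀ : ∀ t, 0 ≤ u t) (hw : AntitoneOn w (Set.Ici 0))
    (hw₀ : ∀ m : ℕ, 0 ≤ w m) (hφu : ∀ t, φ t ≤ w |t| * u t)
    (hmean : ∀ m : ℝ, ∫ t in m..(m + 1), u t ≤ a |m + 1 / 2|)
    (hB : ∀ n : ℕ, ∑ m ∈ range n, w m * a (m + 1 / 2) ≤ B) :
    ∫ t, φ t ≤ 2 * B := by
  have hunit (m : ℕ) (c : ℝ) (hc : ∀ t ∈ Set.Icc c (c + 1), (m : ℝ) ≤ |t|)
      (hmid : |c + 1 / 2| = m + 1 / 2) : ∫ t in c..(c + 1), φ t ≤ w m * a (m + 1 / 2) := by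
    calc ∫ t in c..(c + 1), φ t ≤ ∫ t in c..(c + 1), w m * u t := by
          refine intervalIntegral.integral_mono_on (by linarith) hφ.intervalIntegrable
            ((hu.const_mul _).intervalIntegrable _ _) fun t ht ↦ (hφu t).trans ?_
          gcongr
          · exact hu₀ t
          · exact hw (Set.mem_Ici.mpr m.cast_nonneg) (abs_nonneg t) (hc t ht)
      _ ≤ w m * a (m + 1 / 2) := by
          rw [intervalIntegral.integral_const_mul, ← hmid]
          exact mul_le_mul_of_nonneg_left (hmean c) (hw₀ m)
  have hright (m : ℕ) := hunit m m (fun t ht ↦ ht.1.trans (le_abs_self t))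
    (abs_of_nonneg (by positivity))
  have hleft (m : ℕ) := hunit m (-(m + 1)) (fun t ht ↦ le_abs.mpr (.inr (by linarith [ht.2])))
    (by rw [← abs_neg, show -(-((m : ℝ) + 1) + 1 / 2) = m + 1 / 2 by ring,
      abs_of_nonneg (by positivity)])
  have hsymm (n : ℕ) :
      ∫ t in (-(n : ℝ))..n, φ t ≤ 2 * ∑ m ∈ range n, w m * a (m + 1 / 2) := by
    induction n with
    | zero => simp
    | succ n ih =>
      have hii (x y : ℝ) : IntervalIntegrable φ volume x y := hφ.intervalIntegrable
      have hl := hleft n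
      rw [show -((n : ℝ) + 1) + 1 = -n by ring] at hl
      rw [sum_range_succ, Nat.cast_succ,
        ← intervalIntegral.integral_add_adjacent_intervals (hii _ (-n)) (hii _ _),
        ← intervalIntegral.integral_add_adjacent_intervals (hii (-n) n) (hii _ _)]
      linarith [hright n]
  refine le_of_tendsto (intervalIntegral_tendsto_integral hφ
    (tendsto_neg_atTop_atBot.comp tendsto_natCast_atTop_atTop) tendsto_natCast_atTop_atTop)
    (.of_forall fun n ↦ (hsymm n).trans ?_)
  linarith [hB n]

end VerticalContours

section Perron

open Complex Filter MeasureTheory Topology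

/-- `X ^ (s + 1) / (s (s + 1))`, the Mellin transform of the Cesàro weight `u ↦ max (X - u) 0`. -/
noncomputable def cesaroKernel (X : ℝ) (s : ℂ) : ℂ := (X : ℂ) ^ (s + 1) / (s * (s + 1))

lemma hasMellin_congr {f g : ℝ → ℂ} {s m : ℂ} (hf : HasMellin f s m)
    (hfg : Set.EqOn f g (Set.Ioi 0)) : HasMellin g s m := by
  have hsmul : Set.EqOn (fun t : ℝ ↦ (t : ℂ) ^ (s - 1) • f t) (fun t ↦ (t : ℂ) ^ (s - 1) • g t)
      (Set.Ioi 0) := fun t ht ↦ by simp only [hfg ht]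
  exact ⟨hf.1.congr_fun hsmul measurableSet_Ioi,
    (setIntegral_congr_fun measurableSet_Ioi hsmul).symm.trans hf.2⟩

lemma hasMellin_indicator_Ioc_cpow {X : ℝ} (hX : 0 < X) (a : ℂ) {s : ℂ} (hs : 0 < s.re + a.re) :
    HasMellin ((Set.Ioc 0 X).indicator fun t : ℝ ↦ (t : ℂ) ^ a) s
      ((X : ℂ) ^ (s + a) / (s + a)) := by
  have hre : -1 < (s + a - 1).re := by simpa using hs
  have hne : s + a ≠ 0 := fun h ↦ hs.ne' (by simpa using congrArg re h)
  have hmul : Set.EqOn (fun t : ℝ ↦ (t : ℂ) ^ (s + a - 1))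
      (fun t ↦ (t : ℂ) ^ (s - 1) * (t : ℂ) ^ a) (Set.Ioc 0 X) := fun t ht ↦ by
    simp only [← cpow_add _ _ (ofReal_ne_zero.mpr ht.1.ne')]
    ring_nf
  simp_rw [HasMellin, mellin, MellinConvergent, ← Set.indicator_smul, IntegrableOn,
    integrable_indicator_iff measurableSet_Ioc, smul_eq_mul, integral_indicator measurableSet_Ioc,
    IntegrableOn, Measure.restrict_restrict_of_subset Set.Ioc_subset_Ioi_self]
  rw [← IntegrableOn, ← setIntegral_congr_fun measurableSet_Ioc hmul,
    ← integrableOn_congr_fun hmul measurableSet_Ioc,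
    ← intervalIntegrable_iff_integrableOn_Ioc_of_le hX.le]
  refine ⟨intervalIntegral.intervalIntegrable_cpow' hre, ?_⟩
  rw [← intervalIntegral.integral_of_le hX.le, integral_cpow (Or.inl hre), sub_add_cancel,
    ofReal_zero, zero_cpow hne, sub_zero]

lemma hasMellin_max_sub {X : ℝ} (hX : 0 < X) {s : ℂ} (hs : 0 < s.re) :
    HasMellin (fun u : ℝ ↦ ((max (X - u) 0 : ℝ) : ℂ)) s (cesaroKernel X s) := by
  have hconst := hasMellin_indicator_Ioc_cpow hX 0 (s := s) (by simpa)
  have hlin := hasMellin_indicator_Ioc_cpow hX 1 (s := s) (by simp; linarith)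
  have h := hasMellin_sub (hconst.1.const_smul (X : ℂ)) hlin.1
  rw [mellin_const_smul, hconst.2, hlin.2] at h
  have hs₀ : s ≠ 0 := by rintro rfl; simp at hs
  have hs₁ : s + 1 ≠ 0 := fun h ↦ by have := congrArg re h; simp at this; linarith
  have hX₀ : (X : ℂ) ≠ 0 := ofReal_ne_zero.mpr hX.ne'
  convert hasMellin_congr h fun u (hu : 0 < u) ↦ ?_ using 1
  · rw [cesaroKernel, add_zero, cpow_add _ _ hX₀, cpow_one, smul_eq_mul]
    field_simp
    ring
  · by_cases huX : u ≤ X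
    · simp [Set.indicator, hu, huX]
    · simp [Set.indicator, huX, (not_le.mp huX).le]

lemma hasMellin_max_sub_sq_div {X : ℝ} (hX : 0 < X) {s : ℂ} (hs : 1 < s.re) :
    HasMellin (fun u : ℝ ↦ ((max (X - u) 0 ^ 2 / (2 * u) : ℝ) : ℂ)) s
      (cesaroKernel X s / (s - 1)) := by
  have hconst := hasMellin_indicator_Ioc_cpow hX 0 (s := s) (by simp; linarith)
  have hlin := hasMellin_indicator_Ioc_cpow hX 1 (s := s) (by simp; linarith)
  have hinv := hasMellin_indicator_Ioc_cpow hX (-1) (s := s) (by simp; linarith)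
  have hsum := hasMellin_add (hinv.1.const_smul (X ^ 2 / 2 : ℂ)) (hlin.1.const_smul (1 / 2 : ℂ))
  have h := hasMellin_sub hsum.1 (hconst.1.const_smul (X : ℂ))
  rw [hsum.2, mellin_const_smul, mellin_const_smul, mellin_const_smul, hconst.2, hlin.2,
    hinv.2] at h
  have hs₀ : s ≠ 0 := by rintro rfl; simp at hs; linarith
  have hs₁ : s + 1 ≠ 0 := fun h ↦ by have := congrArg re h; simp at this; linarith
  have hs₂ : s - 1 ≠ 0 := fun h ↦ by have := congrArg re h; simp at this; linarith
  have hX₀ : (X : ℂ) ≠ 0 := ofReal_ne_zero.mpr hX.ne'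
  convert hasMellin_congr h fun u (hu : 0 < u) ↦ ?_ using 1
  · rw [cesaroKernel, add_zero, ← sub_eq_add_neg, cpow_add _ _ hX₀, cpow_sub _ _ hX₀, cpow_one]
    simp only [smul_eq_mul]
    field_simp
    ring
  · have hu₀ : (u : ℂ) ≠ 0 := ofReal_ne_zero.mpr hu.ne'
    by_cases huX : u ≤ X
    · simp [Set.indicator, hu, huX, cpow_neg_one]
      field_simp
      ring
    · simp [Set.indicator, huX, (not_le.mp huX).le]

lemma integral_cpow_neg_mul_of_hasMellin {f : ℝ → ℂ} {M : ℂ → ℂ} {σ y : ℝ} (hy : 0 < y)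
    (hM : ∀ t : ℝ, HasMellin f (σ + t * I) (M (σ + t * I)))
    (hint : Integrable fun t : ℝ ↦ M (σ + t * I)) (hf : ContinuousAt f y) :
    ∫ t : ℝ, (y : ℂ) ^ (-(σ + t * I)) * M (σ + t * I) = 2 * Real.pi * f y := by
  have hmellin (t : ℝ) : mellin f (σ + t * I) = M (σ + t * I) := (hM t).2
  have hinv := mellinInv_mellin_eq σ f hy (by simpa using (hM 0).1)
    (by simpa only [VerticalIntegrable, hmellin] using hint) hf
  simp only [mellinInv, hmellin, smul_eq_mul, real_smul] at hinv
  rw [← hinv, ← mul_assoc, ofReal_div, ofReal_one, ofReal_mul, ofReal_ofNat,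
    mul_one_div_cancel (by simp [Real.pi_ne_zero]), one_mul]

lemma differentiableAt_cesaroKernel {X : ℝ} (hX : 0 < X) {s : ℂ} (hs : 0 < s.re) :
    DifferentiableAt ℂ (cesaroKernel X) s := by
  have hs₀ : s ≠ 0 := by rintro rfl; simp at hs
  have hs₁ : s + 1 ≠ 0 := fun h ↦ by have := congrArg re h; simp at this; linarith
  unfold cesaroKernel
  exact DifferentiableAt.div (.const_cpow (by fun_prop) (.inl (ofReal_ne_zero.mpr hX.ne')))
    (by fun_prop) (mul_ne_zero hs₀ hs₁)

lemma norm_cesaroKernel_le {X a : ℝ} {s : ℂ} (hX : 0 < X) (ha : 0 < a) (ha₁ : a ≤ 1)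
    (hs : a ≤ s.re) :
    ‖cesaroKernel X s‖ ≤ 4 / a * X ^ (s.re + 1) * (1 + |s.im|) ^ (-2 : ℝ) := by
  have hs₁ : 1 + |s.im| ≤ 2 * ‖s + 1‖ := by
    have hre := (le_abs_self _).trans (abs_re_le_norm (s + 1))
    have him := abs_im_le_norm (s + 1)
    simp only [add_re, one_re, add_im, one_im, add_zero] at hre him
    linarith
  have hs₀ : a * (1 + |s.im|) ≤ 2 * ‖s‖ := by
    have hre := (le_abs_self _).trans (abs_re_le_norm s)
    nlinarith [abs_im_le_norm s, abs_nonneg s.im]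
  have hprod : a * (1 + |s.im|) ^ 2 ≤ 4 * ‖s * (s + 1)‖ := by
    rw [norm_mul]
    nlinarith [mul_le_mul hs₀ hs₁ (by positivity) (by positivity)]
  have hnorm : ‖(X : ℂ) ^ (s + 1)‖ = X ^ (s.re + 1) := by
    simpa using norm_cpow_eq_rpow_re_of_pos hX (s + 1)
  have : 0 < a * (1 + |s.im|) ^ 2 := by positivity
  rw [cesaroKernel, norm_div, hnorm, Real.rpow_neg (by positivity), Real.rpow_two]
  calc X ^ (s.re + 1) / ‖s * (s + 1)‖ ≤ X ^ (s.re + 1) / (a * (1 + |s.im|) ^ 2 / 4) := by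
        gcongr
        linarith
    _ = 4 / a * X ^ (s.re + 1) * ((1 + |s.im|) ^ 2)⁻¹ := by field_simp

lemma integrable_cesaroKernel {X σ : ℝ} (hX : 0 < X) (hσ : 0 < σ) :
    Integrable fun t : ℝ ↦ cesaroKernel X (σ + t * I) := by
  refine integrable_vertical_of_norm_le (r := 2) (C := 4 / min σ 1 * X ^ (σ + 1)) (by norm_num)
    (continuous_iff_continuousAt.mpr fun t ↦ ?_) fun t ↦ ?_
  · exact (differentiableAt_cesaroKernel hX (by simpa)).continuousAt.comp' (by fun_prop)
  · simpa using norm_cesaroKernel_le (s := σ + t * I) hX (lt_min hσ one_pos) (min_le_right _ _)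
      (by simp)

lemma norm_term_vertical (f : ℕ → ℂ) (σ t : ℝ) (n : ℕ) :
    ‖LSeries.term f (σ + t * I) n‖ = ‖LSeries.term f σ n‖ := by
  simp [LSeries.norm_term_eq]

lemma norm_LSeries_vertical_le {f : ℕ → ℂ} {σ : ℝ} (hf : LSeriesSummable f σ) (t : ℝ) :
    ‖LSeries f (σ + t * I)‖ ≤ ∑' n, ‖LSeries.term f σ n‖ := by
  simp_rw [← norm_term_vertical f σ t]
  exact norm_tsum_le_tsum_norm (by simpa only [norm_term_vertical] using hf.norm)

lemma continuous_term_vertical (f : ℕ → ℂ) (σ : ℝ) (n : ℕ) :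
    Continuous fun t : ℝ ↦ LSeries.term f (σ + t * I) n := by
  rcases eq_or_ne n 0 with rfl | hn
  · simp only [LSeries.term_zero, continuous_const]
  · have hn₀ : (n : ℂ) ≠ 0 := Nat.cast_ne_zero.mpr hn
    simp only [LSeries.term_of_ne_zero hn]
    exact continuous_const.div (.const_cpow (by fun_prop) (.inl hn₀))
      fun t ↦ (cpow_ne_zero_iff.mpr (.inl hn₀))

lemma continuous_LSeries_vertical {f : ℕ → ℂ} {σ : ℝ} (hf : LSeriesSummable f σ) :
    Continuous fun t : ℝ ↦ LSeries f (σ + t * I) :=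
  continuous_tsum (continuous_term_vertical f σ) hf.norm fun n t ↦ (norm_term_vertical f σ t n).le

lemma integrable_LSeries_mul {f : ℕ → ℂ} {σ : ℝ} (hf : LSeriesSummable f σ) {k : ℝ → ℂ}
    (hk : Integrable k) : Integrable fun t : ℝ ↦ LSeries f (σ + t * I) * k t :=
  hk.bdd_mul (continuous_LSeries_vertical hf).aestronglyMeasurable
    (.of_forall (norm_LSeries_vertical_le hf))

lemma hasSum_integral_term_mul {f : ℕ → ℂ} {σ : ℝ} (hf : LSeriesSummable f σ) {k : ℝ → ℂ}
    (hk : Integrable k) :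
    HasSum (fun n ↦ ∫ t : ℝ, LSeries.term f (σ + t * I) n * k t)
      (∫ t : ℝ, LSeries f (σ + t * I) * k t) := by
  simp_rw [LSeries, ← tsum_mul_right]
  refine hasSum_integral_of_summable_integral_norm (fun n ↦ hk.bdd_mul
    (continuous_term_vertical f σ n).aestronglyMeasurable
    (.of_forall fun t ↦ (norm_term_vertical f σ t n).le)) ?_
  simp only [norm_mul, norm_term_vertical, integral_const_mul]
  exact hf.norm.mul_right _

theorem integral_LSeries_mul_cesaroKernel {f : ℕ → ℂ} {X σ : ℝ} {M : ℕ} (hX : 0 < X) (hσ : 0 < σ)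
    (hf : LSeriesSummable f σ) (hM : X ≤ M) :
    ∫ t : ℝ, LSeries f (σ + t * I) * cesaroKernel X (σ + t * I)
      = 2 * Real.pi * ∑ n ∈ Icc 1 M, f n * (max (X - n) 0 : ℝ) := by
  have hterm (n : ℕ) (hn : n ≠ 0) :
      ∫ t : ℝ, LSeries.term f (σ + t * I) n * cesaroKernel X (σ + t * I)
        = 2 * Real.pi * (f n * (max (X - n) 0 : ℝ)) := by
    have hinv := integral_cpow_neg_mul_of_hasMellin (y := n) (by positivity)
      (fun t ↦ hasMellin_max_sub hX (s := σ + t * I) (by simpa)) (integrable_cesaroKernel hX hσ)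
      (by fun_prop)
    simp_rw [LSeries.term_of_ne_zero hn, div_eq_mul_inv, ← cpow_neg, mul_assoc,
      integral_const_mul, ← ofReal_natCast, hinv]
    ring
  rw [mul_sum, ← sum_congr rfl fun n hn ↦ hterm n (Nat.one_le_iff_ne_zero.mp (mem_Icc.mp hn).1)]
  refine (hasSum_integral_term_mul hf (integrable_cesaroKernel hX hσ)).unique
    (hasSum_sum_of_ne_finset_zero fun n hn ↦ ?_)
  rcases eq_or_ne n 0 with rfl | hn₀
  · simp
  · have hMn : (M : ℝ) < n := by
      simp only [mem_Icc, not_and, not_le] at hn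
      exact_mod_cast hn (Nat.one_le_iff_ne_zero.mpr hn₀)
    simp [hterm n hn₀, max_eq_right (by linarith : X - n ≤ 0)]

lemma integrable_cesaroKernel_div_sub_one {X σ : ℝ} (hX : 0 < X) (hσ : 1 < σ) :
    Integrable fun t : ℝ ↦ cesaroKernel X (σ + t * I) / (σ + t * I - 1) := by
  have hre (t : ℝ) : σ - 1 ≤ ‖(σ + t * I - 1 : ℂ)‖ := by simpa using re_le_norm (σ + t * I - 1)
  have hne (t : ℝ) : (σ + t * I - 1 : ℂ) ≠ 0 := norm_pos_iff.mp (by linarith [hre t])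
  simp only [div_eq_mul_inv]
  refine (integrable_cesaroKernel hX (by linarith)).mul_bdd (c := (σ - 1)⁻¹)
    (Continuous.inv₀ (by fun_prop) hne).aestronglyMeasurable (.of_forall fun t ↦ ?_)
  rw [norm_inv]
  exact inv_anti₀ (by linarith) (hre t)

lemma integral_cesaroKernel_div_sub_one {X σ : ℝ} (hX : 1 ≤ X) (hσ : 1 < σ) :
    ∫ t : ℝ, cesaroKernel X (σ + t * I) / (σ + t * I - 1)
      = 2 * Real.pi * (((X - 1) ^ 2 / 2 : ℝ) : ℂ) := by
  have hX₀ : 0 < X := by linarith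
  have hinv := integral_cpow_neg_mul_of_hasMellin (M := fun s ↦ cesaroKernel X s / (s - 1)) one_pos
    (fun t ↦ hasMellin_max_sub_sq_div hX₀ (s := σ + t * I) (by simpa))
    (integrable_cesaroKernel_div_sub_one hX₀ hσ)
    (continuous_ofReal.continuousAt.comp' (.div (by fun_prop) (by fun_prop) (by norm_num)))
  simpa [max_eq_left (by linarith : 0 ≤ X - 1)] using hinv

end Perron

section SmoothedSums

open Complex MeasureTheory Topology

/-- The order of the pole of `L(s, χ)` at `s = 1`: it is `1` if `χ` is principal, else `0`. -/
noncomputable def poleOrder {q : ℕ} (χ : DirichletCharacter ℂ q) : ℕ :=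
  open Classical in if χ = 1 then 1 else 0

lemma poleOrder_le_one {q : ℕ} (χ : DirichletCharacter ℂ q) : poleOrder χ ≤ 1 := by
  unfold poleOrder
  split_ifs <;> norm_num

lemma neg_logDeriv_entireLFunction_eq {q : ℕ} [NeZero q] (χ : DirichletCharacter ℂ q) {s : ℂ}
    (hs : 1 < s.re) :
    -logDeriv (entireLFunction χ) s
      = LSeries (fun n ↦ χ (n : ZMod q) * (vonMangoldt n : ℂ)) s - poleOrder χ / (s - 1) := by
  have hs₁ : s ≠ 1 := by rintro rfl; simp at hs
  have hnhds : {z : ℂ | 1 < z.re} ∈ 𝓝 s := (isOpen_lt continuous_const continuous_re).mem_nhds hs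
  have hLSeries : LSeries (fun n ↦ χ (n : ZMod q) * (vonMangoldt n : ℂ)) s
      = -logDeriv (DirichletCharacter.LFunction χ) s := by
    have heq : LSeries (fun n ↦ χ (n : ZMod q)) =ᶠ[𝓝 s] DirichletCharacter.LFunction χ := by
      filter_upwards [hnhds] with z hz using (DirichletCharacter.LFunction_eq_LSeries χ hz).symm
    have htwist := DirichletCharacter.LSeries_twist_vonMangoldt_eq χ hs
    rw [heq.deriv_eq, heq.eq_of_nhds] at htwist
    rw [logDeriv_apply, ← neg_div, ← htwist]
    rfl
  rw [hLSeries]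
  by_cases hχ : χ = 1
  · have heq : entireLFunction χ =ᶠ[𝓝 s] fun z ↦ (z - 1) * DirichletCharacter.LFunction χ z := by
      filter_upwards [hnhds] with z hz
      subst hχ
      exact entireLFunction_one_apply (by rintro rfl; simp at hz)
    rw [logDeriv_apply, heq.deriv_eq, heq.eq_of_nhds, ← logDeriv_apply,
      logDeriv_mul (f := fun z : ℂ ↦ z - 1) s (sub_ne_zero.mpr hs₁)
        (DirichletCharacter.LFunction_ne_zero_of_one_le_re χ (.inr hs₁) hs.le) (by fun_prop)
        (DirichletCharacter.differentiableAt_LFunction χ s (.inl hs₁)),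
      logDeriv_apply, deriv_sub_const, deriv_id'', poleOrder, if_pos hχ]
    push_cast
    ring
  · simp [entireLFunction_of_ne_one hχ, poleOrder, hχ]

lemma norm_poleOrder_div_sub_one_le {q : ℕ} (χ : DirichletCharacter ℂ q) {s : ℂ} (hs : 1 < s.re) :
    ‖(poleOrder χ : ℂ) / (s - 1)‖ ≤ 1 / (s.re - 1) := by
  have hre : s.re - 1 ≤ ‖s - 1‖ := by simpa using re_le_norm (s - 1)
  rw [norm_div, norm_natCast]
  exact div_le_div₀ zero_le_one (mod_cast poleOrder_le_one χ) (by linarith) hre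

lemma tsum_norm_term_vonMangoldt {σ : ℝ} :
    ((∑' n, ‖LSeries.term (fun n ↦ (vonMangoldt n : ℂ)) σ n‖ : ℝ) : ℂ)
      = LSeries (fun n ↦ (vonMangoldt n : ℂ)) σ := by
  rw [ofReal_tsum, LSeries]
  refine tsum_congr fun n ↦ ?_
  rcases eq_or_ne n 0 with rfl | hn
  · simp
  · rw [LSeries.norm_term_eq, if_neg hn, LSeries.term_of_ne_zero hn, norm_real,
      Real.norm_of_nonneg vonMangoldt_nonneg, ofReal_div, ofReal_cpow n.cast_nonneg, ofReal_natCast,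
      ofReal_re]

lemma norm_LSeries_twist_vonMangoldt_le {q : ℕ} (χ : DirichletCharacter ℂ q) {s : ℂ}
    (hs : 1 < s.re) :
    ‖LSeries (fun n ↦ χ (n : ZMod q) * (vonMangoldt n : ℂ)) s‖
      ≤ ∑' n, ‖LSeries.term (fun n ↦ (vonMangoldt n : ℂ)) s.re n‖ := by
  have hsum : LSeriesSummable (fun n ↦ (vonMangoldt n : ℂ)) s.re :=
    LSeriesSummable_vonMangoldt (by simpa)
  refine tsum_of_norm_bounded hsum.norm.hasSum fun n ↦ ?_
  rw [LSeries.norm_term_eq, LSeries.norm_term_eq, ofReal_re, norm_mul]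
  split_ifs
  · rfl
  · gcongr
    exact mul_le_of_le_one_left (norm_nonneg _) (χ.norm_le_one _)

lemma exists_norm_logDeriv_le_div_sub_one (hGRH : GRH) :
    ∃ B : ℝ, 0 < B ∧ ∀ (q : ℕ) [NeZero q] (χ : DirichletCharacter ℂ q) (s : ℂ), 1 < s.re →
      s.re ≤ 2 → ‖logDeriv (entireLFunction χ) s‖ ≤ B / (s.re - 1) := by
  obtain ⟨A, hA, hdiv⟩ := exists_norm_logDeriv_le_div hGRH
  have hlog := logConductor_pos 1 0
  refine ⟨2 + 2 * A * logConductor 1 0, by positivity, fun q _ χ s hs hs₂ ↦ ?_⟩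
  have htrivial (n : ℕ) : (1 : DirichletCharacter ℂ 1) (n : ZMod 1) = 1 :=
    MulChar.one_apply (isUnit_of_subsingleton _)
  have hzeta := neg_logDeriv_entireLFunction_eq (1 : DirichletCharacter ℂ 1) (s := s.re) (by simpa)
  simp only [htrivial, one_mul, ← tsum_norm_term_vonMangoldt] at hzeta
  set S := ∑' n, ‖LSeries.term (fun n ↦ (vonMangoldt n : ℂ)) s.re n‖
  have hbounded : ‖logDeriv (entireLFunction (1 : DirichletCharacter ℂ 1)) s.re‖
      ≤ 2 * A * logConductor 1 0 / (s.re - 1) := by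
    have := hdiv 1 1 s.re (by simp; linarith) (by simpa)
    simp only [ofReal_re, ofReal_im] at this
    refine this.trans ?_
    rw [div_le_div_iff₀ (by linarith) (by linarith)]
    nlinarith [mul_pos hA hlog]
  have hS : S ≤ 1 / (s.re - 1) + 2 * A * logConductor 1 0 / (s.re - 1) := by
    calc S ≤ ‖(S : ℂ)‖ := (le_abs_self S).trans_eq (norm_real S).symm
      _ = ‖poleOrder (1 : DirichletCharacter ℂ 1) / ((s.re : ℂ) - 1)
            - logDeriv (entireLFunction (1 : DirichletCharacter ℂ 1)) s.re‖ := by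
          rw [sub_eq_add_neg, hzeta]
          ring_nf
      _ ≤ _ := (norm_sub_le _ _).trans (add_le_add
          (norm_poleOrder_div_sub_one_le _ (s := s.re) (by simpa)) hbounded)
  calc ‖logDeriv (entireLFunction χ) s‖
      = ‖LSeries (fun n ↦ χ (n : ZMod q) * (vonMangoldt n : ℂ)) s - poleOrder χ / (s - 1)‖ := by
        rw [← neg_logDeriv_entireLFunction_eq χ hs, norm_neg]
    _ ≤ S + 1 / (s.re - 1) := (norm_sub_le _ _).trans (add_le_add
        (norm_LSeries_twist_vonMangoldt_le χ hs) (norm_poleOrder_div_sub_one_le χ hs))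
    _ ≤ (2 + 2 * A * logConductor 1 0) / (s.re - 1) := by
        rw [add_div, show (2 : ℝ) = 1 + 1 by norm_num, add_div]
        linarith

lemma integral_neg_logDeriv_mul_cesaroKernel {q M : ℕ} [NeZero q] (χ : DirichletCharacter ℂ q)
    {X σ : ℝ} (hX : 1 ≤ X) (hσ : 1 < σ) (hM : X ≤ M) :
    Integrable (fun t : ℝ ↦
      -logDeriv (entireLFunction χ) (σ + t * I) * cesaroKernel X (σ + t * I)) ∧
    ∫ t : ℝ, -logDeriv (entireLFunction χ) (σ + t * I) * cesaroKernel X (σ + t * I)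
      = 2 * Real.pi * (∑ n ∈ Icc 1 M, χ (n : ZMod q) * vonMangoldt n * (max (X - n) 0 : ℝ)
          - poleOrder χ * ((X - 1) ^ 2 / 2 : ℝ)) := by
  have hX₀ : 0 < X := by linarith
  have hsum : LSeriesSummable (fun n ↦ χ (n : ZMod q) * (vonMangoldt n : ℂ)) σ :=
    DirichletCharacter.LSeriesSummable_twist_vonMangoldt χ (by simpa)
  have hcesaro := integrable_LSeries_mul hsum (integrable_cesaroKernel hX₀ (zero_lt_one.trans hσ))
  have hpole := (integrable_cesaroKernel_div_sub_one hX₀ hσ).const_mul (poleOrder χ : ℂ)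
  have hsplit (t : ℝ) : -logDeriv (entireLFunction χ) (σ + t * I) * cesaroKernel X (σ + t * I)
      = LSeries (fun n ↦ χ (n : ZMod q) * (vonMangoldt n : ℂ)) (σ + t * I)
          * cesaroKernel X (σ + t * I)
        - poleOrder χ * (cesaroKernel X (σ + t * I) / (σ + t * I - 1)) := by
    rw [neg_logDeriv_entireLFunction_eq χ (by simpa)]
    ring
  simp_rw [hsplit]
  refine ⟨hcesaro.sub hpole, ?_⟩
  rw [integral_sub hcesaro hpole, integral_const_mul, integral_cesaroKernel_div_sub_one hX hσ,
    integral_LSeries_mul_cesaroKernel hX₀ (zero_lt_one.trans hσ) hsum hM]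
  ring

/-- The weight equal to `1` for `u ≤ x`, to `0` for `x + h ≤ u`, and linear in between. -/
noncomputable def smoothWeight (x h u : ℝ) : ℝ := (max (x + h - u) 0 - max (x - u) 0) / h

/-- The Mellin transform of `smoothWeight x h`. -/
noncomputable def smoothKernel (x h : ℝ) (s : ℂ) : ℂ :=
  (cesaroKernel (x + h) s - cesaroKernel x s) / h

theorem integral_neg_logDeriv_mul_smoothKernel {q M : ℕ} [NeZero q] (χ : DirichletCharacter ℂ q)
    {x h σ : ℝ} (hx : 1 ≤ x) (hh : 0 < h) (hσ : 1 < σ) (hM : x + h ≤ M) :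
    ∫ t : ℝ, -logDeriv (entireLFunction χ) (σ + t * I) * smoothKernel x h (σ + t * I)
      = 2 * Real.pi * (∑ n ∈ Icc 1 M, χ (n : ZMod q) * vonMangoldt n * smoothWeight x h n
          - poleOrder χ * (x + h / 2 - 1)) := by
  obtain ⟨hint, heq⟩ := integral_neg_logDeriv_mul_cesaroKernel χ hx hσ (by linarith)
  obtain ⟨hint', heq'⟩ := integral_neg_logDeriv_mul_cesaroKernel χ (by linarith : 1 ≤ x + h) hσ hM
  have hh₀ : (h : ℂ) ≠ 0 := ofReal_ne_zero.mpr hh.ne'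
  simp only [smoothKernel, mul_div_assoc', mul_sub]
  rw [integral_div, integral_sub hint' hint, heq, heq', div_eq_iff hh₀]
  have hsum : (∑ n ∈ Icc 1 M, χ (n : ZMod q) * vonMangoldt n * smoothWeight x h n) * h
      = ∑ n ∈ Icc 1 M, χ (n : ZMod q) * vonMangoldt n * (max (x + h - n) 0 : ℝ)
        - ∑ n ∈ Icc 1 M, χ (n : ZMod q) * vonMangoldt n * (max (x - n) 0 : ℝ) := by
    rw [← sum_sub_distrib, sum_mul]
    refine sum_congr rfl fun n _ ↦ ?_
    rw [smoothWeight, ofReal_div, ofReal_sub]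
    field_simp
  push_cast at hsum ⊢
  linear_combination -(2 * Real.pi : ℂ) * hsum

lemma differentiableAt_smoothKernel {x h : ℝ} (hx : 0 < x) (hh : 0 < h) {s : ℂ} (hs : 0 < s.re) :
    DifferentiableAt ℂ (smoothKernel x h) s :=
  ((differentiableAt_cesaroKernel (by linarith) hs).sub
    (differentiableAt_cesaroKernel hx hs)).div_const _

lemma norm_smoothKernel_le {x h a : ℝ} {s : ℂ} (hx : 0 < x) (hh : 0 < h) (hhx : h ≤ x)
    (ha : 0 < a) (ha₁ : a ≤ 1) (hs : a ≤ s.re) :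
    ‖smoothKernel x h s‖ ≤ 8 / a * (2 * x) ^ (s.re + 1) / h * (1 + |s.im|) ^ (-2 : ℝ) := by
  have hbound {X : ℝ} (hX : 0 < X) (hX₂ : X ≤ 2 * x) : ‖cesaroKernel X s‖
      ≤ 4 / a * (2 * x) ^ (s.re + 1) * (1 + |s.im|) ^ (-2 : ℝ) := by
    refine (norm_cesaroKernel_le hX ha ha₁ hs).trans ?_
    gcongr
    linarith
  rw [smoothKernel, norm_div, norm_real, Real.norm_of_nonneg hh.le, div_le_iff₀ hh]
  calc ‖cesaroKernel (x + h) s - cesaroKernel x s‖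
      ≤ 4 / a * (2 * x) ^ (s.re + 1) * (1 + |s.im|) ^ (-2 : ℝ)
        + 4 / a * (2 * x) ^ (s.re + 1) * (1 + |s.im|) ^ (-2 : ℝ) :=
        (norm_sub_le _ _).trans (add_le_add (hbound (by linarith) (by linarith))
          (hbound hx (by linarith)))
    _ = 8 / a * (2 * x) ^ (s.re + 1) / h * (1 + |s.im|) ^ (-2 : ℝ) * h := by
        field_simp
        norm_num

lemma norm_smoothKernel_le_rpow_div {x h : ℝ} {s : ℂ} (hx : 0 < x) (hh : 0 < h) (hhx : h ≤ x)
    (hs : 0 < s.re) : ‖smoothKernel x h s‖ ≤ (2 * x) ^ s.re / ‖s‖ := by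
  have hs₁ : s + 1 ≠ 0 := fun h ↦ by have := congrArg re h; simp at this; linarith
  have hs₀ : s ≠ 0 := by rintro rfl; simp at hs
  have hmean : ‖((x + h : ℝ) : ℂ) ^ (s + 1) / (s + 1) - (x : ℂ) ^ (s + 1) / (s + 1)‖
      ≤ (2 * x) ^ s.re * ‖x + h - x‖ := by
    refine Convex.norm_image_sub_le_of_norm_hasDerivWithin_le
      (f := fun y : ℝ ↦ (y : ℂ) ^ (s + 1) / (s + 1)) (s := Set.Icc x (x + h))
      (fun y hy ↦ (hasDerivAt_ofReal_cpow_const' (by linarith [hy.1])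
        fun h ↦ hs₁ (by simp [h])).hasDerivWithinAt) (fun y hy ↦ ?_) (convex_Icc _ _)
      (by simp [hh.le]) (by simp [hh.le])
    rw [norm_cpow_eq_rpow_re_of_pos (by linarith [hy.1])]
    exact Real.rpow_le_rpow (by linarith [hy.1]) (by linarith [hy.2]) hs.le
  have hh₀ : (h : ℂ) ≠ 0 := ofReal_ne_zero.mpr hh.ne'
  have heq : smoothKernel x h s
      = (((x + h : ℝ) : ℂ) ^ (s + 1) / (s + 1) - (x : ℂ) ^ (s + 1) / (s + 1)) / h / s := by
    unfold smoothKernel cesaroKernel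
    field_simp
  rw [add_sub_cancel_left, Real.norm_of_nonneg hh.le] at hmean
  rw [heq, norm_div, norm_div, norm_real, Real.norm_of_nonneg hh.le]
  gcongr
  rwa [div_le_iff₀ hh]

end SmoothedSums

section SmoothedSumBound

open Complex MeasureTheory
open scoped ComplexConjugate

lemma two_le_log_four_mul {x : ℝ} (hx : 2 ≤ x) : 2 ≤ Real.log (4 * x) := by
  rw [Real.le_log_iff_exp_le (by linarith), ← one_add_one_eq_two, Real.exp_add]
  nlinarith [Real.exp_one_lt_d9, Real.exp_pos 1]

lemma rpow_inv_log_four_mul_le {x y : ℝ} (hy : 0 < y) (hyx : y ≤ 4 * x) (hx : 2 ≤ x) :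
    y ^ (Real.log (4 * x))⁻¹ ≤ 3 := by
  have hlog := two_le_log_four_mul hx
  calc y ^ (Real.log (4 * x))⁻¹ ≤ (4 * x) ^ (Real.log (4 * x))⁻¹ := by gcongr
    _ = Real.exp 1 := by
        rw [Real.rpow_def_of_pos (by linarith), mul_inv_cancel₀ (by linarith)]
    _ ≤ 3 := Real.exp_one_lt_d9.le.trans (by norm_num)

lemma sum_range_one_add_rpow_neg_le {η : ℝ} (hη : 0 < η) (n : ℕ) :
    ∑ m ∈ range n, (1 + m : ℝ) ^ (-(1 + η)) ≤ 1 + 1 / η := by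
  rcases n with - | n
  · have : 0 ≤ 1 + 1 / η := by positivity
    simpa
  have hanti : AntitoneOn (fun x : ℝ ↦ x ^ (-(1 + η))) (Set.Icc 1 (1 + n)) := fun x hx y _ hxy ↦
    Real.rpow_le_rpow_of_nonpos (by linarith [hx.1]) hxy (by linarith)
  have hint : ∫ x : ℝ in 1..1 + n, x ^ (-(1 + η)) ≤ 1 / η := by
    have hpos : 0 ≤ (1 + n : ℝ) ^ (-η) := by positivity
    rw [integral_rpow (.inr ⟨by linarith, by simp [Set.uIcc_of_le]⟩),
      show -(1 + η) + 1 = -η by ring, Real.one_rpow, div_neg, ← neg_div, neg_sub]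
    gcongr
    linarith
  have hsum := hanti.sum_le_integral
  rw [sum_range_succ']
  push_cast at hsum ⊢
  simp only [add_zero, Real.one_rpow]
  linarith

lemma logConductor_le_rpow (q : ℕ) (t : ℝ) {η : ℝ} (hη : 0 < η) :
    logConductor q t ≤ (Real.log q + 1 + 1 / η) * (1 + |t|) ^ η := by
  have hone : 1 ≤ (1 + |t|) ^ η := Real.one_le_rpow (by linarith [abs_nonneg t]) hη.le
  have hlog : Real.log (|t| + 2) ≤ 1 + (1 + |t|) ^ η / η := by
    calc Real.log (|t| + 2) ≤ Real.log (2 * (1 + |t|)) :=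
          Real.log_le_log (by positivity) (by linarith [abs_nonneg t])
      _ = Real.log 2 + Real.log (1 + |t|) := Real.log_mul two_ne_zero (by positivity)
      _ ≤ 1 + (1 + |t|) ^ η / η := add_le_add (by linarith [Real.log_two_lt_d9])
          (Real.log_le_rpow_div (by positivity) hη)
  have hq : 0 ≤ Real.log q := Real.log_natCast_nonneg q
  rw [logConductor, add_mul, add_mul, one_div_mul_eq_div]
  nlinarith

lemma le_mul_rpow_of_le_of_le_mul {a C y ε : ℝ} (hC : 0 ≤ C) (hy : 0 ≤ y) (hε₀ : 0 ≤ ε)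
    (hε₁ : ε ≤ 1) (haC : a ≤ C) (haCy : a ≤ C * y) : a ≤ C * y ^ ε := by
  rcases le_total y 1 with hy₁ | hy₁
  · exact haCy.trans (mul_le_mul_of_nonneg_left (Real.self_le_rpow_of_le_one hy hy₁ hε₁) hC)
  · exact haC.trans (le_mul_of_one_le_right hC (Real.one_le_rpow hy₁ hε₀))

lemma norm_smoothKernel_le_inv_one_add_abs {x h : ℝ} {s : ℂ} (hx : 0 < x) (hh : 0 < h) (hhx : h ≤ x)
    (hs : 1 / 2 ≤ s.re) : ‖smoothKernel x h s‖ ≤ 3 * (2 * x) ^ s.re * (1 + |s.im|)⁻¹ := by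
  have hnorm : (1 + |s.im|) / 3 ≤ ‖s‖ := by linarith [re_le_norm s, abs_im_le_norm s]
  calc ‖smoothKernel x h s‖ ≤ (2 * x) ^ s.re / ‖s‖ :=
        norm_smoothKernel_le_rpow_div hx hh hhx (by linarith)
    _ ≤ (2 * x) ^ s.re / ((1 + |s.im|) / 3) := by gcongr
    _ = 3 * (2 * x) ^ s.re * (1 + |s.im|)⁻¹ := by field_simp

lemma two_mul_rpow_half_add_inv_log_le {x : ℝ} (hx : 2 ≤ x) :
    (2 * x) ^ (1 / 2 + (Real.log (4 * x))⁻¹) ≤ 6 * √x := by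
  have h2 : √2 ≤ 2 := Real.sqrt_le_left (by norm_num) |>.mpr (by norm_num)
  rw [Real.rpow_add (by linarith), ← Real.sqrt_eq_rpow, Real.sqrt_mul (by norm_num)]
  calc √2 * √x * (2 * x) ^ (Real.log (4 * x))⁻¹ ≤ 2 * √x * 3 := by
        gcongr
        exact rpow_inv_log_four_mul_le (by linarith) (by linarith) hx
    _ = 6 * √x := by ring

-- Interpolates between the bounds `√x / (1 + |t|)` and `x / (1 + |t|) ^ 2`.
lemma norm_smoothKernel_vertical_le {x h : ℝ} (hx : 2 ≤ x) (hh : √x ≤ h) (hhx : h ≤ x) (t : ℝ) :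
    ‖smoothKernel x h ((1 / 2 + (Real.log (4 * x))⁻¹ : ℝ) + t * I)‖
      ≤ 576 * √x * (1 + |t|) ^ (-(1 + (Real.log (4 * x))⁻¹)) := by
  have hlog := two_le_log_four_mul hx
  have hpow := two_mul_rpow_half_add_inv_log_le hx
  have hsqrt : 0 < √x := Real.sqrt_pos.mpr (by linarith)
  have hsq : √x * √x = x := Real.mul_self_sqrt (by linarith)
  have hsqrt_rpow := rpow_inv_log_four_mul_le hsqrt (by nlinarith) hx
  set ε := (Real.log (4 * x))⁻¹
  have hε₀ : 0 < ε := by positivity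
  have hε₁ : ε ≤ 1 := inv_le_one_of_one_le₀ (by linarith)
  set s : ℂ := (1 / 2 + ε : ℝ) + t * I
  have hre : s.re = 1 / 2 + ε := by simp [s]
  have him : s.im = t := by simp [s]
  rw [← hre] at hpow
  have hfirst : ‖smoothKernel x h s‖ ≤ 192 * √x * (1 + |t|)⁻¹ := by
    calc ‖smoothKernel x h s‖ ≤ 3 * (2 * x) ^ s.re * (1 + |s.im|)⁻¹ :=
          norm_smoothKernel_le_inv_one_add_abs (by linarith) (by linarith) hhx (by linarith)
      _ ≤ 192 * √x * (1 + |t|)⁻¹ := by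
          rw [him]
          exact mul_le_mul_of_nonneg_right (by linarith) (by positivity)
  have hsecond : ‖smoothKernel x h s‖ ≤ 192 * √x * (1 + |t|)⁻¹ * (√x / (1 + |t|)) := by
    calc ‖smoothKernel x h s‖
        ≤ 8 / (1 / 2) * (2 * x) ^ (s.re + 1) / h * (1 + |s.im|) ^ (-2 : ℝ) :=
          norm_smoothKernel_le (by linarith) (by linarith) hhx (by norm_num) (by norm_num)
            (by linarith)
      _ ≤ 8 / (1 / 2) * (6 * √x * (2 * x)) / √x * (1 + |s.im|) ^ (-2 : ℝ) := by
          rw [Real.rpow_add (by linarith), Real.rpow_one]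
          gcongr
      _ = 192 * √x * (1 + |t|)⁻¹ * (√x / (1 + |t|)) := by
          rw [him, Real.rpow_neg (by positivity), Real.rpow_two]
          nth_rw 2 [← hsq]
          field_simp
          norm_num
  calc ‖smoothKernel x h s‖ ≤ 192 * √x * (1 + |t|)⁻¹ * (√x / (1 + |t|)) ^ ε :=
        le_mul_rpow_of_le_of_le_mul (by positivity) (by positivity) hε₀.le hε₁ hfirst hsecond
    _ ≤ 192 * √x * (1 + |t|)⁻¹ * (3 / (1 + |t|) ^ ε) := by
        rw [Real.div_rpow hsqrt.le (by positivity)]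
        gcongr
    _ = 576 * √x * (1 + |t|) ^ (-(1 + ε)) := by
        rw [Real.rpow_neg (by positivity), Real.rpow_add (by positivity), Real.rpow_one]
        field_simp
        norm_num

lemma sum_range_mul_logConductor_le {q : ℕ} [NeZero q] {x : ℝ} (hx : 2 ≤ x) (hq : q ≤ 2 * x)
    (n : ℕ) :
    ∑ m ∈ range n, (1 + m : ℝ) ^ (-(1 + (Real.log (4 * x))⁻¹)) * logConductor q (m + 1 / 2)
      ≤ 24 * Real.log (4 * x) ^ 2 := by
  have hlog := two_le_log_four_mul hx
  set ε := (Real.log (4 * x))⁻¹ with hε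
  have : 0 < ε := by positivity
  have hε₁ : ε ≤ 1 := inv_le_one_of_one_le₀ (by linarith)
  have hlogq : Real.log q ≤ Real.log (4 * x) :=
    Real.log_le_log (mod_cast NeZero.pos q) (by linarith)
  have hterm (m : ℕ) : (1 + m : ℝ) ^ (-(1 + ε)) * logConductor q (m + 1 / 2)
      ≤ 8 * Real.log (4 * x) * (1 + m) ^ (-(1 + ε / 2)) := by
    have htwo : (2 : ℝ) ^ (ε / 2) ≤ 2 := by
      simpa using Real.rpow_le_rpow_of_exponent_le one_le_two (by linarith : ε / 2 ≤ 1)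
    calc (1 + m : ℝ) ^ (-(1 + ε)) * logConductor q (m + 1 / 2)
        ≤ (1 + m : ℝ) ^ (-(1 + ε)) * ((Real.log q + 1 + 1 / (ε / 2))
            * (1 + |(m + 1 / 2 : ℝ)|) ^ (ε / 2)) := by
          gcongr
          exact logConductor_le_rpow q _ (by positivity)
      _ ≤ (1 + m : ℝ) ^ (-(1 + ε)) * (4 * Real.log (4 * x) * (2 * (1 + m)) ^ (ε / 2)) := by
          rw [abs_of_nonneg (by positivity), hε, one_div_div, div_inv_eq_mul]
          gcongr
          · linarith
          · linarith
      _ ≤ (1 + m : ℝ) ^ (-(1 + ε)) * (4 * Real.log (4 * x) * (2 * (1 + m) ^ (ε / 2))) := by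
          rw [Real.mul_rpow two_pos.le (by positivity)]
          gcongr
      _ = 8 * Real.log (4 * x) * (1 + m) ^ (-(1 + ε / 2)) := by
          rw [show -(1 + ε / 2) = -(1 + ε) + ε / 2 by ring, Real.rpow_add (by positivity)]
          ring
  calc _ ≤ ∑ m ∈ range n, 8 * Real.log (4 * x) * (1 + m : ℝ) ^ (-(1 + ε / 2)) :=
        sum_le_sum fun m _ ↦ hterm m
    _ ≤ 8 * Real.log (4 * x) * (1 + 1 / (ε / 2)) := by
        rw [← mul_sum]
        gcongr
        exact sum_range_one_add_rpow_neg_le (by positivity) n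
    _ ≤ 24 * Real.log (4 * x) ^ 2 := by
        rw [hε, one_div_div, div_inv_eq_mul]
        nlinarith

lemma exists_integral_re_logDeriv_mul_smoothKernel_le (hGRH : GRH) :
    ∃ A : ℝ, 0 < A ∧ ∀ (q : ℕ) [NeZero q] (χ : DirichletCharacter ℂ q) (x h σ : ℝ), 2 ≤ x →
      √x ≤ h → h ≤ x → q ≤ 2 * x → σ = 1 / 2 + (Real.log (4 * x))⁻¹ →
      Integrable (fun t : ℝ ↦ (2 * (-logDeriv (entireLFunction χ) (σ + t * I)).re : ℝ)
        * smoothKernel x h (σ + t * I)) →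
      ‖∫ t : ℝ, (2 * (-logDeriv (entireLFunction χ) (σ + t * I)).re : ℝ)
        * smoothKernel x h (σ + t * I)‖ ≤ A * (√x * Real.log (4 * x) ^ 2) := by
  obtain ⟨A, hA, hmean⟩ := exists_integral_abs_re_logDeriv_le hGRH
  refine ⟨2 * (1152 * A * 24), by positivity, fun q _ χ x h σ hx hh hhx hq hσ hint ↦ ?_⟩
  have hlog := two_le_log_four_mul hx
  have hε : (Real.log (4 * x))⁻¹ ≤ 1 := inv_le_one_of_one_le₀ (by linarith)
  have hε₀ : 0 < (Real.log (4 * x))⁻¹ := by positivity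
  set w : ℝ → ℝ := fun y ↦ 1152 * √x * (1 + y) ^ (-(1 + (Real.log (4 * x))⁻¹))
  have hw : AntitoneOn w (Set.Ici 0) := fun y hy z _ hyz ↦ mul_le_mul_of_nonneg_left
    (Real.rpow_le_rpow_of_nonpos (by linarith [Set.mem_Ici.mp hy]) (by linarith) (by linarith))
    (by positivity)
  have hbound := integral_le_of_unit_interval_means (a := fun y ↦ A * logConductor q y)
    (B := 1152 * √x * A * (24 * Real.log (4 * x) ^ 2)) hint.norm
    (continuous_re.comp (continuous_logDeriv_entireLFunction_vertical hGRH χ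
      (by linarith : 1 / 2 < σ))).abs (fun _ ↦ abs_nonneg _) hw (fun m ↦ by positivity)
    (fun t ↦ ?_) (fun m ↦ ?_) fun n ↦ ?_
  · exact (norm_integral_le_integral_norm _).trans (hbound.trans_eq (by ring))
  · rw [norm_mul, norm_real, Real.norm_eq_abs, abs_mul, abs_two, neg_re, abs_neg]
    have hK := norm_smoothKernel_vertical_le hx hh hhx t
    rw [← hσ] at hK
    calc _ ≤ 2 * |(logDeriv (entireLFunction χ) (σ + t * I)).re|
          * (576 * √x * (1 + |t|) ^ (-(1 + (Real.log (4 * x))⁻¹))) := by gcongr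
      _ = w |t| * |(logDeriv (entireLFunction χ) (σ + t * I)).re| := by ring
  · simpa [logConductor] using hmean q χ σ m (by linarith) (by linarith)
  · calc ∑ m ∈ range n, w m * (A * logConductor q (m + 1 / 2))
        = 1152 * √x * A * ∑ m ∈ range n,
            (1 + m : ℝ) ^ (-(1 + (Real.log (4 * x))⁻¹)) * logConductor q (m + 1 / 2) := by
          rw [mul_sum]
          exact sum_congr rfl fun m _ ↦ by simp only [w]; ring
      _ ≤ _ := by
          gcongr
          exact sum_range_mul_logConductor_le hx hq n

-- The real part appears because the integral over `re s = ε` is added back in reflected form, and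
-- `g + conj g = 2 re g` on the line fixed by the reflection.
lemma integral_neg_logDeriv_mul_smoothKernel_eq_sub (hGRH : GRH) {q : ℕ} [NeZero q]
    (χ : DirichletCharacter ℂ q) {x h ε : ℝ} (hx : 1 ≤ x) (hh : 0 < h) (hhx : h ≤ x) (hε₀ : 0 < ε)
    (hε₁ : ε ≤ 1 / 2) :
    Integrable (fun t : ℝ ↦ (2 * (-logDeriv (entireLFunction χ) ((1 / 2 + ε : ℝ) + t * I)).re : ℝ)
        * smoothKernel x h ((1 / 2 + ε : ℝ) + t * I)) ∧
      ∫ t : ℝ, -logDeriv (entireLFunction χ) ((2 : ℝ) + t * I) * smoothKernel x h ((2 : ℝ) + t * I)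
        = (∫ t : ℝ, (2 * (-logDeriv (entireLFunction χ) ((1 / 2 + ε : ℝ) + t * I)).re : ℝ)
            * smoothKernel x h ((1 / 2 + ε : ℝ) + t * I))
          - ∫ t : ℝ, conj (-logDeriv (entireLFunction χ) ((1 + ε : ℝ) + t * I))
            * smoothKernel x h (ε + t * I) := by
  obtain ⟨A, hA, hlogDeriv⟩ := exists_norm_logDeriv_le_div hGRH
  have hopen : IsOpen {s : ℂ | 1 / 2 < s.re} := isOpen_lt continuous_const continuous_re
  have hbound (z s : ℂ) (hz : 1 / 2 + ε ≤ z.re) (hz₂ : z.re ≤ 2) (hs : ε ≤ s.re) (hs₂ : s.re ≤ 2)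
      (him : z.im = s.im) : ‖-logDeriv (entireLFunction χ) z‖ * ‖smoothKernel x h s‖
        ≤ A * (Real.log q + 3) / ε * (8 / ε * (2 * x) ^ (3 : ℝ) / h)
          * (1 + |s.im|) ^ (-(3 / 2) : ℝ) := by
    have : 0 ≤ Real.log q := Real.log_natCast_nonneg q
    have hcond := logConductor_le_rpow q s.im (η := 1 / 2) (by norm_num)
    calc ‖-logDeriv (entireLFunction χ) z‖ * ‖smoothKernel x h s‖
        ≤ A * logConductor q z.im / (z.re - 1 / 2)
            * (8 / ε * (2 * x) ^ (s.re + 1) / h * (1 + |s.im|) ^ (-2 : ℝ)) := by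
          rw [norm_neg]
          exact mul_le_mul (hlogDeriv q χ z (by linarith) hz₂) (norm_smoothKernel_le (by linarith)
            hh hhx hε₀ (by linarith) hs) (norm_nonneg _) ((norm_nonneg _).trans
              (hlogDeriv q χ z (by linarith) hz₂))
      _ ≤ A * ((Real.log q + 3) * (1 + |s.im|) ^ (1 / 2 : ℝ)) / ε
            * (8 / ε * (2 * x) ^ (3 : ℝ) / h * (1 + |s.im|) ^ (-2 : ℝ)) := by
          rw [him]
          gcongr
          · exact hcond.trans_eq (by norm_num [add_assoc])
          · linarith
          · linarith
          · linarith
      _ = _ := by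
          rw [show (-(3 / 2) : ℝ) = 1 / 2 + -2 by norm_num, Real.rpow_add (by positivity)]
          ring
  have hshift := integral_vertical_mul_eq_sub (g := fun s ↦ -logDeriv (entireLFunction χ) s)
    (K := smoothKernel x h) (a := ε) (σ := 1 / 2 + ε) (b := 2) (by norm_num : (1 : ℝ) < 3 / 2)
    (by linarith) (by linarith) (by linarith)
    (fun s hs _ ↦ ((differentiableOn_logDeriv_entireLFunction hGRH χ).differentiableAt
      (hopen.mem_nhds (by simp only [Set.mem_ofPred_eq]; linarith))).neg)
    (fun s hs _ ↦ differentiableAt_smoothKernel (by linarith) hh (by linarith)) hbound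
  rwa [show 2 * (1 / 2 + ε) - ε = 1 + ε by ring] at hshift

lemma exists_integral_conj_logDeriv_mul_smoothKernel_le (hGRH : GRH) :
    ∃ A : ℝ, 0 < A ∧ ∀ (q : ℕ) [NeZero q] (χ : DirichletCharacter ℂ q) (x h ε : ℝ), 2 ≤ x →
      √x ≤ h → h ≤ x → ε = (Real.log (4 * x))⁻¹ →
      ‖∫ t : ℝ, conj (-logDeriv (entireLFunction χ) ((1 + ε : ℝ) + t * I))
        * smoothKernel x h (ε + t * I)‖ ≤ A * (√x * Real.log (4 * x) ^ 2) := by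
  obtain ⟨B, hB, hlogDeriv⟩ := exists_norm_logDeriv_le_div_sub_one hGRH
  have : 0 ≤ ∫ t : ℝ, (1 + |t|) ^ (-2 : ℝ) := integral_nonneg fun t ↦ by positivity
  refine ⟨48 * B * (1 + ∫ t : ℝ, (1 + |t|) ^ (-2 : ℝ)), by positivity,
    fun q _ χ x h ε hx hh hhx hε ↦ ?_⟩
  have hlog := two_le_log_four_mul hx
  have hε₀ : 0 < ε := hε ▸ by positivity
  have hε₁ : ε ≤ 1 := hε ▸ inv_le_one_of_one_le₀ (by linarith)
  have hpow : (2 * x) ^ ε ≤ 3 := hε ▸ rpow_inv_log_four_mul_le (by linarith) (by linarith) hx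
  have hsqrt : 0 < √x := Real.sqrt_pos.mpr (by linarith)
  have hpoint (t : ℝ) : ‖conj (-logDeriv (entireLFunction χ) ((1 + ε : ℝ) + t * I))
      * smoothKernel x h (ε + t * I)‖
        ≤ 48 * B * (√x * Real.log (4 * x) ^ 2) * (1 + |t|) ^ (-2 : ℝ) := by
    have hg := hlogDeriv q χ ((1 + ε : ℝ) + t * I) (by simp [hε₀]) (by simp; linarith)
    have hK := norm_smoothKernel_le (s := ε + t * I) (by linarith : 0 < x) (by linarith) hhx hε₀
      hε₁ (by simp)
    simp only [add_re, ofReal_re, mul_re, I_re, mul_zero, ofReal_im, I_im, mul_one, sub_self,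
      add_zero, add_im, mul_im, zero_add, add_sub_cancel_left] at hg hK
    rw [norm_mul, RCLike.norm_conj, norm_neg]
    calc _ ≤ B / ε * (8 / ε * (2 * x) ^ (ε + 1) / h * (1 + |t|) ^ (-2 : ℝ)) := by gcongr
      _ ≤ B / ε * (8 / ε * (3 * (2 * x)) / √x * (1 + |t|) ^ (-2 : ℝ)) := by
          rw [Real.rpow_add (by linarith), Real.rpow_one]
          gcongr
      _ = 48 * B * (x / √x * (ε⁻¹) ^ 2) * (1 + |t|) ^ (-2 : ℝ) := by ring
      _ = _ := by rw [Real.div_sqrt, hε, inv_inv]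
  calc _ ≤ ∫ t : ℝ, 48 * B * (√x * Real.log (4 * x) ^ 2) * (1 + |t|) ^ (-2 : ℝ) :=
        norm_integral_le_of_norm_le ((integrable_one_add_abs_rpow_neg one_lt_two).const_mul _)
          (.of_forall hpoint)
    _ = 48 * B * (∫ t : ℝ, (1 + |t|) ^ (-2 : ℝ)) * (√x * Real.log (4 * x) ^ 2) := by
        rw [integral_const_mul]
        ring
    _ ≤ _ := by
        gcongr
        linarith

theorem exists_norm_sum_char_mul_smoothWeight_sub_le (hGRH : GRH) :
    ∃ B : ℝ, 0 < B ∧ ∀ (q : ℕ) [NeZero q] (χ : DirichletCharacter ℂ q) (x h : ℝ) (M : ℕ), 2 ≤ x →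
      √x ≤ h → h ≤ x → q ≤ 2 * x → x + h ≤ M →
      ‖∑ n ∈ Icc 1 M, χ (n : ZMod q) * vonMangoldt n * smoothWeight x h n
        - poleOrder χ * (x + h / 2 - 1)‖ ≤ B * (√x * Real.log (4 * x) ^ 2) := by
  obtain ⟨A, hA, hcentral⟩ := exists_integral_re_logDeriv_mul_smoothKernel_le hGRH
  obtain ⟨B, hB, hreflected⟩ := exists_integral_conj_logDeriv_mul_smoothKernel_le hGRH
  refine ⟨A + B, by positivity, fun q _ χ x h M hx hh hhx hq hM ↦ ?_⟩
  have hlog := two_le_log_four_mul hx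
  have hsqrt : 0 < √x := Real.sqrt_pos.mpr (by linarith)
  have hperron := integral_neg_logDeriv_mul_smoothKernel χ (σ := 2) (by linarith : 1 ≤ x)
    (by linarith) one_lt_two hM
  obtain ⟨hint, hshift⟩ := integral_neg_logDeriv_mul_smoothKernel_eq_sub hGRH χ
    (ε := (Real.log (4 * x))⁻¹) (by linarith : 1 ≤ x) (by linarith) hhx (by positivity)
    (by rw [one_div]; gcongr)
  rw [hperron] at hshift
  have hnorm (S : ℂ) : ‖S‖ ≤ ‖2 * Real.pi * S‖ := by
    rw [norm_mul, norm_mul, norm_real, Real.norm_of_nonneg Real.pi_pos.le, RCLike.norm_ofNat]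
    nlinarith [norm_nonneg S, Real.pi_gt_three]
  calc _ ≤ _ := hnorm _
    _ ≤ A * (√x * Real.log (4 * x) ^ 2) + B * (√x * Real.log (4 * x) ^ 2) := by
        rw [hshift]
        exact (norm_sub_le _ _).trans (add_le_add
          (hcentral q χ x h _ hx hh hhx hq rfl hint) (hreflected q χ x h _ hx hh hhx rfl))
    _ = (A + B) * (√x * Real.log (4 * x) ^ 2) := by ring

end SmoothedSumBound

section PrimesInProgressions

open Complex

lemma totient_mul_sum_filter_eq_sum_char {q : ℕ} [NeZero q] {a : ZMod q} (ha : IsUnit a)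
    (s : Finset ℕ) (f : ℕ → ℂ) :
    q.totient * ∑ n ∈ s with ((n : ℕ) : ZMod q) = a, f n
      = ∑ χ : DirichletCharacter ℂ q, χ a⁻¹ * ∑ n ∈ s, χ (n : ZMod q) * f n := by
  calc q.totient * ∑ n ∈ s with ((n : ℕ) : ZMod q) = a, f n
      = ∑ n ∈ s, (if a = n then (q.totient : ℂ) else 0) * f n := by
        simp only [mul_sum, sum_filter, eq_comm, ite_mul, zero_mul, mul_ite, mul_zero]
    _ = ∑ n ∈ s, ∑ χ : DirichletCharacter ℂ q, χ a⁻¹ * (χ (n : ZMod q) * f n) := by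
        simp only [← DirichletCharacter.sum_char_inv_mul_char_eq ℂ ha, sum_mul, mul_assoc]
    _ = _ := by
        rw [sum_comm]
        simp only [mul_sum]

lemma sum_char_inv_mul_poleOrder {q : ℕ} {a : ZMod q} (ha : IsUnit a) :
    ∑ χ : DirichletCharacter ℂ q, χ a⁻¹ * (poleOrder χ : ℂ) = 1 := by
  have hainv : IsUnit a⁻¹ := by
    obtain ⟨u, rfl⟩ := ha
    rw [ZMod.inv_coe_unit]
    exact Units.isUnit _
  rw [sum_eq_single_of_mem 1 (mem_univ _) (fun χ _ hχ ↦ by simp [poleOrder, hχ]),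
    MulChar.one_apply hainv]
  simp [poleOrder]

theorem exists_abs_sum_smoothWeight_sub_le (hGRH : GRH) :
    ∃ B : ℝ, 0 < B ∧ ∀ (q : ℕ) [NeZero q] (a : ZMod q) (x h : ℝ) (M : ℕ), IsUnit a → 2 ≤ x →
      √x ≤ h → h ≤ x → q ≤ 2 * x → x + h ≤ M →
      |∑ n ∈ Icc 1 M with ((n : ℕ) : ZMod q) = a, vonMangoldt n * smoothWeight x h n
        - (x + h / 2 - 1) / q.totient| ≤ B * (√x * Real.log (4 * x) ^ 2) := by
  obtain ⟨B, hB, hchar⟩ := exists_norm_sum_char_mul_smoothWeight_sub_le hGRH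
  refine ⟨B, hB, fun q _ a x h M ha hx hh hhx hq hM ↦ ?_⟩
  set S := ∑ n ∈ Icc 1 M with ((n : ℕ) : ZMod q) = a, vonMangoldt n * smoothWeight x h n with hS
  set E := B * (√x * Real.log (4 * x) ^ 2)
  have hφ : (0 : ℝ) < q.totient := mod_cast Nat.totient_pos.mpr (NeZero.pos q)
  have hexpand : ((q.totient * S - (x + h / 2 - 1) : ℝ) : ℂ) = ∑ χ : DirichletCharacter ℂ q,
      χ a⁻¹ * (∑ n ∈ Icc 1 M, χ (n : ZMod q) * vonMangoldt n * smoothWeight x h n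
        - poleOrder χ * (x + h / 2 - 1)) := by
    simp only [mul_sub, sum_sub_distrib, ← mul_assoc, ← sum_mul, sum_char_inv_mul_poleOrder ha,
      one_mul]
    rw [hS]
    push_cast
    rw [totient_mul_sum_filter_eq_sum_char ha]
    simp only [mul_assoc]
  have hbound : |q.totient * S - (x + h / 2 - 1)| ≤ q.totient * E := by
    rw [← Real.norm_eq_abs, ← norm_real, hexpand]
    calc _ ≤ ∑ _χ : DirichletCharacter ℂ q, E := norm_sum_le_of_le _ fun χ _ ↦ by
          rw [norm_mul]
          exact (mul_le_of_le_one_left (norm_nonneg _) (DirichletCharacter.norm_le_one χ _)).trans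
            (hchar q χ x h M hx hh hhx hq hM)
      _ = q.totient * E := by
          rw [sum_const, nsmul_eq_mul, card_univ, ← Nat.card_eq_fintype_card,
            DirichletCharacter.card_eq_totient_of_hasEnoughRootsOfUnity]
  rw [sub_div' hφ.ne', abs_div, abs_of_pos hφ, div_le_iff₀ hφ, mul_comm S, mul_comm E]
  exact hbound

lemma smoothWeight_nonneg {x h : ℝ} (hh : 0 ≤ h) (u : ℝ) : 0 ≤ smoothWeight x h u :=
  div_nonneg (sub_nonneg.mpr (max_le_max (by linarith) le_rfl)) hh

lemma smoothWeight_le_one {x h : ℝ} (hh : 0 ≤ h) (u : ℝ) : smoothWeight x h u ≤ 1 := by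
  refine div_le_one_of_le₀ (sub_le_iff_le_add.mpr (max_le ?_ ?_)) hh
  · linarith [le_max_left (x - u) 0]
  · linarith [le_max_right (x - u) 0]

lemma smoothWeight_of_le {x h u : ℝ} (hh : 0 < h) (hu : u ≤ x) : smoothWeight x h u = 1 := by
  rw [smoothWeight, max_eq_left (by linarith), max_eq_left (by linarith)]
  field_simp
  ring

lemma smoothWeight_of_add_le {x h u : ℝ} (hh : 0 ≤ h) (hu : x + h ≤ u) :
    smoothWeight x h u = 0 := by
  rw [smoothWeight, max_eq_right (by linarith), max_eq_right (by linarith), sub_zero, zero_div]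

lemma psi_le_sum_smoothWeight {x h : ℝ} {M : ℕ} (hh : 0 < h) (hM : x ≤ M) (q a : ℕ) :
    psi x q a ≤ ∑ n ∈ Icc 1 M with ((n : ℕ) : ZMod q) = a, vonMangoldt n * smoothWeight x h n := by
  calc psi x q a
      = ∑ n ∈ Icc 1 ⌊x⌋₊ with ((n : ℕ) : ZMod q) = a, vonMangoldt n * smoothWeight x h n := by
        refine sum_congr rfl fun n hn ↦ ?_
        rw [mem_filter, mem_Icc, Nat.le_floor_iff' (by grind)] at hn
        rw [smoothWeight_of_le hh hn.1.2, mul_one]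
    _ ≤ _ := sum_le_sum_of_subset_of_nonneg
        (filter_subset_filter _ (Icc_subset_Icc_right (Nat.floor_le_of_le hM)))
        fun n _ _ ↦ mul_nonneg vonMangoldt_nonneg (smoothWeight_nonneg hh.le _)

lemma sum_smoothWeight_le_psi {x h : ℝ} (hh : 0 ≤ h) (q a M : ℕ) :
    ∑ n ∈ Icc 1 M with ((n : ℕ) : ZMod q) = a, vonMangoldt n * smoothWeight x h n
      ≤ psi (x + h) q a := by
  have hlt (n : ℕ) (hn : vonMangoldt n * smoothWeight x h n ≠ 0) : n < x + h := by
    by_contra! hle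
    simp [smoothWeight_of_add_le hh hle] at hn
  rw [← sum_filter_of_ne fun n _ hn ↦ hlt n hn]
  calc _ ≤ ∑ n ∈ {n ∈ Icc 1 M | ((n : ℕ) : ZMod q) = a} with ((n : ℕ) : ℝ) < x + h,
        vonMangoldt n :=
        sum_le_sum fun n _ ↦
          mul_le_of_le_one_right vonMangoldt_nonneg (smoothWeight_le_one hh _)
    _ ≤ psi (x + h) q a := sum_le_sum_of_subset_of_nonneg (fun n hn ↦ by
        simp only [mem_filter, mem_Icc] at hn ⊢
        exact ⟨⟨hn.1.1.1, Nat.le_floor hn.2.le⟩, hn.1.2⟩) fun _ _ _ ↦ vonMangoldt_nonneg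

lemma psi_nonneg (x : ℝ) (q a : ℕ) : 0 ≤ psi x q a := sum_nonneg fun _ _ ↦ vonMangoldt_nonneg

lemma psi_le_chebyshev_psi (x : ℝ) (q a : ℕ) : psi x q a ≤ Chebyshev.psi x :=
  sum_le_sum_of_subset_of_nonneg (filter_subset _ _) fun _ _ _ ↦ vonMangoldt_nonneg

lemma abs_psi_sub_le_six_mul {x : ℝ} (hx : 0 ≤ x) {q : ℕ} (hq : 1 ≤ q.totient) (a : ℕ) :
    |psi x q a - x / q.totient| ≤ 6 * x := by
  have hlog : Real.log 4 ≤ 2 := by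
    rw [show (4 : ℝ) = 2 ^ 2 by norm_num, Real.log_pow]
    norm_num
    linarith [Real.log_two_lt_d9]
  have hpsi : psi x q a ≤ 6 * x := by
    nlinarith [psi_le_chebyshev_psi x q a, Chebyshev.psi_le_const_mul_self hx]
  have hdiv : x / q.totient ≤ x := div_le_self hx (mod_cast hq)
  have hdiv₀ : 0 ≤ x / q.totient := by positivity
  rw [abs_le]
  constructor <;> linarith [psi_nonneg x q a]

lemma exists_abs_psi_sub_le_of_four_le (hGRH : GRH) :
    ∃ B : ℝ, 0 < B ∧ ∀ (x : ℝ) (q a : ℕ), 4 ≤ x → 1 ≤ q → a.Coprime q → q ≤ x →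
      |psi x q a - x / q.totient| ≤ √x + B * (√x * Real.log (4 * x) ^ 2) := by
  obtain ⟨B, hB, hsmooth⟩ := exists_abs_sum_smoothWeight_sub_le hGRH
  refine ⟨B, hB, fun x q a hx hq ha hqx ↦ ?_⟩
  have : NeZero q := ⟨by lia⟩
  have hφ : (1 : ℝ) ≤ q.totient := mod_cast Nat.totient_pos.mpr hq
  have haq : IsUnit (a : ZMod q) := (ZMod.isUnit_iff_coprime a q).mpr ha
  have hsqrt : 2 ≤ √x := Real.le_sqrt_of_sq_le (by linarith)
  have hsq : √x * √x = x := Real.mul_self_sqrt (by linarith)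
  have hceil : 2 * x ≤ ⌈2 * x⌉₊ := Nat.le_ceil _
  have hshift (y : ℝ) (hy : |y| ≤ √x) : |y / q.totient| ≤ √x := by
    rw [abs_div, abs_of_pos (by linarith : (0 : ℝ) < q.totient)]
    exact (div_le_self (abs_nonneg _) hφ).trans hy
  have hupper := hsmooth q a x √x ⌈2 * x⌉₊ haq (by linarith) le_rfl (by nlinarith) (by linarith)
    (by nlinarith)
  have hlower := hsmooth q a (x - √x) √x ⌈2 * x⌉₊ haq (by nlinarith)
    (Real.sqrt_le_sqrt (by linarith)) (by nlinarith) (by nlinarith) (by linarith)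
  have hle := psi_le_sum_smoothWeight (x := x) (M := ⌈2 * x⌉₊) (by linarith : 0 < √x)
    (by linarith) q a
  have hge := sum_smoothWeight_le_psi (x := x - √x) (Real.sqrt_nonneg x) q a ⌈2 * x⌉₊
  have hmono : B * (√(x - √x) * Real.log (4 * (x - √x)) ^ 2)
      ≤ B * (√x * Real.log (4 * x) ^ 2) := by
    have : 0 ≤ Real.log (4 * (x - √x)) := Real.log_nonneg (by nlinarith)
    gcongr <;> nlinarith
  have hshift_upper := abs_le.mp (hshift (√x / 2 - 1) (abs_le.mpr ⟨by linarith, by linarith⟩))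
  have hshift_lower := abs_le.mp (hshift (-√x / 2 - 1) (abs_le.mpr ⟨by linarith, by linarith⟩))
  rw [show (x + √x / 2 - 1) / q.totient = x / q.totient + (√x / 2 - 1) / q.totient by ring,
    abs_le] at hupper
  rw [show (x - √x + √x / 2 - 1) / q.totient = x / q.totient + (-√x / 2 - 1) / q.totient by ring,
    abs_le] at hlower
  rw [sub_add_cancel] at hge
  rw [abs_le]
  constructor <;> linarith [hupper.2, hlower.1, hshift_upper.2, hshift_lower.1]

theorem exists_abs_psi_sub_le (hGRH : GRH) :
    ∃ B : ℝ, 0 < B ∧ ∀ (x : ℝ) (q a : ℕ), 2 ≤ x → 1 ≤ q → a.Coprime q → q ≤ x →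
      |psi x q a - x / q.totient| ≤ B * (√x * Real.log x ^ 2) := by
  obtain ⟨B, hB, hlarge⟩ := exists_abs_psi_sub_le_of_four_le hGRH
  refine ⟨9 * B + 36, by positivity, fun x q a hx hq ha hqx ↦ ?_⟩
  have hlog2 : Real.log 2 ≤ Real.log x := Real.log_le_log two_pos hx
  have hsqrt_le : √x ≤ √x * (3 * Real.log x ^ 2) :=
    le_mul_of_one_le_right (Real.sqrt_nonneg x) (by nlinarith [Real.log_two_gt_d9])
  have herr : √x * Real.log (4 * x) ^ 2 ≤ 9 * (√x * Real.log x ^ 2) := by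
    have hlog4 : Real.log (4 * x) ≤ 3 * Real.log x := by
      rw [Real.log_mul (by norm_num) (by linarith), show (4 : ℝ) = 2 ^ 2 by norm_num,
        Real.log_pow]
      push_cast
      linarith
    have : 0 ≤ Real.log (4 * x) := Real.log_nonneg (by linarith)
    calc √x * Real.log (4 * x) ^ 2 ≤ √x * (3 * Real.log x) ^ 2 := by gcongr
      _ = 9 * (√x * Real.log x ^ 2) := by ring
  rcases le_or_gt 4 x with hx₄ | hx₄
  · nlinarith [hlarge x q a hx₄ hq ha hqx, mul_le_mul_of_nonneg_left herr hB.le,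
      Real.sqrt_nonneg x]
  · have hsqrt : √x ≤ 2 := Real.sqrt_le_left (by norm_num) |>.mpr (by linarith)
    have hsmall := abs_psi_sub_le_six_mul (by linarith : 0 ≤ x) (Nat.totient_pos.mpr hq) a
    nlinarith [Real.mul_self_sqrt (by linarith : 0 ≤ x), Real.sqrt_nonneg x]

end PrimesInProgressions

/-! ### The sum of `μ² / φ` -/

section EulerProducts

open Filter Topology

lemma summable_of_summable_tsum_prime_pow {f : ℕ → ℝ} (hf : ∀ n, 0 ≤ f n) (hf₀ : f 0 = 0)
    (hf₁ : f 1 = 1) (hmul : ∀ {m n : ℕ}, m.Coprime n → f (m * n) = f m * f n)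
    (hpow : ∀ {p : ℕ}, p.Prime → Summable fun k : ℕ ↦ f (p ^ k))
    (hprime : Summable fun p : Nat.Primes ↦ ∑' k : ℕ, f ((p : ℕ) ^ (k + 1))) : Summable f := by
  refine summable_of_sum_range_le hf (c := Real.exp (∑' p : Nat.Primes,
    ∑' k : ℕ, f ((p : ℕ) ^ (k + 1)))) fun N ↦ ?_
  have hsmooth := (EulerProduct.summable_and_hasSum_smoothNumbers_prod_primesBelow_tsum hf₁ hmul
    (fun hp ↦ (hpow hp).norm) N).2
  have hmem : ∀ n ∈ (range N).erase 0, n ∈ N.smoothNumbers := fun n hn ↦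
    Nat.mem_smoothNumbers_of_lt (Nat.pos_of_ne_zero (ne_of_mem_erase hn))
      (mem_range.mp (mem_of_mem_erase hn))
  calc ∑ n ∈ range N, f n
      ≤ ∑' n : N.smoothNumbers, f n := by
        rw [← sum_erase (range N) hf₀, ← sum_subtype_of_mem f hmem]
        exact hsmooth.summable.sum_le_tsum _ fun _ _ ↦ hf _
    _ = ∏ p ∈ N.primesBelow, ∑' k : ℕ, f (p ^ k) := hsmooth.tsum_eq
    _ = ∏ p ∈ N.primesBelow, (1 + ∑' k : ℕ, f (p ^ (k + 1))) := prod_congr rfl fun p hp ↦ by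
        rw [(hpow (Nat.prime_of_mem_primesBelow hp)).tsum_eq_zero_add, pow_zero, hf₁]
    _ ≤ Real.exp (∑ p ∈ N.primesBelow, ∑' k : ℕ, f (p ^ (k + 1))) :=
        Real.prod_one_add_le_exp_sum _ fun p ↦ tsum_nonneg fun k ↦ hf _
    _ ≤ Real.exp (∑' p : Nat.Primes, ∑' k : ℕ, f ((p : ℕ) ^ (k + 1))) := by
        rw [Real.exp_le_exp,
          ← sum_subtype_of_mem (p := Nat.Prime) _ fun p hp ↦ Nat.prime_of_mem_primesBelow hp]
        exact hprime.sum_le_tsum (ι := Nat.Primes) _ fun p _ ↦ tsum_nonneg fun k ↦ hf _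

variable {ι : Type*}

lemma one_add_tsum_le_hasProd {x : ι → ℝ} {P : ℝ} (hx : ∀ i, 0 ≤ x i) (hsum : Summable x)
    (hP : HasProd (fun i ↦ 1 + x i) P) : 1 + ∑' i, x i ≤ P := by
  refine le_of_tendsto_of_tendsto' (hsum.hasSum.const_add 1) hP fun F ↦ ?_
  induction F using Finset.cons_induction with
  | empty => simp
  | cons i F hi ih =>
    rw [sum_cons, prod_cons]
    nlinarith [hx i, mul_le_mul_of_nonneg_left ih (hx i),
      mul_nonneg (hx i) (sum_nonneg fun j (_ : j ∈ F) ↦ hx j)]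

lemma hasProd_le_exp_tsum {x : ι → ℝ} {P : ℝ} (hx : ∀ i, 0 ≤ x i) (hsum : Summable x)
    (hP : HasProd (fun i ↦ 1 + x i) P) : P ≤ Real.exp (∑' i, x i) :=
  le_of_tendsto' hP fun F ↦ (Real.prod_one_add_le_exp_sum F hx).trans <|
    Real.exp_le_exp.mpr <| hsum.sum_le_tsum F fun i _ ↦ hx i

lemma tendsto_hasProd_sub_one_div {x : ℝ → ι → ℝ} {P : ℝ → ℝ} {T : ℝ}
    (hx : ∀ s > 0, ∀ i, 0 ≤ x s i) (hsum : ∀ s > 0, Summable (x s))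
    (hP : ∀ s > 0, HasProd (fun i ↦ 1 + x s i) (P s))
    (hT : Tendsto (fun s ↦ (∑' i, x s i) / s) (𝓝[>] 0) (𝓝 T)) :
    Tendsto (fun s ↦ (P s - 1) / s) (𝓝[>] 0) (𝓝 T) := by
  set X : ℝ → ℝ := fun s ↦ ∑' i, x s i
  have hs0 : Tendsto (fun s : ℝ ↦ s) (𝓝[>] 0) (𝓝 0) := nhdsWithin_le_nhds
  have hX : Tendsto X (𝓝[>] 0) (𝓝 0) := by
    have h := hT.mul hs0
    rw [mul_zero] at h
    refine h.congr' ?_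
    filter_upwards [self_mem_nhdsWithin] with s hs using div_mul_cancel₀ _ (ne_of_gt hs)
  have hupper : Tendsto (fun s ↦ X s / s + X s / s * X s) (𝓝[>] 0) (𝓝 T) := by
    simpa using hT.add (hT.mul hX)
  refine tendsto_of_tendsto_of_tendsto_of_le_of_le' hT hupper ?_ ?_
  · filter_upwards [self_mem_nhdsWithin] with s (hs : 0 < s)
    have := one_add_tsum_le_hasProd (hx s hs) (hsum s hs) (hP s hs)
    gcongr
    linarith
  · filter_upwards [self_mem_nhdsWithin, hX.eventually_lt_const one_pos] with s (hs : 0 < s) hs1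
    have hX0 : 0 ≤ X s := tsum_nonneg (hx s hs)
    have hPs := hasProd_le_exp_tsum (hx s hs) (hsum s hs) (hP s hs)
    have hexp := Real.abs_exp_sub_one_sub_id_le (abs_le.mpr ⟨by linarith, hs1.le⟩)
    rw [show X s / s + X s / s * X s = (X s + X s ^ 2) / s by ring]
    gcongr
    linarith [(abs_le.mp hexp).2]

lemma abs_rpow_neg_sub_one_le {ν s : ℝ} (hν : 1 ≤ ν) (hs : 0 ≤ s) :
    |ν ^ (-s) - 1| ≤ s * Real.log ν := by
  have hle : ν ^ (-s) ≤ 1 := Real.rpow_le_one_of_one_le_of_nonpos hν (by linarith)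
  have hexp := Real.add_one_le_exp (Real.log ν * -s)
  rw [← Real.rpow_def_of_pos (by linarith)] at hexp
  rw [abs_of_nonpos (by linarith)]
  linarith

variable {c ν : ι → ℝ}

lemma summable_mul_rpow_neg (hν : ∀ i, c i ≠ 0 → 1 ≤ ν i) (hc : Summable c) {s : ℝ}
    (hs : 0 ≤ s) : Summable fun i ↦ c i * ν i ^ (-s) := by
  refine Summable.of_norm_bounded hc.norm fun i ↦ ?_
  by_cases h : c i = 0
  · simp [h]
  have hνi := hν i h
  rw [norm_mul, Real.norm_of_nonneg (Real.rpow_nonneg (by linarith) _)]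
  exact mul_le_of_le_one_right (norm_nonneg _)
    (Real.rpow_le_one_of_one_le_of_nonpos hνi (by linarith))

lemma tendsto_tsum_mul_rpow_neg_sub_div (hν : ∀ i, c i ≠ 0 → 1 ≤ ν i) (hc : Summable c)
    (hlog : Summable fun i ↦ c i * Real.log (ν i)) :
    Tendsto (fun s : ℝ ↦ (∑' i, c i * ν i ^ (-s) - ∑' i, c i) / s) (𝓝[>] 0)
      (𝓝 (-∑' i, c i * Real.log (ν i))) := by
  rw [← tsum_neg]
  refine Tendsto.congr' ?_ (tendsto_tsum_of_dominated_convergence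
    (f := fun s i ↦ c i * ((ν i ^ (-s) - 1) / s)) hlog.norm (fun i ↦ ?_) ?_)
  · filter_upwards [self_mem_nhdsWithin] with s (hs : 0 < s)
    rw [← (summable_mul_rpow_neg hν hc hs.le).tsum_sub hc, ← tsum_div_const]
    exact tsum_congr fun i ↦ by ring
  · by_cases h : c i = 0
    · simp [h]
    have hderiv : HasDerivAt (fun s : ℝ ↦ ν i ^ (-s)) (-Real.log (ν i)) 0 := by
      simpa using (hasDerivAt_neg (0 : ℝ)).const_rpow (by linarith [hν i h] : 0 < ν i)
    rw [← mul_neg]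
    refine Tendsto.const_mul _ ?_
    simpa [slope_fun_def_field] using
      (hasDerivWithinAt_iff_tendsto_slope' (by simp)).mp (hderiv.hasDerivWithinAt (s := Set.Ioi 0))
  · filter_upwards [self_mem_nhdsWithin] with s (hs : 0 < s) i
    by_cases h : c i = 0
    · simp [h]
    rw [norm_mul, norm_mul, norm_div, Real.norm_of_nonneg hs.le,
      Real.norm_of_nonneg (Real.log_nonneg (hν i h))]
    gcongr
    rw [div_le_iff₀' hs]
    exact abs_rpow_neg_sub_one_le (hν i h) hs.le

end EulerProducts

section HarmonicSums

/-- The error term `E(Y)` in `∑_{l ≤ Y} 1/l = log Y + γ + E(Y)`. It is also used for `Y < 1`, where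
the sum is empty and `E(Y) = -log Y - γ`. -/
noncomputable def harmonicError (Y : ℝ) : ℝ :=
  (harmonic ⌊Y⌋₊ : ℝ) - Real.log Y - Real.eulerMascheroniConstant

lemma abs_harmonicError_le_of_one_le {Y : ℝ} (hY : 1 ≤ Y) : |harmonicError Y| ≤ 2 / Y := by
  set n := ⌊Y⌋₊
  have hn1 : 1 ≤ n := (Nat.one_le_floor_iff Y).mpr hY
  have hnY : (n : ℝ) ≤ Y := Nat.floor_le (by linarith)
  have hYn : Y < n + 1 := Nat.lt_floor_add_one Y
  have hnR : (1 : ℝ) ≤ n := by exact_mod_cast hn1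
  have hlower := Real.eulerMascheroniSeq_lt_eulerMascheroniConstant n
  have hupper := Real.eulerMascheroniConstant_lt_eulerMascheroniSeq' n
  rw [Real.eulerMascheroniSeq] at hlower
  rw [Real.eulerMascheroniSeq', if_neg (by lia)] at hupper
  have hlog_n : Real.log n ≤ Real.log Y := Real.log_le_log (by linarith) hnY
  have hlog_succ : Real.log Y ≤ Real.log (n + 1) := Real.log_le_log (by linarith) hYn.le
  have hgap : Real.log (n + 1) - Real.log n ≤ 1 / n := by
    rw [← Real.log_div (by positivity) (by positivity)]
    refine (Real.log_le_sub_one_of_pos (by positivity)).trans (le_of_eq ?_)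
    field_simp
    ring
  have hinv : 1 / (n : ℝ) ≤ 2 / Y := by
    rw [div_le_div_iff₀ (by linarith) (by linarith)]
    linarith
  rw [harmonicError, abs_le]
  constructor <;> linarith

lemma abs_harmonicError_sq_le_of_lt_one {z : ℝ} (hz : 0 < z) (hz1 : z < 1) :
    |harmonicError (z ^ 2)| ≤ 5 / √z := by
  have hs : 0 < √z := Real.sqrt_pos.mpr hz
  have hs1 : √z ≤ 1 := Real.sqrt_le_one.mpr hz1.le
  have hfloor : ⌊z ^ 2⌋₊ = 0 := Nat.floor_eq_zero.mpr (by nlinarith)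
  have hlog : Real.log (z ^ 2) = 4 * Real.log √z := by
    rw [Real.log_sqrt hz.le, Real.log_pow]
    push_cast
    ring
  have hlog_inv : Real.log (√z)⁻¹ ≤ (√z)⁻¹ - 1 := Real.log_le_sub_one_of_pos (by positivity)
  rw [Real.log_inv] at hlog_inv
  have hlog_nonpos : Real.log √z ≤ 0 := Real.log_nonpos hs.le hs1
  have hγ := Real.one_half_lt_eulerMascheroniConstant
  have hγ' := Real.eulerMascheroniConstant_lt_two_thirds
  rw [harmonicError, hfloor, hlog, div_eq_mul_inv, harmonic_zero, Rat.cast_zero, abs_le]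
  constructor <;> linarith

lemma abs_harmonicError_sq_le {z : ℝ} (hz : 0 < z) :
    |harmonicError (z ^ 2)| ≤ 15 / (√z * ((1 + z) * √(1 + z))) := by
  have hs : 0 < √z := Real.sqrt_pos.mpr hz
  have : 0 < √(1 + z) := Real.sqrt_pos.mpr (by linarith)
  have hsq := Real.sq_sqrt hz.le
  rcases le_or_gt 1 z with h1 | h1
  · have hsqrt : √(1 + z) ≤ 2 * √z := Real.sqrt_le_iff.mpr ⟨by positivity, by nlinarith⟩
    refine (abs_harmonicError_le_of_one_le (by nlinarith)).trans ?_
    rw [div_le_div_iff₀ (by positivity) (by positivity)]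
    calc 2 * (√z * ((1 + z) * √(1 + z)))
        ≤ 2 * (√z * ((1 + z) * (2 * √z))) := by gcongr
      _ = 4 * (√z ^ 2 * (1 + z)) := by ring
      _ ≤ 15 * z ^ 2 := by rw [hsq]; nlinarith
  · have hsqrt : √(1 + z) ≤ 3 / 2 := Real.sqrt_le_iff.mpr ⟨by norm_num, by linarith⟩
    have hprod : (1 + z) * √(1 + z) ≤ 2 * (3 / 2) := by gcongr; linarith
    refine (abs_harmonicError_sq_le_of_lt_one hz h1).trans ?_
    rw [div_le_div_iff₀ (by positivity) (by positivity)]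
    nlinarith

lemma one_div_mul_sqrt_le {u : ℝ} (hu : 1 < u) :
    1 / (u * √u) ≤ 2 * (1 / √(u - 1) - 1 / √u) := by
  have : 0 < √u := Real.sqrt_pos.mpr (by linarith)
  have : 0 < √(u - 1) := Real.sqrt_pos.mpr (by linarith)
  have hu_sq := Real.mul_self_sqrt (show 0 ≤ u by linarith)
  have hle : √(u - 1) ≤ √u := Real.sqrt_le_sqrt (by linarith)
  have hconj : (√u - √(u - 1)) * (√u + √(u - 1)) = 1 := by
    nlinarith [Real.mul_self_sqrt (show 0 ≤ u - 1 by linarith)]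
  calc 1 / (u * √u) = 2 * (1 / ((√u * √u) * (√u + √u))) := by
        rw [hu_sq]
        field_simp
        norm_num
    _ ≤ 2 * (1 / ((√(u - 1) * √u) * (√u + √(u - 1)))) := by gcongr
    _ = 2 * (1 / √(u - 1) - 1 / √u) := by
        field_simp
        linarith

lemma one_div_sq_mul_abs_harmonicError_le {B : ℝ} (hB : 0 < B) {b : ℕ} (hb : 1 ≤ b) :
    1 / (b : ℝ) ^ 2 * |harmonicError (B ^ 2 / (b : ℝ) ^ 2)|
      ≤ 30 / √B * (1 / √(b + B - 1) - 1 / √(b + B)) := by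
  have hb1 : (1 : ℝ) ≤ b := by exact_mod_cast hb
  have : 0 < √(b : ℝ) := Real.sqrt_pos.mpr (by linarith)
  have : 0 < √B := Real.sqrt_pos.mpr hB
  have : 0 < √(b + B) := Real.sqrt_pos.mpr (by linarith)
  calc 1 / (b : ℝ) ^ 2 * |harmonicError (B ^ 2 / (b : ℝ) ^ 2)|
      ≤ 1 / (b : ℝ) ^ 2 * (15 / (√(B / b) * ((1 + B / b) * √(1 + B / b)))) := by
        rw [← div_pow]
        gcongr
        exact abs_harmonicError_sq_le (by positivity)
    _ = 15 / √B * (1 / ((b + B) * √(b + B))) := by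
        rw [show 1 + B / b = (b + B) / b by field_simp, Real.sqrt_div hB.le,
          Real.sqrt_div (by linarith)]
        field_simp
        rw [Real.sq_sqrt (by linarith)]
    _ ≤ 15 / √B * (2 * (1 / √(b + B - 1) - 1 / √(b + B))) := by
        gcongr
        exact one_div_mul_sqrt_le (by linarith)
    _ = _ := by ring

lemma sum_one_div_sq_mul_abs_harmonicError_le {B : ℝ} (hB : 0 < B) (n : ℕ) :
    ∑ b ∈ Icc 1 n, 1 / (b : ℝ) ^ 2 * |harmonicError (B ^ 2 / (b : ℝ) ^ 2)| ≤ 30 / B := by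
  have htelescope : ∑ b ∈ Icc 1 n, 1 / (b : ℝ) ^ 2 * |harmonicError (B ^ 2 / (b : ℝ) ^ 2)|
      ≤ 30 / √B * (1 / √B - 1 / √(n + B)) := by
    induction n with
    | zero => simp
    | succ n ih =>
      have hterm := one_div_sq_mul_abs_harmonicError_le hB n.succ_pos
      rw [Nat.succ_eq_add_one, show ((n + 1 : ℕ) : ℝ) + B - 1 = n + B by push_cast; ring] at hterm
      rw [sum_Icc_succ_top (by lia)]
      linarith
  calc _ ≤ 30 / √B * (1 / √B - 1 / √(n + B)) := htelescope
    _ ≤ 30 / √B * (1 / √B) := by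
        gcongr
        exact sub_le_self _ (by positivity)
    _ = 30 / B := by rw [div_mul_div_comm, mul_one, Real.mul_self_sqrt hB.le]

end HarmonicSums

section ArithmeticFunctions

open Nat (Coprime)

lemma mul_apply_prime_pow {R : Type*} [Semiring R] (f g : ArithmeticFunction R) {p : ℕ}
    (hp : p.Prime) (k : ℕ) :
    (f * g) (p ^ k) = ∑ i ∈ range (k + 1), f (p ^ i) * g (p ^ (k - i)) := by
  rw [mul_apply, Nat.sum_divisorsAntidiagonal fun a b ↦ f a * g b, Nat.sum_divisors_prime_pow hp]
  refine sum_congr rfl fun i hi ↦ ?_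
  rw [Nat.pow_div (Nat.lt_succ_iff.mp (mem_range.mp hi)) hp.pos]

lemma mul_apply_nonneg {f g : ArithmeticFunction ℝ} (hf : ∀ n, 0 ≤ f n) (hg : ∀ n, 0 ≤ g n)
    (n : ℕ) : 0 ≤ (f * g) n := by
  rw [mul_apply]
  exact sum_nonneg fun x _ ↦ mul_nonneg (hf _) (hg _)

lemma abs_le_of_forall_abs_prime_pow_le {f g : ArithmeticFunction ℝ} (hf : f.IsMultiplicative)
    (hg : g.IsMultiplicative) (h : ∀ p k : ℕ, p.Prime → |f (p ^ k)| ≤ g (p ^ k)) (n : ℕ) :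
    |f n| ≤ g n := by
  rcases eq_or_ne n 0 with rfl | hn
  · simp
  rw [hf.multiplicative_factorization f hn, hg.multiplicative_factorization g hn, Finsupp.prod,
    Finsupp.prod, abs_prod]
  exact prod_le_prod (fun _ _ ↦ abs_nonneg _) fun p hp ↦
    h p _ (Nat.prime_of_mem_primeFactors hp)

lemma sum_mul_apply_mul_le {f g : ArithmeticFunction ℝ} {F : ℕ → ℝ} (hf : ∀ n, 0 ≤ f n)
    (hg : ∀ n, 0 ≤ g n) (hF : ∀ n, 0 ≤ F n) (N : ℕ) :
    ∑ n ∈ Icc 1 N, (f * g) n * F n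
      ≤ ∑ a ∈ Icc 1 N, f a * ∑ b ∈ Icc 1 N, g b * F (a * b) := by
  calc ∑ n ∈ Icc 1 N, (f * g) n * F n
      = ∑ n ∈ Icc 1 N, ∑ x ∈ Icc 1 N ×ˢ Icc 1 N with x.1 * x.2 = n,
          f x.1 * (g x.2 * F (x.1 * x.2)) := by
        refine sum_congr rfl fun n hn ↦ ?_
        rw [mem_Icc] at hn
        rw [mul_apply, Nat.divisorsAntidiagonal_eq_prod_filter_of_le (by lia) hn.2, sum_mul]
        refine sum_congr rfl fun x hx ↦ ?_
        rw [(mem_filter.mp hx).2, mul_assoc]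
    _ ≤ ∑ x ∈ Icc 1 N ×ˢ Icc 1 N, f x.1 * (g x.2 * F (x.1 * x.2)) :=
        sum_fiberwise_le_sum_of_sum_fiber_nonneg fun n _ ↦ sum_nonneg fun x _ ↦
          mul_nonneg (hf _) (mul_nonneg (hg _) (hF _))
    _ = _ := by
        rw [sum_product]
        simp only [mul_sum]

/-- The arithmetic function carried by the squares with value `f m` at `m ^ 2`, i.e. the one with
Dirichlet series `∑ f(m) m^(-2 * s)`. -/
noncomputable def onSquares (f : ArithmeticFunction ℝ) : ArithmeticFunction ℝ :=
  ⟨fun n ↦ if IsSquare n then f n.sqrt else 0, by simp⟩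

lemma onSquares_sq (f : ArithmeticFunction ℝ) (m : ℕ) : onSquares f (m ^ 2) = f m := by
  simp [onSquares, Nat.sqrt_eq', IsSquare.sq]

lemma onSquares_eq_zero (f : ArithmeticFunction ℝ) {n : ℕ} (hn : ¬ IsSquare n) :
    onSquares f n = 0 := if_neg hn

lemma onSquares_nonneg {f : ArithmeticFunction ℝ} (hf : ∀ n, 0 ≤ f n) (n : ℕ) :
    0 ≤ onSquares f n := by
  by_cases hn : IsSquare n
  · obtain ⟨m, rfl⟩ := hn
    rw [← sq, onSquares_sq]
    exact hf m
  · rw [onSquares_eq_zero f hn]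

lemma isMultiplicative_onSquares {f : ArithmeticFunction ℝ} (hf : f.IsMultiplicative) :
    (onSquares f).IsMultiplicative := by
  refine ⟨by rw [← one_pow 2, onSquares_sq, hf.map_one], fun {m n} hmn ↦ ?_⟩
  by_cases h : IsSquare (m * n)
  · obtain ⟨k, hk⟩ := h
    rw [← sq] at hk
    obtain ⟨a, ha⟩ := exists_eq_pow_of_mul_eq_pow (Nat.isUnit_iff.mpr hmn) hk
    obtain ⟨b, hb⟩ := exists_eq_pow_of_mul_eq_pow
      (Nat.isUnit_iff.mpr hmn.symm) ((mul_comm n m).trans hk)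
    rw [ha, hb] at hmn ⊢
    rw [← mul_pow, onSquares_sq, onSquares_sq, onSquares_sq, hf.map_mul_of_coprime]
    exact (Nat.coprime_pow_left_iff two_pos _ _).mp
      ((Nat.coprime_pow_right_iff two_pos _ _).mp hmn)
  · rw [onSquares_eq_zero f h]
    by_cases hm : IsSquare m
    · rw [onSquares_eq_zero f fun hn ↦ h (hm.mul hn), mul_zero]
    · rw [onSquares_eq_zero f hm, zero_mul]

lemma sum_onSquares_mul_le {f : ArithmeticFunction ℝ} {F : ℕ → ℝ} (hf : ∀ n, 0 ≤ f n)
    (hF : ∀ n, 0 ≤ F n) (N : ℕ) :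
    ∑ n ∈ Icc 1 N, onSquares f n * F n ≤ ∑ m ∈ Icc 1 N, f m * F (m ^ 2) := by
  calc ∑ n ∈ Icc 1 N, onSquares f n * F n
      ≤ ∑ n ∈ (Icc 1 N).image (· ^ 2), onSquares f n * F n := by
        rw [← sum_filter_of_ne (p := IsSquare) fun n _ hn ↦
          not_not.mp fun h ↦ hn (by rw [onSquares_eq_zero f h, zero_mul])]
        refine sum_le_sum_of_subset_of_nonneg (fun n hn ↦ ?_) fun n _ _ ↦
          mul_nonneg (onSquares_nonneg hf n) (hF n)
        obtain ⟨hn, m, rfl⟩ := mem_filter.mp hn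
        rw [mem_Icc] at hn
        refine mem_image.mpr ⟨m, mem_Icc.mpr ⟨?_, ?_⟩, sq m⟩ <;> nlinarith
    _ = ∑ m ∈ Icc 1 N, f m * F (m ^ 2) := by
        rw [sum_image fun a _ b _ h ↦ Nat.pow_left_injective two_ne_zero h]
        simp only [onSquares_sq]

end ArithmeticFunctions

section SquarefreeTotient

/-- The weights `μ(n)² / φ(n)` in the definition of `lamR`. -/
noncomputable def sqfreeInvTotient : ArithmeticFunction ℝ :=
  ⟨fun n ↦ (moebius n : ℝ) ^ 2 / n.totient, by simp⟩

/-- The arithmetic function `n ↦ 1 / n ^ k` for `n ≠ 0`. -/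
noncomputable def invPow (k : ℕ) : ArithmeticFunction ℝ :=
  (zeta : ArithmeticFunction ℝ).pdiv (pow k : ArithmeticFunction ℕ)

/-- The Dirichlet quotient of `μ(n)² / φ(n)` by `1 / n`. Its value is `1 / (p (p - 1))` at `p`,
`-1 / (p (p - 1))` at `p ^ 2`, and `0` at higher powers of `p`. -/
noncomputable def invTotientCorrection : ArithmeticFunction ℝ :=
  sqfreeInvTotient * (moebius : ArithmeticFunction ℝ).pdiv (pow 1 : ArithmeticFunction ℕ)

/-- The function `1 / (b φ(b))`, encoded by its expansion as the Dirichlet convolution of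
`μ(c)² / (c² φ(c))` and `1 / m²`. -/
noncomputable def invMulTotient : ArithmeticFunction ℝ :=
  sqfreeInvTotient.pdiv (pow 2 : ArithmeticFunction ℕ) * invPow 2

/-- A multiplicative majorant of `|invTotientCorrection|`: writing `d = a b²`, it collects
the products of `μ(a)² / (a φ(a))` and `1 / (b φ(b))`. -/
noncomputable def invTotientMajorant : ArithmeticFunction ℝ :=
  sqfreeInvTotient.pdiv (pow 1 : ArithmeticFunction ℕ) * onSquares invMulTotient

lemma pdiv_pow_apply (f : ArithmeticFunction ℝ) {k : ℕ} (hk : k ≠ 0) (n : ℕ) :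
    f.pdiv (pow k : ArithmeticFunction ℕ) n = f n / (n : ℝ) ^ k := by
  simp [pdiv_apply, pow_apply, hk]

lemma invPow_apply {k : ℕ} (hk : k ≠ 0) (n : ℕ) : invPow k n = 1 / (n : ℝ) ^ k := by
  rcases eq_or_ne n 0 with rfl | hn
  · simp [hk]
  · simp [invPow, pdiv_pow_apply _ hk, hn]

lemma sqfreeInvTotient_apply (n : ℕ) :
    sqfreeInvTotient n = (moebius n : ℝ) ^ 2 / n.totient := rfl

lemma sqfreeInvTotient_nonneg (n : ℕ) : 0 ≤ sqfreeInvTotient n := by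
  rw [sqfreeInvTotient_apply]
  positivity

lemma isMultiplicative_sqfreeInvTotient : sqfreeInvTotient.IsMultiplicative := by
  refine ⟨by simp [sqfreeInvTotient_apply], fun {m n} hmn ↦ ?_⟩
  simp only [sqfreeInvTotient_apply, Nat.totient_mul hmn,
    isMultiplicative_moebius.map_mul_of_coprime hmn]
  push_cast
  ring

lemma sqfreeInvTotient_prime {p : ℕ} (hp : p.Prime) :
    sqfreeInvTotient p = 1 / ((p : ℝ) - 1) := by
  rw [sqfreeInvTotient_apply, moebius_apply_prime hp, Nat.totient_prime hp,
    Nat.cast_sub hp.one_le]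
  simp

lemma sqfreeInvTotient_prime_pow {p k : ℕ} (hp : p.Prime) (hk : 2 ≤ k) :
    sqfreeInvTotient (p ^ k) = 0 := by
  rw [sqfreeInvTotient_apply, moebius_apply_prime_pow hp (by lia), if_neg (by lia)]
  simp

lemma isMultiplicative_pdiv_pow {f : ArithmeticFunction ℝ} (hf : f.IsMultiplicative) (k : ℕ) :
    (f.pdiv (pow k : ArithmeticFunction ℕ)).IsMultiplicative :=
  hf.pdiv isMultiplicative_pow.natCast

lemma isMultiplicative_invTotientCorrection : invTotientCorrection.IsMultiplicative :=
  isMultiplicative_sqfreeInvTotient.mul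
    (isMultiplicative_pdiv_pow isMultiplicative_moebius.intCast 1)

lemma invTotientCorrection_mul_invPow_one :
    invTotientCorrection * invPow 1 = sqfreeInvTotient := by
  suffices (moebius : ArithmeticFunction ℝ).pdiv (pow 1 : ArithmeticFunction ℕ) * invPow 1 = 1 by
    rw [invTotientCorrection, mul_assoc, this, mul_one]
  ext n
  have hinv := congrArg (· n) (coe_moebius_mul_coe_zeta (R := ℝ))
  simp only [mul_apply] at hinv ⊢
  have hone : (1 : ArithmeticFunction ℝ) n = (1 : ArithmeticFunction ℝ) n / n := by
    rcases eq_or_ne n 1 with rfl | hn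
    · simp
    · simp [one_apply_ne hn]
  rw [hone, ← hinv, sum_div]
  refine sum_congr rfl fun x hx ↦ ?_
  have hx2 : x.2 ≠ 0 := Nat.ne_zero_of_mem_divisorsAntidiagonal hx |>.2
  rw [pdiv_pow_apply _ one_ne_zero, invPow_apply one_ne_zero,
    ← (Nat.mem_divisorsAntidiagonal.mp hx).1]
  simp [hx2, div_eq_mul_inv, mul_assoc, mul_comm, mul_left_comm]

lemma invTotientCorrection_prime_pow_succ {p : ℕ} (hp : p.Prime) (k : ℕ) :
    invTotientCorrection (p ^ (k + 1))
      = (moebius (p ^ (k + 1)) : ℝ) / (p : ℝ) ^ (k + 1)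
        + 1 / ((p : ℝ) - 1) * ((moebius (p ^ k) : ℝ) / (p : ℝ) ^ k) := by
  rw [invTotientCorrection, mul_apply_prime_pow _ _ hp, sum_range_succ', sum_range_succ',
    sum_eq_zero fun i _ ↦ by rw [sqfreeInvTotient_prime_pow hp (by lia), zero_mul]]
  simp [sqfreeInvTotient_prime hp, isMultiplicative_sqfreeInvTotient.map_one, add_comm]

lemma invTotientCorrection_prime {p : ℕ} (hp : p.Prime) :
    invTotientCorrection p = 1 / ((p : ℝ) * (p - 1)) := by
  have hp1 : (1 : ℝ) < p := by exact_mod_cast hp.one_lt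
  have : (p : ℝ) - 1 ≠ 0 := by linarith
  have h := invTotientCorrection_prime_pow_succ hp 0
  simp only [zero_add, pow_one, pow_zero, moebius_apply_prime hp, moebius_apply_one] at h
  rw [h]
  push_cast
  field_simp
  ring

lemma invTotientCorrection_prime_sq {p : ℕ} (hp : p.Prime) :
    invTotientCorrection (p ^ 2) = -(1 / ((p : ℝ) * (p - 1))) := by
  have hp1 : (1 : ℝ) < p := by exact_mod_cast hp.one_lt
  have : (p : ℝ) - 1 ≠ 0 := by linarith
  rw [invTotientCorrection_prime_pow_succ hp 1, moebius_apply_prime_pow hp (by lia),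
    if_neg (by lia), pow_one, moebius_apply_prime hp]
  push_cast
  field_simp
  ring

lemma invTotientCorrection_prime_pow {p k : ℕ} (hp : p.Prime) (hk : 3 ≤ k) :
    invTotientCorrection (p ^ k) = 0 := by
  obtain ⟨j, rfl⟩ : ∃ j, k = j + 1 := ⟨k - 1, by lia⟩
  rw [invTotientCorrection_prime_pow_succ hp, moebius_apply_prime_pow hp (by lia),
    moebius_apply_prime_pow hp (by lia), if_neg (by lia), if_neg (by lia)]
  simp

lemma sqfreeInvTotient_pdiv_nonneg (k n : ℕ) :
    0 ≤ sqfreeInvTotient.pdiv (pow k : ArithmeticFunction ℕ) n := by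
  rw [pdiv_apply, natCoe_apply]
  exact div_nonneg (sqfreeInvTotient_nonneg n) (Nat.cast_nonneg _)

lemma invPow_nonneg (k n : ℕ) : 0 ≤ invPow k n := by
  rw [invPow, pdiv_apply, natCoe_apply, natCoe_apply]
  positivity

lemma invMulTotient_nonneg (n : ℕ) : 0 ≤ invMulTotient n :=
  mul_apply_nonneg (sqfreeInvTotient_pdiv_nonneg 2) (invPow_nonneg 2) n

lemma invTotientMajorant_nonneg (n : ℕ) : 0 ≤ invTotientMajorant n :=
  mul_apply_nonneg (sqfreeInvTotient_pdiv_nonneg 1) (onSquares_nonneg invMulTotient_nonneg) n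

lemma isMultiplicative_invMulTotient : invMulTotient.IsMultiplicative :=
  (isMultiplicative_pdiv_pow isMultiplicative_sqfreeInvTotient 2).mul
    (isMultiplicative_pdiv_pow isMultiplicative_zeta.natCast 2)

lemma isMultiplicative_invTotientMajorant : invTotientMajorant.IsMultiplicative :=
  (isMultiplicative_pdiv_pow isMultiplicative_sqfreeInvTotient 1).mul
    (isMultiplicative_onSquares isMultiplicative_invMulTotient)

lemma invMulTotient_prime {p : ℕ} (hp : p.Prime) :
    invMulTotient p = 1 / ((p : ℝ) * (p - 1)) := by
  have hp1 : (1 : ℝ) < p := by exact_mod_cast hp.one_lt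
  have : (p : ℝ) - 1 ≠ 0 := by linarith
  have h := mul_apply_prime_pow (sqfreeInvTotient.pdiv (pow 2 : ArithmeticFunction ℕ)) (invPow 2)
    hp 1
  simp only [pow_one, sum_range_succ, range_one, sum_singleton, pow_zero, tsub_zero, tsub_self,
    pdiv_pow_apply _ two_ne_zero, invPow_apply two_ne_zero, sqfreeInvTotient_prime hp,
    isMultiplicative_sqfreeInvTotient.map_one, Nat.cast_one, one_pow] at h
  rw [invMulTotient, h]
  field_simp
  ring

lemma le_invTotientMajorant {p i k : ℕ} (hp : p.Prime) (hi : i ≤ k) :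
    sqfreeInvTotient.pdiv (pow 1 : ArithmeticFunction ℕ) (p ^ i)
      * onSquares invMulTotient (p ^ (k - i))
      ≤ invTotientMajorant (p ^ k) := by
  rw [invTotientMajorant, mul_apply_prime_pow _ _ hp]
  exact single_le_sum (f := fun i ↦ sqfreeInvTotient.pdiv (pow 1 : ArithmeticFunction ℕ) (p ^ i)
      * onSquares invMulTotient (p ^ (k - i)))
    (fun i _ ↦ mul_nonneg (sqfreeInvTotient_pdiv_nonneg 1 _)
      (onSquares_nonneg invMulTotient_nonneg _))
    (mem_range.mpr (Nat.lt_succ_of_le hi))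

lemma abs_invTotientCorrection_le (n : ℕ) : |invTotientCorrection n| ≤ invTotientMajorant n := by
  refine abs_le_of_forall_abs_prime_pow_le isMultiplicative_invTotientCorrection
    isMultiplicative_invTotientMajorant (fun p k hp ↦ ?_) n
  have hp1 : (1 : ℝ) < p := by exact_mod_cast hp.one_lt
  have hnonneg : 0 ≤ 1 / ((p : ℝ) * (p - 1)) :=
    one_div_nonneg.mpr (mul_nonneg (by linarith) (by linarith))
  have hsq_one : onSquares invMulTotient 1 = 1 :=
    (isMultiplicative_onSquares isMultiplicative_invMulTotient).map_one
  obtain rfl | rfl | rfl | hk : k = 0 ∨ k = 1 ∨ k = 2 ∨ 3 ≤ k := by lia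
  · rw [pow_zero, isMultiplicative_invTotientCorrection.map_one,
      isMultiplicative_invTotientMajorant.map_one, abs_one]
  · refine le_of_eq_of_le ?_ (le_invTotientMajorant hp le_rfl)
    rw [pow_one, invTotientCorrection_prime hp, abs_of_nonneg hnonneg, pdiv_pow_apply _ one_ne_zero,
      sqfreeInvTotient_prime hp, tsub_self, pow_zero, hsq_one, mul_one, pow_one, div_div, mul_comm]
  · refine le_of_eq_of_le ?_ (le_invTotientMajorant hp (Nat.zero_le 2))
    rw [pow_zero, invTotientCorrection_prime_sq hp, abs_neg, abs_of_nonneg hnonneg,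
      pdiv_pow_apply _ one_ne_zero, isMultiplicative_sqfreeInvTotient.map_one, tsub_zero,
      onSquares_sq, invMulTotient_prime hp]
    simp
  · rw [invTotientCorrection_prime_pow hp hk, abs_zero]
    exact invTotientMajorant_nonneg _

end SquarefreeTotient

section CorrectionSums

open Filter Topology

lemma summable_of_summable_prime_add_prime_sq {f : ℕ → ℝ} (hf : ∀ n, 0 ≤ f n) (hf₀ : f 0 = 0)
    (hf₁ : f 1 = 1) (hmul : ∀ {m n : ℕ}, m.Coprime n → f (m * n) = f m * f n)
    (hcube : ∀ {p k : ℕ}, p.Prime → 3 ≤ k → f (p ^ k) = 0)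
    (hprime : Summable fun p : Nat.Primes ↦ f p + f ((p : ℕ) ^ 2)) : Summable f := by
  refine summable_of_summable_tsum_prime_pow hf hf₀ hf₁ hmul (fun hp ↦ ?_) ?_
  · refine summable_of_ne_finset_zero (s := range 3) fun k hk ↦ hcube hp ?_
    simpa using hk
  · refine hprime.congr fun p ↦ ?_
    rw [tsum_eq_sum (s := range 2) fun k hk ↦ hcube p.prop ?_]
    · simp [sum_range_succ]
    · rw [mem_range] at hk
      lia

lemma one_div_mul_sub_one_le {p : ℕ} (hp : p.Prime) :
    1 / ((p : ℝ) * (p - 1)) ≤ 2 / (p : ℝ) ^ 2 := by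
  have hp2 : (2 : ℝ) ≤ p := by exact_mod_cast hp.two_le
  rw [div_le_div_iff₀ (mul_pos (by linarith) (by linarith)) (by positivity)]
  nlinarith

lemma summable_primes_mul_rpow_neg_three_halves (C : ℝ) :
    Summable fun p : Nat.Primes ↦ C * (p : ℝ) ^ (-(3 / 2) : ℝ) :=
  ((Real.summable_nat_rpow.mpr (by norm_num)).comp_injective
    Nat.Primes.coe_nat_injective).mul_left C

lemma summable_sqfreeInvTotient_div_sqrt : Summable fun n : ℕ ↦ sqfreeInvTotient n / √n := by
  refine summable_of_summable_prime_add_prime_sq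
    (fun n ↦ div_nonneg (sqfreeInvTotient_nonneg n) (Real.sqrt_nonneg _)) (by simp)
    (by simp [isMultiplicative_sqfreeInvTotient.map_one]) (fun {m n} hmn ↦ ?_)
    (fun hp hk ↦ by rw [sqfreeInvTotient_prime_pow hp (by lia), zero_div]) ?_
  · rw [isMultiplicative_sqfreeInvTotient.map_mul_of_coprime hmn, Nat.cast_mul,
      Real.sqrt_mul (Nat.cast_nonneg m), mul_div_mul_comm]
  · refine Summable.of_nonneg_of_le (fun p ↦ add_nonneg ?_ ?_) (fun p ↦ ?_)
      (summable_primes_mul_rpow_neg_three_halves 2)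
    · exact div_nonneg (sqfreeInvTotient_nonneg _) (Real.sqrt_nonneg _)
    · exact div_nonneg (sqfreeInvTotient_nonneg _) (Real.sqrt_nonneg _)
    have hp2 : (2 : ℝ) ≤ (p : ℕ) := by exact_mod_cast p.prop.two_le
    rw [sqfreeInvTotient_prime p.prop, sqfreeInvTotient_prime_pow p.prop le_rfl, zero_div, add_zero,
      Real.sqrt_eq_rpow, div_div, show (-(3 / 2) : ℝ) = -1 + -(1 / 2) by norm_num,
      Real.rpow_add (by linarith), Real.rpow_neg (by linarith), Real.rpow_neg (by linarith),
      Real.rpow_one, ← mul_inv, ← div_eq_mul_inv,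
      div_le_div_iff₀ (mul_pos (by linarith) (by positivity)) (by positivity), ← mul_assoc]
    have : 0 ≤ (((p : ℕ) : ℝ) - 2) * ((p : ℕ) : ℝ) ^ (1 / 2 : ℝ) :=
      mul_nonneg (by linarith) (by positivity)
    linarith

lemma summable_sqfreeInvTotient_div : Summable fun n : ℕ ↦ sqfreeInvTotient n / n := by
  refine summable_sqfreeInvTotient_div_sqrt.of_nonneg_of_le
    (fun n ↦ div_nonneg (sqfreeInvTotient_nonneg n) (Nat.cast_nonneg n)) fun n ↦ ?_
  rcases eq_or_ne n 0 with rfl | hn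
  · simp
  have hn1 : (1 : ℝ) ≤ n := by exact_mod_cast Nat.one_le_iff_ne_zero.mpr hn
  have := sqfreeInvTotient_nonneg n
  gcongr
  exact Real.sqrt_le_iff.mpr ⟨by linarith, by nlinarith⟩

lemma summable_abs_invTotientCorrection_mul_rpow :
    Summable fun n : ℕ ↦ |invTotientCorrection n| * (n : ℝ) ^ (1 / 4 : ℝ) := by
  refine summable_of_summable_prime_add_prime_sq (fun n ↦ by positivity) (by simp)
    (by simp [isMultiplicative_invTotientCorrection.map_one]) (fun {m n} hmn ↦ ?_)
    (fun hp hk ↦ by rw [invTotientCorrection_prime_pow hp hk, abs_zero, zero_mul]) ?_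
  · rw [isMultiplicative_invTotientCorrection.map_mul_of_coprime hmn, abs_mul, Nat.cast_mul,
      Real.mul_rpow (Nat.cast_nonneg m) (Nat.cast_nonneg n), mul_mul_mul_comm]
  · refine Summable.of_nonneg_of_le (fun p ↦ by positivity) (fun p ↦ ?_)
      (summable_primes_mul_rpow_neg_three_halves 4)
    have hp1 : (1 : ℝ) < (p : ℕ) := by exact_mod_cast p.prop.one_lt
    have hp0 : (0 : ℝ) < (p : ℕ) := by linarith
    have hexp : ((p : ℕ) : ℝ) ^ (1 / 4 : ℝ) ≤ ((p : ℕ) : ℝ) ^ (1 / 2 : ℝ) :=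
      Real.rpow_le_rpow_of_exponent_le hp1.le (by norm_num)
    have hnonneg : 0 ≤ 1 / (((p : ℕ) : ℝ) * ((p : ℕ) - 1)) :=
      one_div_nonneg.mpr (mul_nonneg hp0.le (by linarith))
    rw [invTotientCorrection_prime p.prop, invTotientCorrection_prime_sq p.prop, abs_neg,
      abs_of_nonneg hnonneg, Nat.cast_pow, ← Real.rpow_natCast_mul hp0.le]
    have hle := one_div_mul_sub_one_le p.prop
    rw [show ((2 : ℕ) : ℝ) * (1 / 4) = 1 / 2 by norm_num, ← mul_add]
    calc _ ≤ 2 / ((p : ℕ) : ℝ) ^ 2 *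
          (((p : ℕ) : ℝ) ^ (1 / 2 : ℝ) + ((p : ℕ) : ℝ) ^ (1 / 2 : ℝ)) := by
          exact mul_le_mul hle (by linarith) (by positivity) (by positivity)
      _ = 4 * ((p : ℕ) : ℝ) ^ (-(3 / 2) : ℝ) := by
          rw [show (-(3 / 2) : ℝ) = 1 / 2 - (2 : ℕ) by norm_num, Real.rpow_sub hp0,
            Real.rpow_natCast]
          ring

lemma summable_invTotientCorrection : Summable fun n : ℕ ↦ invTotientCorrection n := by
  refine Summable.of_norm_bounded summable_abs_invTotientCorrection_mul_rpow fun n ↦ ?_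
  rcases eq_or_ne n 0 with rfl | hn
  · simp
  exact le_mul_of_one_le_right (abs_nonneg _) (Real.one_le_rpow
    (by exact_mod_cast Nat.one_le_iff_ne_zero.mpr hn) (by norm_num))

lemma summable_invTotientCorrection_mul_log :
    Summable fun n : ℕ ↦ invTotientCorrection n * Real.log n := by
  refine Summable.of_norm_bounded (summable_abs_invTotientCorrection_mul_rpow.mul_right 4)
    fun n ↦ ?_
  rw [norm_mul, Real.norm_eq_abs, Real.norm_of_nonneg (Real.log_natCast_nonneg n), mul_assoc]
  gcongr
  exact (Real.log_le_rpow_div (Nat.cast_nonneg n) (by norm_num : (0 : ℝ) < 1 / 4)).trans_eq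
    (by ring)

lemma hasProd_tsum_invTotientCorrection_mul_rpow_neg {s : ℝ} (hs : 0 ≤ s) :
    HasProd (fun p : Nat.Primes ↦ 1 + invTotientCorrection p *
        (((p : ℕ) : ℝ) ^ (-s) - (((p : ℕ) : ℝ) ^ 2) ^ (-s)))
      (∑' n : ℕ, invTotientCorrection n * (n : ℝ) ^ (-s)) := by
  have hν (n : ℕ) (hn : invTotientCorrection n ≠ 0) : (1 : ℝ) ≤ n := by
    exact_mod_cast Nat.one_le_iff_ne_zero.mpr fun h ↦ hn (by rw [h, ArithmeticFunction.map_zero])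
  refine (EulerProduct.eulerProduct_hasProd (f := fun n : ℕ ↦
    invTotientCorrection n * (n : ℝ) ^ (-s))
    (by simp [isMultiplicative_invTotientCorrection.map_one]) (fun {m n} hmn ↦ ?_)
    (summable_mul_rpow_neg hν summable_invTotientCorrection hs).norm (by simp)).congr_fun
    fun p ↦ ?_
  · rw [isMultiplicative_invTotientCorrection.map_mul_of_coprime hmn, Nat.cast_mul,
      Real.mul_rpow (Nat.cast_nonneg m) (Nat.cast_nonneg n), mul_mul_mul_comm]
  · rw [tsum_eq_sum (s := range 3) fun k hk ↦ by
      rw [invTotientCorrection_prime_pow p.prop (by simpa using hk), zero_mul]]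
    simp only [sum_range_succ, range_zero, sum_empty, pow_zero, pow_one, zero_add,
      isMultiplicative_invTotientCorrection.map_one, invTotientCorrection_prime p.prop,
      invTotientCorrection_prime_sq p.prop, Nat.cast_pow, Real.one_rpow]
    ring

end CorrectionSums

section CorrectionValues

open Filter Topology

lemma summable_primes_invTotientCorrection :
    Summable fun p : Nat.Primes ↦ invTotientCorrection p :=
  summable_invTotientCorrection.comp_injective Nat.Primes.coe_nat_injective

lemma tendsto_tsum_primes_invTotientCorrection_mul_sub_div :
    Tendsto (fun s : ℝ ↦ (∑' p : Nat.Primes, invTotientCorrection p *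
        (((p : ℕ) : ℝ) ^ (-s) - (((p : ℕ) : ℝ) ^ 2) ^ (-s))) / s) (𝓝[>] 0)
      (𝓝 (∑' p : Nat.Primes, Real.log (p : ℕ) / (((p : ℕ) : ℝ) * (((p : ℕ) : ℝ) - 1)))) := by
  have hsum := summable_primes_invTotientCorrection
  have hlog : Summable fun p : Nat.Primes ↦ invTotientCorrection p * Real.log (p : ℕ) :=
    summable_invTotientCorrection_mul_log.comp_injective Nat.Primes.coe_nat_injective
  have hν (p : Nat.Primes) (_ : invTotientCorrection p ≠ 0) : (1 : ℝ) ≤ (p : ℕ) := by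
    exact_mod_cast p.prop.one_le
  have hν' (p : Nat.Primes) (hp : invTotientCorrection p ≠ 0) : (1 : ℝ) ≤ ((p : ℕ) : ℝ) ^ 2 :=
    one_le_pow₀ (hν p hp)
  have hlog' : ∀ p : Nat.Primes, invTotientCorrection p * Real.log (((p : ℕ) : ℝ) ^ 2) =
      2 * (invTotientCorrection p * Real.log (p : ℕ)) := fun p ↦ by
    rw [Real.log_pow]
    push_cast
    ring
  have hlim := (tendsto_tsum_mul_rpow_neg_sub_div hν hsum hlog).sub
    (tendsto_tsum_mul_rpow_neg_sub_div hν' hsum ((hlog.mul_left 2).congr fun p ↦ (hlog' p).symm))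
  rw [tsum_congr hlog', tsum_mul_left] at hlim
  convert hlim.congr' ?_ using 2
  · rw [neg_sub_neg, two_mul, add_sub_cancel_right]
    refine tsum_congr fun p ↦ ?_
    rw [invTotientCorrection_prime p.prop, one_div_mul_eq_div]
  · filter_upwards [self_mem_nhdsWithin] with s (hs : 0 < s)
    rw [← sub_div, sub_sub_sub_cancel_right, ← (summable_mul_rpow_neg hν hsum hs.le).tsum_sub
      (summable_mul_rpow_neg hν' hsum hs.le)]
    simp only [mul_sub]

lemma tendsto_tsum_invTotientCorrection_mul_rpow_neg_sub_one_div :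
    Tendsto (fun s : ℝ ↦ (∑' n : ℕ, invTotientCorrection n * (n : ℝ) ^ (-s) - 1) / s) (𝓝[>] 0)
      (𝓝 (∑' p : Nat.Primes, Real.log (p : ℕ) / (((p : ℕ) : ℝ) * (((p : ℕ) : ℝ) - 1)))) := by
  refine tendsto_hasProd_sub_one_div (fun s hs p ↦ ?_) (fun s hs ↦ ?_)
    (fun s hs ↦ hasProd_tsum_invTotientCorrection_mul_rpow_neg hs.le)
    tendsto_tsum_primes_invTotientCorrection_mul_sub_div
  · have hp : (1 : ℝ) ≤ (p : ℕ) := by exact_mod_cast p.prop.one_le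
    rw [invTotientCorrection_prime p.prop]
    refine mul_nonneg (one_div_nonneg.mpr (mul_nonneg (by linarith) (by linarith)))
      (sub_nonneg.mpr (Real.rpow_le_rpow_of_nonpos (by linarith) ?_ (by linarith)))
    exact le_self_pow₀ hp two_ne_zero
  · have hν (p : Nat.Primes) : (1 : ℝ) ≤ (p : ℕ) := by exact_mod_cast p.prop.one_le
    simp only [mul_sub]
    exact (summable_mul_rpow_neg (fun p _ ↦ hν p) summable_primes_invTotientCorrection hs.le).sub
      (summable_mul_rpow_neg (fun p _ ↦ one_le_pow₀ (hν p))
        summable_primes_invTotientCorrection hs.le)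

lemma tendsto_tsum_invTotientCorrection_mul_rpow_neg_sub_tsum_div :
    Tendsto (fun s : ℝ ↦ (∑' n : ℕ, invTotientCorrection n * (n : ℝ) ^ (-s) -
        ∑' n : ℕ, invTotientCorrection n) / s) (𝓝[>] 0)
      (𝓝 (-∑' n : ℕ, invTotientCorrection n * Real.log n)) :=
  tendsto_tsum_mul_rpow_neg_sub_div (fun n hn ↦ by
    exact_mod_cast Nat.one_le_iff_ne_zero.mpr fun h ↦ hn (by rw [h, ArithmeticFunction.map_zero]))
    summable_invTotientCorrection summable_invTotientCorrection_mul_log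

lemma tendsto_of_tendsto_sub_div {F : ℝ → ℝ} {a L : ℝ}
    (h : Tendsto (fun s ↦ (F s - a) / s) (𝓝[>] 0) (𝓝 L)) : Tendsto F (𝓝[>] 0) (𝓝 a) := by
  have hid : Tendsto (fun s : ℝ ↦ s) (𝓝[>] 0) (𝓝 0) := tendsto_id.mono_left nhdsWithin_le_nhds
  have hmul := (h.mul hid).add_const a
  rw [mul_zero, zero_add] at hmul
  refine hmul.congr' ?_
  filter_upwards [self_mem_nhdsWithin] with s (hs : 0 < s)
  rw [div_mul_cancel₀ _ hs.ne', sub_add_cancel]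

-- With `g` the correction, the difference quotient of `∑ₙ g(n) n^(-s)` at `s = 0` is computed from
-- the series and from its Euler product; comparing the two gives `∑ₙ g(n)` and `∑ₙ g(n) log n`.
lemma tsum_invTotientCorrection : ∑' n : ℕ, invTotientCorrection n = 1 :=
  tendsto_nhds_unique
    (tendsto_of_tendsto_sub_div tendsto_tsum_invTotientCorrection_mul_rpow_neg_sub_tsum_div)
    (tendsto_of_tendsto_sub_div tendsto_tsum_invTotientCorrection_mul_rpow_neg_sub_one_div)

lemma tsum_invTotientCorrection_mul_log :
    ∑' n : ℕ, invTotientCorrection n * Real.log n =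
      -∑' p : Nat.Primes, Real.log (p : ℕ) / (((p : ℕ) : ℝ) * (((p : ℕ) : ℝ) - 1)) := by
  have h := tendsto_tsum_invTotientCorrection_mul_rpow_neg_sub_tsum_div
  rw [tsum_invTotientCorrection] at h
  rw [tendsto_nhds_unique tendsto_tsum_invTotientCorrection_mul_rpow_neg_sub_one_div h, neg_neg]

end CorrectionValues

section SquarefreeTotientSums

lemma sum_invMulTotient_mul_abs_harmonicError_le {Y : ℝ} (hY : 0 < Y) (N : ℕ) :
    ∑ m ∈ Icc 1 N, invMulTotient m * |harmonicError (Y / (m : ℝ) ^ 2)|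
      ≤ 30 / √Y * ∑' c : ℕ, sqfreeInvTotient c / c := by
  have hterm (c : ℕ) (hc : c ∈ Icc 1 N) :
      sqfreeInvTotient.pdiv (pow 2 : ArithmeticFunction ℕ) c *
        ∑ b ∈ Icc 1 N, invPow 2 b * |harmonicError (Y / ((c * b : ℕ) : ℝ) ^ 2)|
      ≤ 30 / √Y * (sqfreeInvTotient c / c) := by
    have hc0 : (0 : ℝ) < c := by exact_mod_cast (mem_Icc.mp hc).1
    have hsum := sum_one_div_sq_mul_abs_harmonicError_le (div_pos (Real.sqrt_pos.mpr hY) hc0) N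
    simp only [div_pow, Real.sq_sqrt hY.le, div_div, ← mul_pow, ← Nat.cast_mul] at hsum
    simp only [invPow_apply two_ne_zero]
    refine (mul_le_mul_of_nonneg_left hsum (sqfreeInvTotient_pdiv_nonneg 2 c)).trans_eq ?_
    rw [pdiv_pow_apply _ two_ne_zero]
    field_simp
  calc ∑ m ∈ Icc 1 N, invMulTotient m * |harmonicError (Y / (m : ℝ) ^ 2)|
      ≤ ∑ c ∈ Icc 1 N, sqfreeInvTotient.pdiv (pow 2 : ArithmeticFunction ℕ) c *
          ∑ b ∈ Icc 1 N, invPow 2 b * |harmonicError (Y / ((c * b : ℕ) : ℝ) ^ 2)| :=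
        sum_mul_apply_mul_le (sqfreeInvTotient_pdiv_nonneg 2) (invPow_nonneg 2)
          (F := fun m ↦ |harmonicError (Y / (m : ℝ) ^ 2)|) (fun _ ↦ abs_nonneg _) N
    _ ≤ ∑ c ∈ Icc 1 N, 30 / √Y * (sqfreeInvTotient c / c) := sum_le_sum hterm
    _ ≤ 30 / √Y * ∑' c : ℕ, sqfreeInvTotient c / c := by
        rw [← mul_sum]
        gcongr
        exact summable_sqfreeInvTotient_div.sum_le_tsum _
          fun c _ ↦ div_nonneg (sqfreeInvTotient_nonneg c) (Nat.cast_nonneg c)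

/-- The constant `30 ∑ μ(c)² / (c φ(c)) ∑ μ(a)² / (√a φ(a))` in the error term for
`sumSqfreeInvTotient`. -/
noncomputable def sumSqfreeInvTotientErrorConst : ℝ :=
  30 * (∑' c : ℕ, sqfreeInvTotient c / c) * ∑' a : ℕ, sqfreeInvTotient a / √a

lemma sum_invTotientMajorant_mul_abs_harmonicError_le {R : ℝ} (hR : 0 < R) (N : ℕ) :
    ∑ n ∈ Icc 1 N, invTotientMajorant n * |harmonicError (R / n)|
      ≤ sumSqfreeInvTotientErrorConst / √R := by
  have hterm (a : ℕ) (ha : a ∈ Icc 1 N) :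
      sqfreeInvTotient.pdiv (pow 1 : ArithmeticFunction ℕ) a *
        ∑ b ∈ Icc 1 N, onSquares invMulTotient b * |harmonicError (R / (a * b : ℕ))|
      ≤ 30 / √R * (∑' c : ℕ, sqfreeInvTotient c / c) * (sqfreeInvTotient a / √a) := by
    have ha0 : (0 : ℝ) < a := by exact_mod_cast (mem_Icc.mp ha).1
    have hsum := (sum_onSquares_mul_le invMulTotient_nonneg
      (F := fun b ↦ |harmonicError (R / (a * b : ℕ))|) (fun _ ↦ abs_nonneg _) N)
    simp only [Nat.cast_mul, Nat.cast_pow, ← div_div] at hsum ⊢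
    have hsum := hsum.trans (sum_invMulTotient_mul_abs_harmonicError_le (div_pos hR ha0) N)
    refine (mul_le_mul_of_nonneg_left hsum (sqfreeInvTotient_pdiv_nonneg 1 a)).trans_eq ?_
    rw [pdiv_pow_apply _ one_ne_zero, pow_one, Real.sqrt_div hR.le, div_div_eq_mul_div]
    nth_rw 1 [← Real.mul_self_sqrt ha0.le]
    field_simp
  calc ∑ n ∈ Icc 1 N, invTotientMajorant n * |harmonicError (R / n)|
      ≤ ∑ a ∈ Icc 1 N, sqfreeInvTotient.pdiv (pow 1 : ArithmeticFunction ℕ) a *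
          ∑ b ∈ Icc 1 N, onSquares invMulTotient b * |harmonicError (R / (a * b : ℕ))| :=
        sum_mul_apply_mul_le (sqfreeInvTotient_pdiv_nonneg 1)
          (onSquares_nonneg invMulTotient_nonneg)
          (F := fun n ↦ |harmonicError (R / n)|) (fun _ ↦ abs_nonneg _) N
    _ ≤ ∑ a ∈ Icc 1 N, 30 / √R * (∑' c : ℕ, sqfreeInvTotient c / c) *
          (sqfreeInvTotient a / √a) := sum_le_sum hterm
    _ ≤ 30 / √R * (∑' c : ℕ, sqfreeInvTotient c / c) * ∑' a : ℕ, sqfreeInvTotient a / √a := by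
        rw [← mul_sum]
        refine mul_le_mul_of_nonneg_left (summable_sqfreeInvTotient_div_sqrt.sum_le_tsum _
          fun a _ ↦ div_nonneg (sqfreeInvTotient_nonneg a) (Real.sqrt_nonneg _)) ?_
        exact mul_nonneg (by positivity) (tsum_nonneg fun c ↦
          div_nonneg (sqfreeInvTotient_nonneg c) (Nat.cast_nonneg c))
    _ = sumSqfreeInvTotientErrorConst / √R := by
        rw [sumSqfreeInvTotientErrorConst]
        ring

lemma sum_range_norm_invTotientCorrection_mul_harmonicError_le {R : ℝ} (hR : 0 < R) (N : ℕ) :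
    ∑ n ∈ range N, ‖invTotientCorrection n * harmonicError (R / n)‖
      ≤ sumSqfreeInvTotientErrorConst / √R := by
  refine le_trans ?_ (sum_invTotientMajorant_mul_abs_harmonicError_le hR N)
  calc ∑ n ∈ range N, ‖invTotientCorrection n * harmonicError (R / n)‖
      ≤ ∑ n ∈ range (N + 1), ‖invTotientCorrection n * harmonicError (R / n)‖ :=
        sum_le_sum_of_subset_of_nonneg (range_mono N.le_succ) fun _ _ _ ↦ norm_nonneg _
    _ = ∑ n ∈ Icc 1 N, ‖invTotientCorrection n * harmonicError (R / n)‖ := by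
        rw [range_eq_Ico, sum_eq_sum_Ico_succ_bot N.succ_pos]
        simp [Ico_add_one_right_eq_Icc]
    _ ≤ ∑ n ∈ Icc 1 N, invTotientMajorant n * |harmonicError (R / n)| :=
        sum_le_sum fun n _ ↦ by
          rw [norm_mul, Real.norm_eq_abs, Real.norm_eq_abs]
          exact mul_le_mul_of_nonneg_right (abs_invTotientCorrection_le n) (abs_nonneg _)

lemma summable_invTotientCorrection_mul_harmonicError {R : ℝ} (hR : 0 < R) :
    Summable fun n : ℕ ↦ invTotientCorrection n * harmonicError (R / n) :=
  .of_norm (summable_of_sum_range_le (fun _ ↦ norm_nonneg _)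
    (sum_range_norm_invTotientCorrection_mul_harmonicError_le hR))

lemma abs_tsum_invTotientCorrection_mul_harmonicError_le {R : ℝ} (hR : 0 < R) :
    |∑' n : ℕ, invTotientCorrection n * harmonicError (R / n)|
      ≤ sumSqfreeInvTotientErrorConst / √R :=
  (norm_tsum_le_tsum_norm (summable_invTotientCorrection_mul_harmonicError hR).norm).trans
    (Real.tsum_le_of_sum_range_le (fun _ ↦ norm_nonneg _)
      (sum_range_norm_invTotientCorrection_mul_harmonicError_le hR))

/-- The sum `∑_{r ≤ R} μ(r)² / φ(r)`, the main term of `lamR R`. -/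
noncomputable def sumSqfreeInvTotient (R : ℝ) : ℝ := ∑ r ∈ Icc 1 ⌊R⌋₊, sqfreeInvTotient r

lemma sumSqfreeInvTotient_eq_tsum (R : ℝ) :
    sumSqfreeInvTotient R = ∑' n : ℕ, invTotientCorrection n * (harmonic ⌊R / n⌋₊ : ℝ) := by
  rw [tsum_eq_sum (s := Icc 1 ⌊R⌋₊) fun n hn ↦ ?_]
  · have hIcc (k : ℕ) : Icc 1 k = Ioc 0 k := Icc_add_one_left_eq_Ioc 0 k
    simp only [sumSqfreeInvTotient, ← invTotientCorrection_mul_invPow_one, Nat.floor_div_natCast,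
      harmonic_eq_sum_Icc, Rat.cast_sum, Rat.cast_inv, Rat.cast_natCast, hIcc]
    rw [sum_Ioc_mul_eq_sum_sum]
    simp only [invPow_apply one_ne_zero, pow_one, one_div]
  · rcases eq_or_ne n 0 with rfl | hn0
    · simp
    rw [mem_Icc, not_and, not_le] at hn
    rw [Nat.floor_div_natCast, Nat.div_eq_of_lt (hn (Nat.one_le_iff_ne_zero.mpr hn0))]
    simp

lemma abs_sumSqfreeInvTotient_sub_le {R : ℝ} (hR : 0 < R) :
    |sumSqfreeInvTotient R - (Real.log R + cGY)| ≤ sumSqfreeInvTotientErrorConst / √R := by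
  refine le_of_eq_of_le (congrArg _ ?_) (abs_tsum_invTotientCorrection_mul_harmonicError_le hR)
  have hterm (n : ℕ) : invTotientCorrection n * (harmonic ⌊R / n⌋₊ : ℝ) =
      invTotientCorrection n * harmonicError (R / n) +
        (invTotientCorrection n * (Real.log R + Real.eulerMascheroniConstant) -
          invTotientCorrection n * Real.log n) := by
    rcases eq_or_ne n 0 with rfl | hn
    · simp
    rw [harmonicError, Real.log_div hR.ne' (Nat.cast_ne_zero.mpr hn)]
    ring
  have hmain := summable_invTotientCorrection.mul_right
    (Real.log R + Real.eulerMascheroniConstant)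
  rw [sumSqfreeInvTotient_eq_tsum, tsum_congr hterm,
    (summable_invTotientCorrection_mul_harmonicError hR).tsum_add
      (hmain.sub summable_invTotientCorrection_mul_log),
    hmain.tsum_sub summable_invTotientCorrection_mul_log, tsum_mul_right,
    tsum_invTotientCorrection, tsum_invTotientCorrection_mul_log, cGY]
  ring

end SquarefreeTotientSums

/-! ### The truncated sum `λ_R` -/

section LamRPrimePow

/-- The sum `p ∑_{r ≤ R, p ∣ r} μ(r)² / φ(r)`, by which `lamR R (p ^ k)` falls short of
`sumSqfreeInvTotient R`. -/
noncomputable def lamRDefect (R : ℝ) (p : ℕ) : ℝ :=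
  p * ∑ r ∈ Icc 1 ⌊R⌋₊ with p ∣ r, sqfreeInvTotient r

lemma sumSqfreeInvTotient_nonneg (R : ℝ) : 0 ≤ sumSqfreeInvTotient R :=
  sum_nonneg fun r _ ↦ sqfreeInvTotient_nonneg r

lemma lamRDefect_nonneg (R : ℝ) (p : ℕ) : 0 ≤ lamRDefect R p :=
  mul_nonneg p.cast_nonneg (sum_nonneg fun r _ ↦ sqfreeInvTotient_nonneg r)

lemma sum_divisors_prime_pow_mul_moebius {p k : ℕ} (hp : p.Prime) (hk : k ≠ 0) :
    ∑ d ∈ (p ^ k).divisors, (d : ℝ) * (moebius d : ℝ) = 1 - p := by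
  obtain ⟨k, rfl⟩ := Nat.exists_eq_succ_of_ne_zero hk
  rw [Nat.sum_divisors_prime_pow hp, sum_range_succ', sum_range_succ', sum_eq_zero fun i _ ↦ by
    rw [moebius_apply_prime_pow hp (by lia), if_neg (by lia), Int.cast_zero, mul_zero]]
  simp only [zero_add, pow_one, pow_zero, moebius_apply_prime hp, moebius_apply_one]
  push_cast
  ring

lemma lamR_prime_pow (R : ℝ) {p k : ℕ} (hp : p.Prime) (hk : k ≠ 0) :
    lamR R (p ^ k) = sumSqfreeInvTotient R - lamRDefect R p := by
  rw [lamR, sumSqfreeInvTotient, lamRDefect, mul_sum, sum_filter, ← sum_sub_distrib]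
  refine sum_congr rfl fun r _ ↦ ?_
  rw [← sqfreeInvTotient_apply]
  split_ifs with hpr
  · obtain ⟨j, -, hj⟩ := (Nat.dvd_prime_pow hp).mp (Nat.gcd_dvd_right r (p ^ k))
    have hj0 : j ≠ 0 := by
      rintro rfl
      exact hp.not_dvd_one (by simpa [hj] using Nat.dvd_gcd hpr (dvd_pow_self p hk))
    rw [hj, sum_divisors_prime_pow_mul_moebius hp hj0]
    ring
  · rw [(((hp.coprime_iff_not_dvd.mpr hpr).symm).pow_right k).gcd_eq_one]
    simp

lemma vonMangoldt_mul_lamR (R : ℝ) (n : ℕ) :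
    vonMangoldt n * lamR R n
      = sumSqfreeInvTotient R * vonMangoldt n - vonMangoldt n * lamRDefect R n.minFac := by
  by_cases hn : vonMangoldt n = 0
  · simp [hn]
  obtain ⟨p, k, hp, hk, rfl⟩ := (isPrimePow_nat_iff n).mp (vonMangoldt_ne_zero_iff.mp hn)
  rw [hp.pow_minFac hk.ne', lamR_prime_pow R hp hk.ne']
  ring

lemma sqfreeInvTotient_prime_mul_le {p : ℕ} (hp : p.Prime) (m : ℕ) :
    sqfreeInvTotient (p * m) ≤ 1 / ((p : ℝ) - 1) * sqfreeInvTotient m := by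
  by_cases hpm : p ∣ m
  · have hnsq : ¬ Squarefree (p * m) := fun hsq ↦
      hp.not_isUnit (hsq p (Nat.mul_dvd_mul_left p hpm))
    rw [sqfreeInvTotient_apply, moebius_eq_zero_of_not_squarefree hnsq, Int.cast_zero,
      zero_pow two_ne_zero, zero_div]
    have hp1 : (1 : ℝ) < p := by exact_mod_cast hp.one_lt
    exact mul_nonneg (one_div_nonneg.mpr (by linarith)) (sqfreeInvTotient_nonneg m)
  · rw [isMultiplicative_sqfreeInvTotient.map_mul_of_coprime (hp.coprime_iff_not_dvd.mpr hpm),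
      sqfreeInvTotient_prime hp]

lemma lamRDefect_le (R : ℝ) {p : ℕ} (hp : p.Prime) :
    lamRDefect R p ≤ 2 * sumSqfreeInvTotient (R / p) := by
  have hp2 : (2 : ℝ) ≤ p := by exact_mod_cast hp.two_le
  have hsub : {r ∈ Icc 1 ⌊R⌋₊ | p ∣ r} ⊆ (Icc 1 ⌊R / p⌋₊).image (p * ·) := by
    intro r hr
    obtain ⟨hr, m, rfl⟩ := mem_filter.mp hr
    rw [mem_Icc] at hr
    refine mem_image_of_mem _ (mem_Icc.mpr ⟨Nat.pos_of_mul_pos_left hr.1, ?_⟩)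
    rw [Nat.floor_div_natCast, Nat.le_div_iff_mul_le hp.pos, mul_comm]
    exact hr.2
  calc lamRDefect R p ≤ p * ∑ m ∈ Icc 1 ⌊R / p⌋₊, sqfreeInvTotient (p * m) := by
        rw [← sum_image (f := sqfreeInvTotient) fun x _ y _ h ↦ Nat.eq_of_mul_eq_mul_left hp.pos h]
        exact mul_le_mul_of_nonneg_left (sum_le_sum_of_subset_of_nonneg hsub fun r _ _ ↦
          sqfreeInvTotient_nonneg r) p.cast_nonneg
    _ ≤ p * (1 / ((p : ℝ) - 1) * sumSqfreeInvTotient (R / p)) := by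
        rw [sumSqfreeInvTotient, mul_sum _ _ (1 / ((p : ℝ) - 1))]
        gcongr with m
        exact sqfreeInvTotient_prime_mul_le hp m
    _ ≤ 2 * sumSqfreeInvTotient (R / p) := by
        rw [← mul_assoc, mul_one_div]
        refine mul_le_mul_of_nonneg_right ?_ (sumSqfreeInvTotient_nonneg _)
        rw [div_le_iff₀ (by linarith)]
        linarith

lemma lamRDefect_eq_zero_of_lt {R : ℝ} {p : ℕ} (h : ⌊R⌋₊ < p) : lamRDefect R p = 0 := by
  rw [lamRDefect, sum_eq_zero, mul_zero]
  intro r hr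
  rw [mem_filter, mem_Icc] at hr
  exact absurd (Nat.le_of_dvd hr.1.1 hr.2) (by lia)

/-- A constant exceeding `sumSqfreeInvTotient R - log R` for all `R ≥ 1`. -/
noncomputable def sumSqfreeInvTotientBound : ℝ := sumSqfreeInvTotientErrorConst + |cGY|

lemma sumSqfreeInvTotientErrorConst_nonneg : 0 ≤ sumSqfreeInvTotientErrorConst :=
  mul_nonneg (mul_nonneg (by norm_num) (tsum_nonneg fun c ↦
    div_nonneg (sqfreeInvTotient_nonneg c) c.cast_nonneg))
    (tsum_nonneg fun a ↦ div_nonneg (sqfreeInvTotient_nonneg a) (Real.sqrt_nonneg _))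

lemma sumSqfreeInvTotientBound_nonneg : 0 ≤ sumSqfreeInvTotientBound :=
  add_nonneg sumSqfreeInvTotientErrorConst_nonneg (abs_nonneg _)

lemma sumSqfreeInvTotient_le {R : ℝ} (hR : 1 ≤ R) :
    sumSqfreeInvTotient R ≤ Real.log R + sumSqfreeInvTotientBound := by
  have hle := (abs_le.mp (abs_sumSqfreeInvTotient_sub_le (zero_lt_one.trans_le hR))).2
  have hdiv : sumSqfreeInvTotientErrorConst / √R ≤ sumSqfreeInvTotientErrorConst :=
    div_le_self sumSqfreeInvTotientErrorConst_nonneg (Real.one_le_sqrt.mpr hR)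
  rw [sumSqfreeInvTotientBound]
  linarith [le_abs_self cGY]

lemma sumSqfreeInvTotient_le_mul_rpow {R ε : ℝ} (hR : 1 ≤ R) (hε : 0 < ε) :
    sumSqfreeInvTotient R ≤ (1 / ε + sumSqfreeInvTotientBound) * R ^ ε := by
  have hlog := Real.log_le_rpow_div (zero_le_one.trans hR) hε
  have hmul := le_mul_of_one_le_right sumSqfreeInvTotientBound_nonneg (Real.one_le_rpow hR hε.le)
  rw [add_mul, one_div_mul_eq_div]
  linarith [sumSqfreeInvTotient_le hR]

lemma lamRDefect_le_mul_sqrt_div {R : ℝ} {p : ℕ} (hp : p.Prime) (hpR : (p : ℝ) ≤ R) :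
    lamRDefect R p ≤ 2 * (2 + sumSqfreeInvTotientBound) * (√R / √p) := by
  have hp0 : (0 : ℝ) < p := by exact_mod_cast hp.pos
  have hle := sumSqfreeInvTotient_le_mul_rpow ((one_le_div hp0).mpr hpR) one_half_pos
  rw [one_div_one_div, ← Real.sqrt_eq_rpow, Real.sqrt_div (hp0.le.trans hpR)] at hle
  linarith [lamRDefect_le R hp]

end LamRPrimePow

section LamRSums

lemma sum_Icc_one_div_sqrt_le (n : ℕ) : ∑ m ∈ Icc 1 n, 1 / √(m : ℝ) ≤ 2 * √(n : ℝ) := by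
  induction n with
  | zero => simp
  | succ n ih =>
    rw [sum_Icc_succ_top (by lia)]
    have hpos : 0 < √((n + 1 : ℕ) : ℝ) := Real.sqrt_pos.mpr (by positivity)
    have hsq : √((n + 1 : ℕ) : ℝ) ^ 2 = √(n : ℝ) ^ 2 + 1 := by
      rw [Real.sq_sqrt (Nat.cast_nonneg _), Real.sq_sqrt (Nat.cast_nonneg _), Nat.cast_succ]
    have hstep : 1 / √((n + 1 : ℕ) : ℝ) ≤ 2 * (√((n + 1 : ℕ) : ℝ) - √(n : ℝ)) := by
      rw [div_le_iff₀ hpos]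
      nlinarith [sq_nonneg (√((n + 1 : ℕ) : ℝ) - √(n : ℝ))]
    linarith

lemma sum_vonMangoldt_filter_minFac_eq_le (N p : ℕ) :
    ∑ n ∈ Icc 1 N with n.minFac = p, vonMangoldt n ≤ Real.log N := by
  rcases eq_or_ne N 0 with rfl | hN
  · simp
  by_cases hp : p.Prime
  · have hsub : {n ∈ Icc 1 N | n.minFac = p ∧ vonMangoldt n ≠ 0} ⊆
        (p ^ Nat.log p N).divisors := by
      intro n hn
      obtain ⟨hnN, hmin, hΛ⟩ := mem_filter.mp hn
      obtain ⟨r, k, hr, hk, rfl⟩ := (isPrimePow_nat_iff n).mp (vonMangoldt_ne_zero_iff.mp hΛ)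
      rw [hr.pow_minFac hk.ne'] at hmin
      subst hmin
      exact Nat.mem_divisors.mpr ⟨pow_dvd_pow r (Nat.le_log_of_pow_le hr.one_lt
        (mem_Icc.mp hnN).2), pow_ne_zero _ hr.ne_zero⟩
    rw [← sum_filter_ne_zero, filter_filter]
    calc _ ≤ ∑ n ∈ (p ^ Nat.log p N).divisors, vonMangoldt n :=
          sum_le_sum_of_subset_of_nonneg hsub fun _ _ _ ↦ vonMangoldt_nonneg
      _ = Real.log (p ^ Nat.log p N : ℕ) := vonMangoldt_sum
      _ ≤ Real.log N := Real.log_le_log (by exact_mod_cast pow_pos hp.pos _)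
          (by exact_mod_cast Nat.pow_log_le_self p hN)
  · rw [sum_eq_zero fun n hn ↦ ?_]
    · exact Real.log_natCast_nonneg N
    have hn1 : n = 1 := by
      by_contra h
      exact hp ((mem_filter.mp hn).2 ▸ Nat.minFac_prime h)
    rw [hn1, vonMangoldt_apply_one]

lemma sum_vonMangoldt_div_sqrt_minFac_le (N M : ℕ) :
    ∑ n ∈ Icc 1 N with n.minFac ≤ M, vonMangoldt n / √(n.minFac : ℝ)
      ≤ 2 * √(M : ℝ) * Real.log N := by
  have hmaps (n : ℕ) (hn : n ∈ {n ∈ Icc 1 N | n.minFac ≤ M}) : n.minFac ∈ Icc 1 M :=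
    mem_Icc.mpr ⟨n.minFac_pos, (mem_filter.mp hn).2⟩
  rw [← sum_fiberwise_of_maps_to hmaps]
  calc _ ≤ ∑ p ∈ Icc 1 M, 1 / √(p : ℝ) * Real.log N := by
        refine sum_le_sum fun p _ ↦ ?_
        calc _ = ∑ n ∈ {n ∈ Icc 1 N | n.minFac ≤ M} with n.minFac = p,
              1 / √(p : ℝ) * vonMangoldt n := sum_congr rfl fun n hn ↦ by
                rw [(mem_filter.mp hn).2, one_div_mul_eq_div]
          _ ≤ ∑ n ∈ Icc 1 N with n.minFac = p, 1 / √(p : ℝ) * vonMangoldt n :=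
              sum_le_sum_of_subset_of_nonneg (filter_subset_filter _ (filter_subset _ _))
                fun n _ _ ↦ mul_nonneg (by positivity) vonMangoldt_nonneg
          _ ≤ 1 / √(p : ℝ) * Real.log N := by
              rw [← mul_sum]
              gcongr
              exact sum_vonMangoldt_filter_minFac_eq_le N p
    _ ≤ 2 * √(M : ℝ) * Real.log N := by
        rw [← sum_mul]
        exact mul_le_mul_of_nonneg_right (sum_Icc_one_div_sqrt_le M) (Real.log_natCast_nonneg N)

lemma sum_vonMangoldt_mul_lamRDefect_le {R : ℝ} (hR : 0 ≤ R) (N : ℕ) :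
    ∑ n ∈ Icc 1 N, vonMangoldt n * lamRDefect R n.minFac
      ≤ 4 * (2 + sumSqfreeInvTotientBound) * (R * Real.log N) := by
  have hK : 0 ≤ 2 * (2 + sumSqfreeInvTotientBound) * √R :=
    mul_nonneg (by linarith [sumSqfreeInvTotientBound_nonneg]) (Real.sqrt_nonneg R)
  have hterm (n : ℕ) (hn : n.minFac ≤ ⌊R⌋₊) : vonMangoldt n * lamRDefect R n.minFac ≤
      2 * (2 + sumSqfreeInvTotientBound) * √R * (vonMangoldt n / √(n.minFac : ℝ)) := by
    rcases eq_or_ne n 1 with rfl | hn1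
    · simp
    have hle := lamRDefect_le_mul_sqrt_div (Nat.minFac_prime hn1) ((Nat.le_floor_iff hR).mp hn)
    exact (mul_le_mul_of_nonneg_left hle vonMangoldt_nonneg).trans_eq (by ring)
  calc ∑ n ∈ Icc 1 N, vonMangoldt n * lamRDefect R n.minFac
      = ∑ n ∈ Icc 1 N with n.minFac ≤ ⌊R⌋₊, vonMangoldt n * lamRDefect R n.minFac := by
        refine (sum_filter_of_ne fun n _ hne ↦ ?_).symm
        contrapose! hne
        rw [lamRDefect_eq_zero_of_lt hne, mul_zero]
    _ ≤ 2 * (2 + sumSqfreeInvTotientBound) * √R *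
          ∑ n ∈ Icc 1 N with n.minFac ≤ ⌊R⌋₊, vonMangoldt n / √(n.minFac : ℝ) := by
        rw [mul_sum]
        exact sum_le_sum fun n hn ↦ hterm n (mem_filter.mp hn).2
    _ ≤ 2 * (2 + sumSqfreeInvTotientBound) * √R * (2 * √R * Real.log N) := by
        refine mul_le_mul_of_nonneg_left ((sum_vonMangoldt_div_sqrt_minFac_le N _).trans ?_) hK
        gcongr
        exact Nat.floor_le hR
    _ = 4 * (2 + sumSqfreeInvTotientBound) * (√R * √R * Real.log N) := by ring
    _ = 4 * (2 + sumSqfreeInvTotientBound) * (R * Real.log N) := by rw [Real.mul_self_sqrt hR]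

lemma sumSqfreeInvTotient_mul_sqrt_mul_log_sq_le_of_le {N R : ℝ} (hN : 2 ≤ N) (hR : 1 ≤ R)
    (hRN : R ≤ N) :
    sumSqfreeInvTotient R * (√N * Real.log N ^ 2)
      ≤ (1 + 2 * sumSqfreeInvTotientBound) * (√N * Real.log N ^ 3) := by
  have hlogN : 1 / 2 ≤ Real.log N := by
    linarith [Real.log_le_log two_pos hN, Real.log_two_gt_d9]
  have hle : sumSqfreeInvTotient R ≤ (1 + 2 * sumSqfreeInvTotientBound) * Real.log N := by
    nlinarith [sumSqfreeInvTotient_le hR, Real.log_le_log (zero_lt_one.trans_le hR) hRN,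
      sumSqfreeInvTotientBound_nonneg]
  exact (mul_le_mul_of_nonneg_right hle (by positivity)).trans_eq (by ring)

lemma sumSqfreeInvTotient_mul_sqrt_mul_log_sq_le_of_ge {N R : ℝ} (hN : 1 ≤ N) (hNR : N ≤ R) :
    sumSqfreeInvTotient R * (√N * Real.log N ^ 2)
      ≤ 4 * (4 + sumSqfreeInvTotientBound) * (R * Real.log N) := by
  have hR0 : 0 < R := by linarith
  have hlogN : 0 ≤ Real.log N := Real.log_nonneg hN
  have hlog : Real.log N ≤ 4 * R ^ (1 / 4 : ℝ) :=
    calc Real.log N ≤ Real.log R := Real.log_le_log (by linarith) hNR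
      _ ≤ R ^ (1 / 4 : ℝ) / (1 / 4) := Real.log_le_rpow_div hR0.le (by norm_num)
      _ = 4 * R ^ (1 / 4 : ℝ) := by ring
  have hsum : sumSqfreeInvTotient R ≤ (4 + sumSqfreeInvTotientBound) * R ^ (1 / 4 : ℝ) := by
    simpa using sumSqfreeInvTotient_le_mul_rpow (hN.trans hNR) (ε := 1 / 4) (by norm_num)
  have hpow : R ^ (1 / 4 : ℝ) * √R * R ^ (1 / 4 : ℝ) = R := by
    rw [Real.sqrt_eq_rpow, ← Real.rpow_add hR0, ← Real.rpow_add hR0]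
    norm_num
  have := sumSqfreeInvTotientBound_nonneg
  calc sumSqfreeInvTotient R * (√N * Real.log N ^ 2)
      = sumSqfreeInvTotient R * √N * Real.log N * Real.log N := by ring
    _ ≤ (4 + sumSqfreeInvTotientBound) * R ^ (1 / 4 : ℝ) * √R * (4 * R ^ (1 / 4 : ℝ)) *
          Real.log N := by gcongr
    _ = 4 * (4 + sumSqfreeInvTotientBound) *
          (R ^ (1 / 4 : ℝ) * √R * R ^ (1 / 4 : ℝ) * Real.log N) := by ring
    _ = 4 * (4 + sumSqfreeInvTotientBound) * (R * Real.log N) := by rw [hpow]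

lemma sumSqfreeInvTotient_mul_sqrt_mul_log_sq_le {N R : ℝ} (hN : 2 ≤ N) (hR : 1 ≤ R) :
    sumSqfreeInvTotient R * (√N * Real.log N ^ 2)
      ≤ (16 + 4 * sumSqfreeInvTotientBound) * (√N * Real.log N ^ 3 + R * Real.log N) := by
  have hK := sumSqfreeInvTotientBound_nonneg
  have hlogN : 0 ≤ Real.log N := Real.log_nonneg (by linarith)
  have hcube : 0 ≤ √N * Real.log N ^ 3 := by positivity
  have hlin : 0 ≤ R * Real.log N := mul_nonneg (by linarith) hlogN
  rcases le_total R N with hRN | hNR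
  · refine (sumSqfreeInvTotient_mul_sqrt_mul_log_sq_le_of_le hN hR hRN).trans ?_
    exact mul_le_mul (by linarith) (by linarith) hcube (by linarith)
  · refine (sumSqfreeInvTotient_mul_sqrt_mul_log_sq_le_of_ge (by linarith) hNR).trans ?_
    exact mul_le_mul (by linarith) (by linarith) hlin (by linarith)

end LamRSums

lemma exists_sumSqfreeInvTotient_mul_abs_psi_sub_le (hGRH : GRH) :
    ∃ C : ℝ, 0 < C ∧ ∀ (N R : ℝ) (q a : ℕ), 2 ≤ N → 1 ≤ q → a.Coprime q → q ≤ N → 1 ≤ R →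
      sumSqfreeInvTotient R * |psi N q a - N / q.totient|
        ≤ C * (√N * Real.log N ^ 3 + R * Real.log N) := by
  obtain ⟨B, hB, hψ⟩ := exists_abs_psi_sub_le hGRH
  have hK := sumSqfreeInvTotientBound_nonneg
  refine ⟨B * (16 + 4 * sumSqfreeInvTotientBound), by positivity, fun N R q a hN hq ha hqN hR ↦ ?_⟩
  calc sumSqfreeInvTotient R * |psi N q a - N / q.totient|
      ≤ sumSqfreeInvTotient R * (B * (√N * Real.log N ^ 2)) :=
        mul_le_mul_of_nonneg_left (hψ N q a hN hq ha hqN) (sumSqfreeInvTotient_nonneg R)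
    _ = B * (sumSqfreeInvTotient R * (√N * Real.log N ^ 2)) := by ring
    _ ≤ B * (16 + 4 * sumSqfreeInvTotientBound) * (√N * Real.log N ^ 3 + R * Real.log N) := by
        rw [mul_assoc]
        exact mul_le_mul_of_nonneg_left (sumSqfreeInvTotient_mul_sqrt_mul_log_sq_le hN hR) hB.le

lemma sum_vonMangoldt_mul_lamR_eq (N q a : ℕ) (R : ℝ) :
    ∑ n ∈ Icc 1 N with ((n : ℕ) : ZMod q) = a, vonMangoldt n * lamR R n
      = sumSqfreeInvTotient R * psi N q a -
        ∑ n ∈ Icc 1 N with ((n : ℕ) : ZMod q) = a, vonMangoldt n * lamRDefect R n.minFac := by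
  rw [psi, Nat.floor_natCast, mul_sum, ← sum_sub_distrib]
  exact sum_congr rfl fun n _ ↦ vonMangoldt_mul_lamR R n

lemma abs_sum_vonMangoldt_mul_lamR_sub_le (N q a : ℕ) {R : ℝ} (hR : 0 < R) :
    |(∑ n ∈ Icc 1 N with ((n : ℕ) : ZMod q) = a, vonMangoldt n * lamR R n)
        - N * Real.log R / q.totient - cGY * N / q.totient|
      ≤ sumSqfreeInvTotient R * |psi N q a - N / q.totient|
        + sumSqfreeInvTotientErrorConst * (N / (q.totient * √R))
        + 4 * (2 + sumSqfreeInvTotientBound) * (R * Real.log N) := by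
  set D := ∑ n ∈ Icc 1 N with ((n : ℕ) : ZMod q) = a, vonMangoldt n * lamRDefect R n.minFac with hD
  have hterm (n : ℕ) : 0 ≤ vonMangoldt n * lamRDefect R n.minFac :=
    mul_nonneg vonMangoldt_nonneg (lamRDefect_nonneg R _)
  have hD₀ : 0 ≤ D := sum_nonneg fun n _ ↦ hterm n
  have hDle : D ≤ 4 * (2 + sumSqfreeInvTotientBound) * (R * Real.log N) :=
    (sum_le_sum_of_subset_of_nonneg (filter_subset _ _) fun n _ _ ↦ hterm n).trans
      (sum_vonMangoldt_mul_lamRDefect_le hR.le N)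
  have hmain : |(N : ℝ) / q.totient * (sumSqfreeInvTotient R - (Real.log R + cGY))|
      ≤ sumSqfreeInvTotientErrorConst * (N / (q.totient * √R)) := by
    rw [abs_mul, abs_of_nonneg (by positivity)]
    refine (mul_le_mul_of_nonneg_left (abs_sumSqfreeInvTotient_sub_le hR)
      (by positivity)).trans_eq ?_
    rw [div_mul_div_comm, mul_comm, mul_div_assoc]
  calc _ = |sumSqfreeInvTotient R * (psi N q a - N / q.totient) +
          N / q.totient * (sumSqfreeInvTotient R - (Real.log R + cGY)) - D| := by
        rw [sum_vonMangoldt_mul_lamR_eq, ← hD]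
        ring_nf
    _ ≤ |sumSqfreeInvTotient R * (psi N q a - N / q.totient)| +
          |N / q.totient * (sumSqfreeInvTotient R - (Real.log R + cGY))| + |D| :=
        (abs_sub _ _).trans (by gcongr; exact abs_add_le _ _)
    _ ≤ _ := by
        rw [abs_mul, abs_of_nonneg (sumSqfreeInvTotient_nonneg R), abs_of_nonneg hD₀]
        gcongr

theorem prop1_vonMangoldt_lamR (hGRH : GRH) :
    ∃ C : ℝ, 0 < C ∧ ∀ (N q a : ℕ) (R : ℝ),
      2 ≤ N → 1 ≤ q → Nat.gcd a q = 1 → q ≤ N → 2 ≤ R →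
      |(∑ n ∈ (Finset.Icc 1 N).filter (fun n : ℕ => (n : ZMod q) = (a : ZMod q)),
          ArithmeticFunction.vonMangoldt n * lamR R n)
        - (N : ℝ) * Real.log R / (q.totient : ℝ) - cGY * N / (q.totient : ℝ)|
      ≤ C * ((N : ℝ) / ((q.totient : ℝ) * Real.sqrt R)
          + Real.sqrt N * (Real.log N) ^ 3 + R * Real.log N) := by
  obtain ⟨B, hB, hψ⟩ := exists_sumSqfreeInvTotient_mul_abs_psi_sub_le hGRH
  have hE := sumSqfreeInvTotientErrorConst_nonneg
  have hK := sumSqfreeInvTotientBound_nonneg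
  refine ⟨B + sumSqfreeInvTotientErrorConst + 4 * (2 + sumSqfreeInvTotientBound), by positivity,
    fun N q a R hN hq ha hqN hR ↦ ?_⟩
  have hpsi := hψ N R q a (by exact_mod_cast hN) hq ha (by exact_mod_cast hqN) (by linarith)
  have hX : 0 ≤ (N : ℝ) / (q.totient * √R) := by positivity
  have hY : 0 ≤ √N * Real.log N ^ 3 := by positivity
  have hZ : 0 ≤ R * Real.log N := mul_nonneg (by linarith) (Real.log_natCast_nonneg N)
  refine (abs_sum_vonMangoldt_mul_lamR_sub_le N q a (by linarith)).trans ?_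
  linarith [mul_nonneg hB.le hX, mul_nonneg hE hY, mul_nonneg hE hZ, mul_nonneg hK hX,
    mul_nonneg hK hY]
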